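/- arXiv:2406.08400 — 3 statements merged into one kernel-verified Lean document; each statement's English description precedes it below -/
import Mathlib

section
/- For every b > 1/2 there exists a constant C > 0 such that for all Schwartz functions U₁, U₂, U₃ : ℝ² → ℂ one has ‖U₁U₂U₃‖_{L²(ℝ²)} ≤ C · ∏_{i=1}^{3} ( ∫_{ℝ²} (1+|τ−ξ³|)^{2b} |Û_i(ξ,τ)|² dξ dτ )^{1/2}. -/
open MeasureTheory

/-!
Let `⟨x⟩ = 1 + |x|`. By Plancherel, the `L²` norm of `U₁ U₂ U₃` is, up to a constant, the `L²` norm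
of the triple convolution of the Fourier transforms. Writing each transform as its product with
`⟨τ - ξ³⟩^b` times `⟨τ - ξ³⟩^(-b)`, the Cauchy-Schwarz inequality under the convolution integral
reduces the estimate to a pointwise bound on the triple self-convolution of `⟨τ - ξ³⟩^(-2b)`.

Since `2b > 1`, the `τ`-integrals of that convolution collapse, and what remains is the integral
of `⟨τ - ξ₁³ - ξ₂³ - ξ₃³⟩^(-2b)` over `ξ₁ + ξ₂ + ξ₃ = ξ`. With `x = ξ - ξ₁`, `y = ξ - ξ₂` and
`P = 2ξ`, the resonance identity `ξ³ - ξ₁³ - ξ₂³ - ξ₃³ = 3 (ξ - ξ₁) (ξ - ξ₂) (ξ - ξ₃)` turns the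
phase into `τ - ξ³ + 3 x y (P - x - y)`, which is symmetric in `x`, `y` and `z = P - x - y`. One may
therefore assume that `x` is the median of the three. The phase is quadratic in `y` with leading
coefficient `-3x`, so its `y`-integral is `O(|x|^(-1/2))`. Its `y`-derivative is `3x (z - y)`, and
`|z - y| ≥ |3x - P|` for a median `x`, so the `y`-integral is also `O(|x|⁻¹ |3x - P|⁻¹)`. The
minimum of the two bounds is integrable in `x`, uniformly in `P`.
-/

namespace Airy

open scoped Convolution ENNReal FourierTransform NNReal SchwartzMap

section Decay

/-- The negative power `⟨x⟩^(-γ)` of the bracket `⟨x⟩ = 1 + |x|`, with values in `ℝ≥0∞` so that it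
can be integrated without integrability side conditions. -/
noncomputable def decay (γ x : ℝ) : ℝ≥0∞ := ENNReal.ofReal ((1 + |x|) ^ (-γ))

@[fun_prop]
lemma measurable_decay (γ : ℝ) : Measurable (decay γ) := by
  unfold decay; fun_prop

lemma decay_neg (γ x : ℝ) : decay γ (-x) = decay γ x := by
  simp only [decay, abs_neg]

lemma decay_neg_left_mul_decay (γ x : ℝ) : decay (-γ) x * decay γ x = 1 := by
  have hpos : 0 < 1 + |x| := by positivity
  rw [decay, decay, ← ENNReal.ofReal_mul (by positivity), ← Real.rpow_add hpos, neg_neg,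
    add_neg_cancel, Real.rpow_zero, ENNReal.ofReal_one]

lemma decay_le_decay_of_abs_le {γ x y : ℝ} (hγ : 0 ≤ γ) (h : |x| ≤ |y|) :
    decay γ y ≤ decay γ x :=
  ENNReal.ofReal_le_ofReal <|
    Real.rpow_le_rpow_of_nonpos (by positivity) (by linarith) (by linarith)

lemma decay_sq_le {γ : ℝ} (hγ : 1 ≤ γ) (x : ℝ) : decay γ (x ^ 2) ≤ 2 * decay 2 x := by
  have hle : (1 + x ^ 2) ^ (-γ) ≤ 2 * (1 + |x|) ^ (-2 : ℝ) :=
    calc (1 + x ^ 2) ^ (-γ) ≤ (1 + x ^ 2) ^ (-1 : ℝ) :=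
          Real.rpow_le_rpow_of_exponent_le (by linarith [sq_nonneg x]) (by linarith)
      _ ≤ 2 * (1 + |x|) ^ (-2 : ℝ) := by
          simpa using rpow_neg_one_add_norm_sq_le x two_pos
  rw [decay, decay, abs_of_nonneg (sq_nonneg x), ← ENNReal.ofReal_ofNat 2,
    ← ENNReal.ofReal_mul two_pos.le]
  exact ENNReal.ofReal_le_ofReal hle

lemma ofReal_inv_sq_le_decay_two {x : ℝ} (hx : 1 ≤ |x|) :
    ENNReal.ofReal (x ^ 2)⁻¹ ≤ 4 * decay 2 x := by
  rw [decay, ← ENNReal.ofReal_ofNat 4, ← ENNReal.ofReal_mul (by norm_num),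
    Real.rpow_neg (by positivity), Real.rpow_two, ← sq_abs x]
  refine ENNReal.ofReal_le_ofReal ?_
  rw [← div_eq_mul_inv, inv_eq_one_div, div_le_div_iff₀ (by positivity) (by positivity)]
  nlinarith

lemma one_le_decay_two {x : ℝ} (hx : |x| ≤ 1) : 1 ≤ 4 * decay 2 x := by
  have hone : decay 2 1 ≤ decay 2 x := decay_le_decay_of_abs_le two_pos.le (by simpa using hx)
  calc (1 : ℝ≥0∞) = ENNReal.ofReal (1 ^ 2)⁻¹ := by norm_num
    _ ≤ 4 * decay 2 1 := ofReal_inv_sq_le_decay_two (by simp)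
    _ ≤ 4 * decay 2 x := by gcongr

lemma lintegral_decay_lt_top {γ : ℝ} (hγ : 1 < γ) : ∫⁻ x, decay γ x < ∞ := by
  have h := integrable_one_add_norm (E := ℝ) (μ := volume) (r := γ) (by simpa using hγ)
  simpa only [decay, Real.norm_eq_abs] using h.lintegral_lt_top

lemma decay_mul_decay_le {γ : ℝ} (hγ : 0 ≤ γ) (x y : ℝ) :
    decay γ x * decay γ y ≤
      ENNReal.ofReal (2 ^ γ) * decay γ (x + y) * (decay γ x + decay γ y) := by
  wlog h : |x| ≤ |y| generalizing x y with H
  · simpa only [mul_comm (decay γ y), add_comm] using H y x (le_of_not_ge h)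
  have hy : decay γ y ≤ ENNReal.ofReal (2 ^ γ) * decay γ (x + y) := by
    have htwo : (2 : ℝ) ^ γ = 2⁻¹ ^ (-γ) := by
      rw [Real.rpow_neg (by norm_num), Real.inv_rpow (by norm_num), inv_inv]
    rw [decay, decay, ← ENNReal.ofReal_mul (by positivity), htwo,
      ← Real.mul_rpow (by norm_num) (by positivity)]
    refine ENNReal.ofReal_le_ofReal
      (Real.rpow_le_rpow_of_nonpos (by positivity) ?_ (neg_nonpos.2 hγ))
    linarith [abs_add_le x y]
  calc decay γ x * decay γ y
      ≤ (ENNReal.ofReal (2 ^ γ) * decay γ (x + y)) * decay γ x := by rw [mul_comm]; gcongr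
    _ ≤ _ := by gcongr; exact le_self_add

lemma lintegral_decay_mul_decay_le {γ : ℝ} (hγ : 0 ≤ γ) (α β : ℝ) :
    ∫⁻ s, decay γ (s - α) * decay γ (β - s) ≤
      (2 * ENNReal.ofReal (2 ^ γ) * ∫⁻ x, decay γ x) * decay γ (β - α) := by
  calc ∫⁻ s, decay γ (s - α) * decay γ (β - s)
      ≤ ∫⁻ s, ENNReal.ofReal (2 ^ γ) * decay γ (β - α) *
          (decay γ (s - α) + decay γ (β - s)) := by
        refine lintegral_mono fun s => ?_
        simpa only [sub_add_sub_cancel'] using decay_mul_decay_le hγ (s - α) (β - s)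
    _ = _ := by
        rw [lintegral_const_mul _ (by fun_prop), lintegral_add_left (by fun_prop),
          lintegral_sub_right_eq_self (decay γ) α, lintegral_sub_left_eq_self (decay γ) β]
        ring

end Decay

section Quadratic

lemma lintegral_comp_smul {E : Type*} [NormedAddCommGroup E] [NormedSpace ℝ E]
    [MeasurableSpace E] [BorelSpace E] [FiniteDimensional ℝ E] (μ : Measure E)
    [μ.IsAddHaarMeasure] (f : E → ℝ≥0∞) {c : ℝ} (hc : c ≠ 0) :
    ∫⁻ x, f (c • x) ∂μ = ENNReal.ofReal |(c ^ Module.finrank ℝ E)⁻¹| * ∫⁻ x, f x ∂μ := by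
  rw [← smul_eq_mul, ← lintegral_smul_measure, ← Measure.map_addHaar_smul μ hc]
  exact (lintegral_map_equiv f (Homeomorph.smulOfNeZero c hc).toMeasurableEquiv).symm

lemma lintegral_comp_mul_left (f : ℝ → ℝ≥0∞) {c : ℝ} (hc : c ≠ 0) :
    ∫⁻ x, f (c * x) = ENNReal.ofReal |c⁻¹| * ∫⁻ x, f x := by
  simpa using lintegral_comp_smul volume f hc

lemma lintegral_abs_two_mul_mul_comp_sq_le (f : ℝ → ℝ≥0∞) :
    ∫⁻ u, ENNReal.ofReal |2 * u| * f (u ^ 2) ≤ 2 * ∫⁻ v, f v := by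
  have halfLine {s : Set ℝ} (hs : MeasurableSet s) (hinj : s.InjOn (· ^ 2)) :
      ∫⁻ u in s, ENNReal.ofReal |2 * u| * f (u ^ 2) ≤ ∫⁻ v, f v := by
    rw [← lintegral_image_eq_lintegral_abs_deriv_mul hs
      (fun u _ => by simpa using (hasDerivAt_pow 2 u).hasDerivWithinAt) hinj]
    exact setLIntegral_le_lintegral _ _
  rw [← lintegral_add_compl _ (measurableSet_Ici (a := (0 : ℝ))), Set.compl_Ici, two_mul]
  refine add_le_add
    (halfLine measurableSet_Ici (pow_left_strictMonoOn₀ two_ne_zero).injOn)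
    (halfLine measurableSet_Iio fun u hu v hv h => ?_)
  simpa [abs_of_neg (Set.mem_Iio.1 hu), abs_of_neg (Set.mem_Iio.1 hv)] using
    (sq_eq_sq_iff_abs_eq_abs u v).1 h

lemma sq_abs_sub_sqrt_le (B u : ℝ) : (|u| - √B) ^ 2 ≤ |B - u ^ 2| := by
  rcases le_total B 0 with hB | hB
  · rw [Real.sqrt_eq_zero_of_nonpos hB, sub_zero, sq_abs, abs_sub_comm]
    exact (by linarith : u ^ 2 ≤ u ^ 2 - B).trans (le_abs_self _)
  · have hfactor : |B - u ^ 2| = |(|u| - √B)| * (|u| + √B) := by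
      rw [← abs_of_nonneg (by positivity : 0 ≤ |u| + √B), ← abs_mul, abs_sub_comm]
      congr 1
      linear_combination Real.sq_sqrt hB - sq_abs u
    rw [hfactor, ← sq_abs, sq]
    gcongr
    exact (abs_sub _ _).trans_eq (by rw [abs_abs, abs_of_nonneg (Real.sqrt_nonneg B)])

lemma lintegral_decay_quadratic_le {γ k : ℝ} (hγ : 1 ≤ γ) (hk : k ≠ 0) (B : ℝ) :
    ∫⁻ u, decay γ (k * (B - u ^ 2)) ≤ ENNReal.ofReal (√|k|)⁻¹ * (4 * ∫⁻ x, decay 2 x) := by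
  set s := √|k|
  have hs0 : 0 < s := Real.sqrt_pos.2 (abs_pos.2 hk)
  have pointwise (u : ℝ) : decay γ (k * (B - u ^ 2)) ≤
      2 * (decay 2 (s * (u - √B)) + decay 2 (s * (u + √B))) :=
    calc decay γ (k * (B - u ^ 2)) ≤ decay γ ((s * (|u| - √B)) ^ 2) := by
          refine decay_le_decay_of_abs_le (by linarith) ?_
          rw [abs_mul, abs_sq, mul_pow, Real.sq_sqrt (abs_nonneg k)]
          gcongr
          exact sq_abs_sub_sqrt_le B u
      _ ≤ 2 * decay 2 (s * (|u| - √B)) := decay_sq_le hγ _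
      _ ≤ 2 * (decay 2 (s * (u - √B)) + decay 2 (s * (u + √B))) := by
          gcongr
          rcases abs_choice u with h | h <;> rw [h]
          · exact le_self_add
          · rw [← decay_neg 2 (s * _), show -(s * (-u - √B)) = s * (u + √B) by ring]
            exact le_add_self
  calc ∫⁻ u, decay γ (k * (B - u ^ 2))
      ≤ ∫⁻ u, 2 * (decay 2 (s * (u - √B)) + decay 2 (s * (u + √B))) := lintegral_mono pointwise
    _ = _ := by
        rw [lintegral_const_mul _ (by fun_prop), lintegral_add_left (by fun_prop),
          lintegral_sub_right_eq_self (fun x => decay 2 (s * x)),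
          lintegral_add_right_eq_self (fun x => decay 2 (s * x)),
          lintegral_comp_mul_left _ hs0.ne', abs_of_pos (inv_pos.2 hs0)]
        ring

lemma setLIntegral_decay_quadratic_le {γ a k : ℝ} (ha : 0 < a) (hk : k ≠ 0) (B : ℝ) :
    ∫⁻ u in {u | a ≤ |2 * u|}, decay γ (k * (B - u ^ 2)) ≤
      ENNReal.ofReal (a * |k|)⁻¹ * (2 * ∫⁻ x, decay γ x) := by
  have pointwise : ∀ u ∈ {u : ℝ | a ≤ |2 * u|}, decay γ (k * (B - u ^ 2)) ≤
      ENNReal.ofReal a⁻¹ * (ENNReal.ofReal |2 * u| * decay γ (k * (B - u ^ 2))) := by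
    intro u hu
    rw [← mul_assoc, ← ENNReal.ofReal_mul (by positivity), inv_mul_eq_div]
    exact le_mul_of_one_le_left' (ENNReal.one_le_ofReal.2 ((one_le_div ha).2 hu))
  calc ∫⁻ u in {u | a ≤ |2 * u|}, decay γ (k * (B - u ^ 2))
      ≤ ∫⁻ u, ENNReal.ofReal a⁻¹ * (ENNReal.ofReal |2 * u| * decay γ (k * (B - u ^ 2))) :=
        (setLIntegral_mono' (measurableSet_le (by fun_prop) (by fun_prop)) pointwise).trans
          (setLIntegral_le_lintegral _ _)
    _ ≤ ENNReal.ofReal a⁻¹ * (2 * ∫⁻ v, decay γ (k * (B - v))) := by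
        rw [lintegral_const_mul _ (by fun_prop)]
        gcongr
        exact lintegral_abs_two_mul_mul_comp_sq_le fun v => decay γ (k * (B - v))
    _ = _ := by
        rw [lintegral_sub_left_eq_self (fun v => decay γ (k * v)), lintegral_comp_mul_left _ hk,
          mul_inv, ENNReal.ofReal_mul (by positivity), abs_inv]
        ring

end Quadratic

section Resonance

lemma setLIntegral_prod_eq_lintegral_slice {α β : Type*} [MeasurableSpace α] [MeasurableSpace β]
    {μ : Measure α} {ν : Measure β} [SFinite ν] {s : Set (α × β)} {f : α × β → ℝ≥0∞}
    (hs : MeasurableSet s) (hf : Measurable f) :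
    ∫⁻ q in s, f q ∂μ.prod ν = ∫⁻ x, ∫⁻ y in Prod.mk x ⁻¹' s, f (x, y) ∂ν ∂μ := by
  rw [← lintegral_indicator hs, lintegral_prod _ (hf.indicator hs).aemeasurable]
  refine lintegral_congr fun x => ?_
  rw [← lintegral_indicator (measurable_prodMk_left hs)]
  rfl

lemma lintegral_le_card_mul_setLIntegral {α ι : Type*} [MeasurableSpace α] [Fintype ι]
    {μ : Measure α} {T : ι → α → α} {f : α → ℝ≥0∞} {s : Set α}
    (hT : ∀ i, MeasurePreserving (T i) μ μ) (hf : Measurable f) (hs : MeasurableSet s)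
    (hfT : ∀ i x, f (T i x) = f x) (hcover : ∀ x, ∃ i, T i x ∈ s) :
    ∫⁻ x, f x ∂μ ≤ Fintype.card ι * ∫⁻ x in s, f x ∂μ := by
  have hunion : ⋃ i, T i ⁻¹' s = Set.univ := Set.iUnion_eq_univ_iff.2 hcover
  have hpiece (i : ι) : ∫⁻ x in T i ⁻¹' s, f x ∂μ = ∫⁻ x in s, f x ∂μ := by
    simpa only [hfT] using (hT i).setLIntegral_comp_preimage hs hf
  calc ∫⁻ x, f x ∂μ = ∫⁻ x in ⋃ i, T i ⁻¹' s, f x ∂μ := by rw [hunion, setLIntegral_univ]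
    _ ≤ ∑' i, ∫⁻ x in T i ⁻¹' s, f x ∂μ := lintegral_iUnion_le _ _
    _ = Fintype.card ι * ∫⁻ x in s, f x ∂μ := by simp [hpiece]

/-- The pairs `(x, y)` such that `x` lies between `y` and `z = P - x - y`, i.e. such that `x` is the
median of three numbers with sum `P`. -/
def medianPairs (P : ℝ) : Set (ℝ × ℝ) := {q | 0 ≤ (P - 2 * q.1 - q.2) * (q.1 - q.2)}

lemma measurableSet_medianPairs (P : ℝ) : MeasurableSet (medianPairs P) :=
  measurableSet_le measurable_const (by fun_prop)

lemma mem_medianPairs_or (P x y : ℝ) :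
    (x, y) ∈ medianPairs P ∨ (y, x) ∈ medianPairs P ∨ (P - x - y, x) ∈ medianPairs P := by
  simp only [medianPairs, Set.mem_ofPred_eq]
  by_contra! h
  obtain ⟨hx, hy, hz⟩ := h
  refine (mul_neg_of_pos_of_neg (mul_pos_of_neg_of_neg hx hy) hz).not_ge ?_
  calc 0 ≤ ((P - 2 * x - y) * (x - y) * (P - x - 2 * y)) ^ 2 := sq_nonneg _
    _ = _ := by ring

lemma abs_three_mul_sub_le_of_mem_medianPairs {P x y : ℝ} (h : (x, y) ∈ medianPairs P) :
    |3 * x - P| ≤ |P - x - 2 * y| := by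
  rw [← sq_le_sq]
  simp only [medianPairs, Set.mem_ofPred_eq] at h
  linarith [show (P - x - 2 * y) ^ 2 - (3 * x - P) ^ 2 = 4 * ((P - 2 * x - y) * (x - y)) by ring]

lemma lintegral_le_three_mul_setLIntegral_medianPairs {P : ℝ} {f : ℝ × ℝ → ℝ≥0∞}
    (hf : Measurable f) (hswap : ∀ x y, f (y, x) = f (x, y))
    (hthird : ∀ x y, f (P - x - y, x) = f (x, y)) :
    ∫⁻ q, f q ≤ 3 * ∫⁻ q in medianPairs P, f q := by
  have hrotate : MeasurePreserving (fun q : ℝ × ℝ => (P - q.1 - q.2, q.1)) :=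
    Measure.measurePreserving_swap.comp <|
      (MeasurePreserving.id volume).skew_product (g := fun x y => P - x - y) (by fun_prop)
        (.of_forall fun x => (volume.measurePreserving_sub_left (P - x)).map_eq)
  have hT (i : Fin 3) : MeasurePreserving (![id, Prod.swap,
      fun q : ℝ × ℝ => (P - q.1 - q.2, q.1)] i) volume volume := by
    fin_cases i
    exacts [.id _, Measure.measurePreserving_swap, hrotate]
  refine (lintegral_le_card_mul_setLIntegral hT hf (measurableSet_medianPairs P) ?_ ?_).trans_eq
    (by simp)
  · rintro i ⟨x, y⟩
    fin_cases i
    exacts [rfl, hswap x y, hthird x y]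
  · rintro ⟨x, y⟩
    simpa [Fin.exists_fin_succ] using mem_medianPairs_or P x y

/-- An integrable majorant in `x` of the integral of `decay γ (m + 3 x y (P - x - y))` over the `y`
with `(x, y) ∈ medianPairs P`. -/
noncomputable def sliceMajorant (P x : ℝ) : ℝ≥0∞ :=
  (Metric.ball 0 1).indicator (fun x : ℝ => ENNReal.ofReal (‖x‖ ^ (-(1 / 2) : ℝ))) x +
    4 * (decay 2 x + decay 2 (3 * x - P))

lemma measurable_sliceMajorant (P : ℝ) : Measurable (sliceMajorant P) :=
  (Measurable.indicator (by fun_prop) measurableSet_ball).add (by fun_prop)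

lemma lintegral_ball_rpow_neg_half_lt_top :
    ∫⁻ x in Metric.ball (0 : ℝ) 1, ENNReal.ofReal (‖x‖ ^ (-(1 / 2) : ℝ)) < ∞ :=
  (integrableOn_ball_of_norm_le_rpow (α := 1 / 2) (C := 1) (by simp) (by norm_num)
    (.of_forall fun x => by simp [abs_of_nonneg (Real.rpow_nonneg (abs_nonneg x) _)])
    (Measurable.aestronglyMeasurable (by fun_prop))).lintegral_lt_top

lemma lintegral_sliceMajorant_le (P : ℝ) :
    ∫⁻ x, sliceMajorant P x ≤
      (∫⁻ x in Metric.ball (0 : ℝ) 1, ENNReal.ofReal (‖x‖ ^ (-(1 / 2) : ℝ))) +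
        8 * ∫⁻ x, decay 2 x := by
  have hscaled : ∫⁻ x, decay 2 (3 * x - P) ≤ ∫⁻ x, decay 2 x := by
    calc ∫⁻ x, decay 2 (3 * x - P) = ENNReal.ofReal |3⁻¹| * ∫⁻ x, decay 2 x := by
          rw [lintegral_comp_mul_left (fun x => decay 2 (x - P)) three_ne_zero,
            lintegral_sub_right_eq_self (decay 2)]
      _ ≤ _ := mul_le_of_le_one_left' (ENNReal.ofReal_le_one.2 (by norm_num))
  unfold sliceMajorant
  rw [lintegral_add_right _ (by fun_prop), lintegral_indicator measurableSet_ball,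
    lintegral_const_mul _ (by fun_prop), lintegral_add_left (by fun_prop)]
  calc _ ≤ _ + 4 * ((∫⁻ x, decay 2 x) + ∫⁻ x, decay 2 x) := by gcongr
    _ = _ := by ring

lemma resonance_eq_completed_square {m P x : ℝ} (hx : x ≠ 0) (y : ℝ) :
    m + 3 * x * y * (P - x - y) =
      3 * x * (((P - x) / 2) ^ 2 + m / (3 * x) - (y - (P - x) / 2) ^ 2) := by
  field_simp
  ring

lemma abs_le_abs_three_mul (x : ℝ) : |x| ≤ |3 * x| := by
  rw [abs_mul, Nat.abs_ofNat]
  linarith [abs_nonneg x]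

lemma lintegral_decay_resonance_le {γ x : ℝ} (hγ : 1 ≤ γ) (hx : x ≠ 0) (m P : ℝ) :
    ∫⁻ y, decay γ (m + 3 * x * y * (P - x - y)) ≤
      ENNReal.ofReal (√|x|)⁻¹ * (4 * ∫⁻ x, decay 2 x) := by
  simp only [resonance_eq_completed_square hx]
  rw [lintegral_sub_right_eq_self fun u => decay γ (3 * x * (_ - u ^ 2))]
  refine (lintegral_decay_quadratic_le hγ (by positivity) _).trans ?_
  have := abs_le_abs_three_mul x
  gcongr

lemma setLIntegral_decay_resonance_le {γ P x : ℝ} (hx : x ≠ 0) (hgap : 3 * x - P ≠ 0) (m : ℝ) :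
    ∫⁻ y in Prod.mk x ⁻¹' medianPairs P, decay γ (m + 3 * x * y * (P - x - y)) ≤
      ENNReal.ofReal (|3 * x - P| * |x|)⁻¹ * (2 * ∫⁻ x, decay γ x) := by
  set B := ((P - x) / 2) ^ 2 + m / (3 * x)
  set far : Set ℝ := {u | |3 * x - P| ≤ |2 * u|}
  have hfar : MeasurableSet far := measurableSet_le (by fun_prop) (by fun_prop)
  have hsub : Prod.mk x ⁻¹' medianPairs P ⊆ (· - (P - x) / 2) ⁻¹' far := fun y hy => by
    have h := abs_three_mul_sub_le_of_mem_medianPairs hy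
    rwa [abs_sub_comm (P - x), show 2 * y - (P - x) = 2 * (y - (P - x) / 2) by ring] at h
  calc ∫⁻ y in Prod.mk x ⁻¹' medianPairs P, decay γ (m + 3 * x * y * (P - x - y))
      ≤ ∫⁻ y in (· - (P - x) / 2) ⁻¹' far, decay γ (3 * x * (B - (y - (P - x) / 2) ^ 2)) := by
        simp only [resonance_eq_completed_square hx]
        exact lintegral_mono_set hsub
    _ = ∫⁻ u in far, decay γ (3 * x * (B - u ^ 2)) :=
        (measurePreserving_sub_right volume _).setLIntegral_comp_preimage hfar
          (f := fun u => decay γ (3 * x * (B - u ^ 2))) (by fun_prop)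
    _ ≤ ENNReal.ofReal (|3 * x - P| * |3 * x|)⁻¹ * (2 * ∫⁻ x, decay γ x) :=
        setLIntegral_decay_quadratic_le (abs_pos.2 hgap) (by positivity) B
    _ ≤ _ := by
        have := abs_le_abs_three_mul x
        gcongr

lemma setLIntegral_decay_resonance_le_sliceMajorant {γ x : ℝ} (hγ : 1 ≤ γ) (hx : x ≠ 0)
    (m P : ℝ) :
    ∫⁻ y in Prod.mk x ⁻¹' medianPairs P, decay γ (m + 3 * x * y * (P - x - y)) ≤
      sliceMajorant P x * (4 * (∫⁻ x, decay 2 x) + 2 * ∫⁻ x, decay γ x) := by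
  have hwhole := (setLIntegral_le_lintegral (Prod.mk x ⁻¹' medianPairs P) _).trans
    (lintegral_decay_resonance_le hγ hx m P)
  rcases lt_or_ge |x| 1 with hx1 | hx1
  · refine hwhole.trans (mul_le_mul' ?_ le_self_add)
    have hball : x ∈ Metric.ball (0 : ℝ) 1 := by simpa using hx1
    rw [sliceMajorant, Set.indicator_of_mem hball, Real.sqrt_eq_rpow,
      ← Real.rpow_neg (abs_nonneg x), Real.norm_eq_abs]
    exact le_self_add
  have hdecay : 4 * (decay 2 x + decay 2 (3 * x - P)) ≤ sliceMajorant P x := le_add_self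
  rcases le_or_gt |3 * x - P| 1 with hgap | hgap
  · refine hwhole.trans (mul_le_mul' (le_trans ?_ hdecay) le_self_add)
    calc ENNReal.ofReal (√|x|)⁻¹ ≤ 1 :=
          ENNReal.ofReal_le_one.2 (inv_le_one_of_one_le₀ (Real.one_le_sqrt.2 hx1))
      _ ≤ 4 * decay 2 (3 * x - P) := one_le_decay_two hgap
      _ ≤ 4 * (decay 2 x + decay 2 (3 * x - P)) := by gcongr; exact le_add_self
  · refine (setLIntegral_decay_resonance_le hx (abs_pos.1 (one_pos.trans hgap)) m).trans
      (mul_le_mul' (le_trans ?_ hdecay) le_add_self)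
    have hyoung : (|3 * x - P| * |x|)⁻¹ ≤ (x ^ 2)⁻¹ + ((3 * x - P) ^ 2)⁻¹ := by
      rw [mul_inv, ← sq_abs x, ← sq_abs (3 * x - P), ← inv_pow, ← inv_pow]
      nlinarith [sq_nonneg (|x|⁻¹ - |3 * x - P|⁻¹), sq_nonneg (|x|⁻¹), sq_nonneg (|3 * x - P|⁻¹)]
    calc ENNReal.ofReal (|3 * x - P| * |x|)⁻¹
        ≤ ENNReal.ofReal (x ^ 2)⁻¹ + ENNReal.ofReal ((3 * x - P) ^ 2)⁻¹ :=
          (ENNReal.ofReal_le_ofReal hyoung).trans ENNReal.ofReal_add_le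
      _ ≤ 4 * decay 2 x + 4 * decay 2 (3 * x - P) :=
          add_le_add (ofReal_inv_sq_le_decay_two hx1) (ofReal_inv_sq_le_decay_two hgap.le)
      _ = _ := (mul_add _ _ _).symm

lemma exists_lintegral_decay_resonance_le {γ : ℝ} (hγ : 1 < γ) :
    ∃ C : ℝ≥0, ∀ m P : ℝ,
      ∫⁻ x, ∫⁻ y, decay γ (m + 3 * x * y * (P - x - y)) ≤ C := by
  set I := (∫⁻ x in Metric.ball (0 : ℝ) 1, ENNReal.ofReal (‖x‖ ^ (-(1 / 2) : ℝ))) +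
    8 * ∫⁻ x, decay 2 x
  set D := 4 * (∫⁻ x, decay 2 x) + 2 * ∫⁻ x, decay γ x
  have hfin : 3 * (I * D) ≠ ∞ := by
    have h2 := lintegral_decay_lt_top one_lt_two
    have := lintegral_decay_lt_top hγ
    have := lintegral_ball_rpow_neg_half_lt_top
    finiteness
  refine ⟨(3 * (I * D)).toNNReal, fun m P => ?_⟩
  rw [ENNReal.coe_toNNReal hfin, lintegral_lintegral (by fun_prop), ← Measure.volume_eq_prod]
  set f : ℝ × ℝ → ℝ≥0∞ := fun q => decay γ (m + 3 * q.1 * q.2 * (P - q.1 - q.2))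
  refine (lintegral_le_three_mul_setLIntegral_medianPairs (P := P) (by fun_prop)
    (fun x y => by congr 1; ring) (fun x y => by congr 1; ring)).trans ?_
  gcongr
  calc ∫⁻ q in medianPairs P, f q = ∫⁻ x, ∫⁻ y in Prod.mk x ⁻¹' medianPairs P, f (x, y) :=
        setLIntegral_prod_eq_lintegral_slice (measurableSet_medianPairs P) (by fun_prop)
    _ ≤ ∫⁻ x, sliceMajorant P x * D := by
        refine lintegral_mono_ae ?_
        filter_upwards [Measure.ae_ne volume 0] with x hx
        exact setLIntegral_decay_resonance_le_sliceMajorant hγ.le hx m P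
    _ ≤ I * D := by
        rw [lintegral_mul_const _ (measurable_sliceMajorant P)]
        gcongr
        exact lintegral_sliceMajorant_le P

end Resonance

section Convolution

lemma sq_lintegral_le_of_sq_le_mul {α : Type*} [MeasurableSpace α] {μ : Measure α}
    {f A B : α → ℝ≥0∞} (hA : AEMeasurable A μ) (hB : AEMeasurable B μ)
    (h : ∀ x, f x ^ 2 ≤ A x * B x) :
    (∫⁻ x, f x ∂μ) ^ 2 ≤ (∫⁻ x, A x ∂μ) * ∫⁻ x, B x ∂μ := by
  have hroot (x : α) : f x ≤ A x ^ (1 / 2 : ℝ) * B x ^ (1 / 2 : ℝ) := by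
    rw [← ENNReal.mul_rpow_of_nonneg _ _ (by norm_num), one_div,
      ENNReal.le_rpow_inv_iff two_pos, ENNReal.rpow_two]
    exact h x
  have hholder := (lintegral_mono hroot).trans <|
    ENNReal.lintegral_mul_norm_pow_le hA hB (by norm_num) (by norm_num) (add_halves 1)
  rwa [← ENNReal.mul_rpow_of_nonneg _ _ (by norm_num), one_div,
    ENNReal.le_rpow_inv_iff two_pos, ENNReal.rpow_two] at hholder

section Group

variable {G : Type*} [AddGroup G] [MeasurableSpace G] [MeasurableAdd₂ G] [MeasurableNeg G]
  {μ : Measure G}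

lemma sq_lconvolution_le {f g A B a b : G → ℝ≥0∞} (hA : Measurable A) (hB : Measurable B)
    (ha : Measurable a) (hb : Measurable b) (hf : ∀ x, f x ^ 2 ≤ A x * a x)
    (hg : ∀ x, g x ^ 2 ≤ B x * b x) (x : G) :
    (f ⋆ₗ[μ] g) x ^ 2 ≤ (A ⋆ₗ[μ] B) x * (a ⋆ₗ[μ] b) x := by
  simp only [lconvolution_def]
  refine sq_lintegral_le_of_sq_le_mul (by fun_prop) (by fun_prop) fun y => ?_
  rw [mul_pow, mul_mul_mul_comm]
  exact mul_le_mul' (hf y) (hg _)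

variable [SFinite μ] [μ.IsAddLeftInvariant]

lemma lintegral_lconvolution {f g : G → ℝ≥0∞} (hf : Measurable f) (hg : Measurable g) :
    ∫⁻ x, (f ⋆ₗ[μ] g) x ∂μ = (∫⁻ x, f x ∂μ) * ∫⁻ x, g x ∂μ := by
  simp only [lconvolution_def]
  rw [lintegral_lintegral_swap (by fun_prop), ← lintegral_mul_const _ hf]
  refine lintegral_congr fun y => ?_
  rw [lintegral_const_mul _ (by fun_prop), lintegral_add_left_eq_self g]

lemma lintegral_sq_lconvolution_lconvolution_le {a : G → ℝ≥0∞} {C : ℝ≥0∞} (ha : Measurable a)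
    (hC : ∀ x, (a ⋆ₗ[μ] (a ⋆ₗ[μ] a)) x ≤ C) {f₁ f₂ f₃ A₁ A₂ A₃ : G → ℝ≥0∞}
    (hA₁ : Measurable A₁) (hA₂ : Measurable A₂) (hA₃ : Measurable A₃)
    (hf₁ : ∀ x, f₁ x ^ 2 ≤ A₁ x * a x) (hf₂ : ∀ x, f₂ x ^ 2 ≤ A₂ x * a x)
    (hf₃ : ∀ x, f₃ x ^ 2 ≤ A₃ x * a x) :
    ∫⁻ x, (f₁ ⋆ₗ[μ] (f₂ ⋆ₗ[μ] f₃)) x ^ 2 ∂μ ≤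
      C * ((∫⁻ x, A₁ x ∂μ) * ((∫⁻ x, A₂ x ∂μ) * ∫⁻ x, A₃ x ∂μ)) := by
  have hA := measurable_lconvolution μ hA₂ hA₃
  have pointwise := sq_lconvolution_le (μ := μ) hA₁ hA ha (measurable_lconvolution μ ha ha) hf₁
    (sq_lconvolution_le hA₂ hA₃ ha ha hf₂ hf₃)
  calc ∫⁻ x, (f₁ ⋆ₗ[μ] (f₂ ⋆ₗ[μ] f₃)) x ^ 2 ∂μ
      ≤ ∫⁻ x, C * (A₁ ⋆ₗ[μ] (A₂ ⋆ₗ[μ] A₃)) x ∂μ := by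
        refine lintegral_mono fun x => (pointwise x).trans ?_
        rw [mul_comm C]
        gcongr
        exact hC x
    _ = _ := by
        rw [lintegral_const_mul _ (measurable_lconvolution μ hA₁ hA),
          lintegral_lconvolution hA₁ hA, lintegral_lconvolution hA₂ hA₃]

end Group

lemma lconvolution_comp_measurePreserving {G H : Type*} [AddGroup G] [MeasurableSpace G]
    [AddGroup H] [MeasurableSpace H] [MeasurableAdd₂ H] [MeasurableNeg H] {μ : Measure G}
    {ν : Measure H} {T : G →+ H} (hT : MeasurePreserving T μ ν) {f g : H → ℝ≥0∞}
    (hf : Measurable f) (hg : Measurable g) :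
    (f ∘ T) ⋆ₗ[μ] (g ∘ T) = (f ⋆ₗ[ν] g) ∘ T := by
  ext x
  simp only [lconvolution_def, Function.comp_apply, map_add, map_neg]
  exact hT.lintegral_comp (f := fun y => f y * g (-y + T x)) (by fun_prop)

end Convolution

section Kernel

/-- The weight `⟨τ - φ(ξ)⟩^(-γ)` on frequency space `X × ℝ ∋ (ξ, τ)` attached to the dispersion
relation `φ`: the weight of a Bourgain norm for `γ < 0`, its reciprocal for `γ > 0`. -/
noncomputable def phaseDecay {X : Type*} (γ : ℝ) (φ : X → ℝ) (p : X × ℝ) : ℝ≥0∞ :=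
  decay γ (p.2 - φ p.1)

section Phase

variable {X : Type*} [MeasurableSpace X] {γ : ℝ} {φ : X → ℝ}

@[fun_prop]
lemma measurable_phaseDecay (hφ : Measurable φ) : Measurable (phaseDecay γ φ) := by
  unfold phaseDecay; fun_prop

variable [AddGroup X] [MeasurableAdd₂ X] [MeasurableNeg X] {μ : Measure X}

lemma lconvolution_phaseDecay_le (hγ : 0 ≤ γ) (hφ : Measurable φ) (p : X × ℝ) :
    (phaseDecay γ φ ⋆ₗ[μ.prod volume] phaseDecay γ φ) p ≤
      (2 * ENNReal.ofReal (2 ^ γ) * ∫⁻ s, decay γ s) *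
        ∫⁻ y, decay γ (p.2 - φ y - φ (-y + p.1)) ∂μ := by
  simp only [lconvolution_def, phaseDecay, Prod.fst_add, Prod.snd_add, Prod.fst_neg, Prod.snd_neg]
  rw [lintegral_prod _ (by fun_prop), ← lintegral_const_mul _ (by fun_prop)]
  refine lintegral_mono fun y => ?_
  calc ∫⁻ s, decay γ (s - φ y) * decay γ (-s + p.2 - φ (-y + p.1))
      = ∫⁻ s, decay γ (s - φ y) * decay γ (p.2 - φ (-y + p.1) - s) :=
        lintegral_congr fun s => by congr 2; ring
    _ ≤ _ := lintegral_decay_mul_decay_le hγ _ _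
    _ = _ := by congr 2; ring

variable [SFinite μ]

lemma lconvolution_lconvolution_phaseDecay_le (hγ : 0 ≤ γ) (hφ : Measurable φ) (p : X × ℝ) :
    (phaseDecay γ φ ⋆ₗ[μ.prod volume] (phaseDecay γ φ ⋆ₗ[μ.prod volume] phaseDecay γ φ)) p ≤
      (2 * ENNReal.ofReal (2 ^ γ) * ∫⁻ s, decay γ s) ^ 2 *
        ∫⁻ y, ∫⁻ z, decay γ (p.2 - φ y - φ z - φ (-z + (-y + p.1))) ∂μ ∂μ := by
  set K := 2 * ENNReal.ofReal (2 ^ γ) * ∫⁻ s, decay γ s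
  calc (phaseDecay γ φ ⋆ₗ[μ.prod volume] (phaseDecay γ φ ⋆ₗ[μ.prod volume] phaseDecay γ φ)) p
      ≤ ∫⁻ q, phaseDecay γ φ q * (K * ∫⁻ z, decay γ ((-q + p).2 - φ z - φ (-z + (-q + p).1)) ∂μ)
          ∂μ.prod volume :=
        lintegral_mono fun q => mul_le_mul' le_rfl (lconvolution_phaseDecay_le hγ hφ _)
    _ = ∫⁻ y, K * ∫⁻ z, (∫⁻ s, decay γ (s - φ y) *
          decay γ (p.2 - φ z - φ (-z + (-y + p.1)) - s)) ∂μ ∂μ := by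
        simp only [phaseDecay, Prod.fst_add, Prod.snd_add, Prod.fst_neg, Prod.snd_neg]
        rw [lintegral_prod _ (by fun_prop)]
        refine lintegral_congr fun y => ?_
        rw [lintegral_lintegral_swap (by fun_prop), ← lintegral_const_mul _ (by fun_prop)]
        refine lintegral_congr fun s => ?_
        rw [lintegral_const_mul _ (by fun_prop), mul_left_comm]
        congr! 5
        ring
    _ ≤ ∫⁻ y, K * (K * ∫⁻ z, decay γ (p.2 - φ y - φ z - φ (-z + (-y + p.1))) ∂μ) ∂μ := by
        gcongr with y
        rw [← lintegral_const_mul _ (by fun_prop)]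
        gcongr with z
        refine (lintegral_decay_mul_decay_le hγ _ _).trans_eq ?_
        congr 2
        ring
    _ = _ := by
        simp only [← mul_assoc, ← sq]
        exact lintegral_const_mul _ (by fun_prop)

end Phase

lemma exists_lconvolution_phaseDecay_cube_le {γ : ℝ} (hγ : 1 < γ) :
    ∃ C : ℝ≥0, ∀ p : ℝ × ℝ,
      (phaseDecay γ (· ^ 3) ⋆ₗ (phaseDecay γ (· ^ 3) ⋆ₗ phaseDecay γ (· ^ 3))) p ≤ C := by
  obtain ⟨C, hC⟩ := exists_lintegral_decay_resonance_le hγ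
  set K := 2 * ENNReal.ofReal (2 ^ γ) * ∫⁻ s, decay γ s
  have hfin : K ^ 2 * C ≠ ∞ := by
    have := lintegral_decay_lt_top hγ
    finiteness
  refine ⟨(K ^ 2 * C).toNNReal, fun ⟨ξ, τ⟩ => ?_⟩
  rw [ENNReal.coe_toNNReal hfin]
  refine (lconvolution_lconvolution_phaseDecay_le (by linarith) (by fun_prop) (ξ, τ)).trans ?_
  gcongr
  calc ∫⁻ y, ∫⁻ z, decay γ (τ - y ^ 3 - z ^ 3 - (-z + (-y + ξ)) ^ 3)
      = ∫⁻ y, ∫⁻ z, decay γ (τ - ξ ^ 3 + 3 * y * z * (2 * ξ - y - z)) := by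
        rw [← lintegral_sub_left_eq_self _ ξ]
        refine lintegral_congr fun y => ?_
        rw [← lintegral_sub_left_eq_self _ ξ]
        refine lintegral_congr fun z => ?_
        congr 1
        ring
    _ ≤ C := hC _ _

end Kernel

section Fourier

lemma sq_eLpNorm_two {α ε : Type*} [MeasurableSpace α] [ENorm ε] (f : α → ε) (μ : Measure α) :
    eLpNorm f 2 μ ^ 2 = ∫⁻ x, ‖f x‖ₑ ^ 2 ∂μ := by
  simpa using eLpNorm_nnreal_pow_eq_lintegral (μ := μ) (f := f) (p := 2) two_ne_zero

lemma enorm_convolution_mul_le {G : Type*} [AddCommGroup G] [MeasurableSpace G] {μ : Measure G}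
    (f g : G → ℂ) (x : G) :
    ‖(f ⋆[ContinuousLinearMap.mul ℂ ℂ, μ] g) x‖ₑ ≤ ((‖f ·‖ₑ) ⋆ₗ[μ] (‖g ·‖ₑ)) x := by
  refine (enorm_integral_le_lintegral_enorm _).trans_eq (lintegral_congr fun y => ?_)
  rw [ContinuousLinearMap.mul_apply', enorm_mul, neg_add_eq_sub]

variable {E : Type*} [NormedAddCommGroup E] [InnerProductSpace ℝ E] [FiniteDimensional ℝ E]
  [MeasurableSpace E] [BorelSpace E]

lemma lintegral_enorm_fourier_sq (f : 𝓢(E, ℂ)) : ∫⁻ x, ‖𝓕 f x‖ₑ ^ 2 = ∫⁻ x, ‖f x‖ₑ ^ 2 := by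
  rw [← sq_eLpNorm_two, ← sq_eLpNorm_two]
  congr 1
  have h := SchwartzMap.norm_fourier_toL2_eq f
  rw [SchwartzMap.norm_toLp, SchwartzMap.norm_toLp] at h
  exact (ENNReal.toReal_eq_toReal_iff' ((𝓕 f).memLp 2 volume).2.ne (f.memLp 2 volume).2.ne).1 h

lemma lintegral_enorm_mul_mul_sq_le_lconvolution (f g h : 𝓢(E, ℂ)) :
    ∫⁻ x, ‖f x * g x * h x‖ₑ ^ 2 ≤
      ∫⁻ x, ((‖𝓕⁻ f ·‖ₑ) ⋆ₗ ((‖𝓕⁻ g ·‖ₑ) ⋆ₗ (‖𝓕⁻ h ·‖ₑ))) x ^ 2 := by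
  set B := ContinuousLinearMap.mul ℂ ℂ
  set Q := SchwartzMap.convolution B (𝓕⁻ f) (SchwartzMap.convolution B (𝓕⁻ g) (𝓕⁻ h))
  have hfourier (x : E) : 𝓕 Q x = f x * g x * h x := by
    simp only [Q, SchwartzMap.fourier_convolution]
    simp [B, mul_assoc]
  calc ∫⁻ x, ‖f x * g x * h x‖ₑ ^ 2 = ∫⁻ x, ‖Q x‖ₑ ^ 2 := by
        simp only [← hfourier, lintegral_enorm_fourier_sq]
    _ ≤ _ := by
        refine lintegral_mono fun x => pow_le_pow_left' ?_ 2
        rw [SchwartzMap.convolution_apply]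
        refine (enorm_convolution_mul_le _ _ x).trans (lintegral_mono fun y => ?_)
        simp only [SchwartzMap.convolution_apply]
        exact mul_le_mul' le_rfl (enorm_convolution_mul_le _ _ _)

lemma lintegral_enorm_mul_mul_sq_le {w a : E → ℝ≥0∞} {C : ℝ≥0∞} (hw : Measurable w)
    (ha : Measurable a) (hwa : ∀ x, w x * a x = 1) (hC : ∀ x, (a ⋆ₗ (a ⋆ₗ a)) x ≤ C)
    (f g h : 𝓢(E, ℂ)) :
    ∫⁻ x, ‖f x * g x * h x‖ₑ ^ 2 ≤
      C * ((∫⁻ x, w x * ‖𝓕⁻ f x‖ₑ ^ 2) *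
        ((∫⁻ x, w x * ‖𝓕⁻ g x‖ₑ ^ 2) * ∫⁻ x, w x * ‖𝓕⁻ h x‖ₑ ^ 2)) := by
  have hmeas (f : 𝓢(E, ℂ)) : Measurable fun x => w x * ‖𝓕⁻ f x‖ₑ ^ 2 :=
    hw.mul ((𝓕⁻ f).continuous.enorm.measurable.pow_const 2)
  have hsq (f : 𝓢(E, ℂ)) (x : E) : ‖𝓕⁻ f x‖ₑ ^ 2 ≤ w x * ‖𝓕⁻ f x‖ₑ ^ 2 * a x := by
    rw [mul_right_comm, hwa, one_mul]
  exact (lintegral_enorm_mul_mul_sq_le_lconvolution f g h).trans <|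
    lintegral_sq_lconvolution_lconvolution_le ha hC (hmeas f) (hmeas g) (hmeas h)
      (hsq f) (hsq g) (hsq h)

end Fourier

section WeightIntegrability

lemma integrable_mul_norm_sq_schwartz {E F : Type*} [NormedAddCommGroup E] [NormedSpace ℝ E]
    [NormedAddCommGroup F] [NormedSpace ℝ F] [MeasurableSpace E] [BorelSpace E]
    [SecondCountableTopology E] {μ : Measure E} [μ.HasTemperateGrowth] {W : E → ℝ}
    (hW : AEStronglyMeasurable W μ) {C : ℝ} {n : ℕ} (hbound : ∀ x, ‖W x‖ ≤ C * (1 + ‖x‖) ^ n)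
    (f : 𝓢(E, F)) : Integrable (fun x => W x * ‖f x‖ ^ 2) μ := by
  set S := 2 ^ n * (Finset.Iic (n, 0)).sup (fun m => SchwartzMap.seminorm ℝ m.1 m.2) f
  have hdecay (x : E) : (1 + ‖x‖) ^ n * ‖f x‖ ≤ S := by
    simpa using SchwartzMap.one_add_le_sup_seminorm_apply (𝕜 := ℝ) (m := (n, 0)) le_rfl le_rfl f x
  have hC : 0 ≤ C := by simpa using (norm_nonneg _).trans (hbound 0)
  refine (f.integrable.norm.const_mul (C * S)).mono'
    (hW.mul (f.continuous.norm.pow 2).aestronglyMeasurable) (.of_forall fun x => ?_)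
  rw [norm_mul, norm_pow, norm_norm]
  calc ‖W x‖ * ‖f x‖ ^ 2 ≤ C * (1 + ‖x‖) ^ n * ‖f x‖ ^ 2 := by gcongr; exact hbound x
    _ = C * ((1 + ‖x‖) ^ n * ‖f x‖) * ‖f x‖ := by ring
    _ ≤ C * S * ‖f x‖ := by gcongr; exact hdecay x

lemma exists_one_add_abs_sub_cube_rpow_le {a : ℝ} (ha : 0 ≤ a) :
    ∃ (C : ℝ) (n : ℕ), ∀ p : ℝ × ℝ, (1 + |p.2 - p.1 ^ 3|) ^ a ≤ C * (1 + ‖p‖) ^ n := by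
  obtain ⟨n, hn⟩ := exists_nat_ge (3 * a)
  refine ⟨2 ^ a, n, fun p => ?_⟩
  have hphase : |p.2 - p.1 ^ 3| ≤ ‖p‖ + ‖p‖ ^ 3 := by
    refine (abs_sub _ _).trans ?_
    rw [abs_pow]
    gcongr
    exacts [norm_snd_le p, norm_fst_le p]
  have hcube : 1 + |p.2 - p.1 ^ 3| ≤ 2 * (1 + ‖p‖) ^ 3 := by
    nlinarith [norm_nonneg p, pow_nonneg (norm_nonneg p) 3, sq_nonneg ‖p‖]
  calc (1 + |p.2 - p.1 ^ 3|) ^ a ≤ (2 * (1 + ‖p‖) ^ 3) ^ a := by gcongr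
    _ = 2 ^ a * (1 + ‖p‖) ^ (3 * a) := by
        rw [Real.mul_rpow (by norm_num) (by positivity), Real.rpow_mul (by positivity)]
        norm_cast
    _ ≤ 2 ^ a * (1 + ‖p‖) ^ n := by
        rw [← Real.rpow_natCast _ n]
        gcongr
        exact le_add_of_nonneg_right (norm_nonneg p)

end WeightIntegrability

section Bourgain

/-- The space-time Fourier transform `∫ exp(-i q·p) U(q) dq`, normalised without the factor `2π` of
Mathlib's Fourier transform. -/
noncomputable def angularFourier (U : 𝓢(ℝ × ℝ, ℂ)) (p : ℝ × ℝ) : ℂ :=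
  ∫ q : ℝ × ℝ, Complex.exp (-Complex.I * (q.1 * p.1 + q.2 * p.2)) * U q

/-- The function `x ↦ U(-2π x)` on the Euclidean plane; up to a constant, the dilation turns
`angularFourier` into Mathlib's inverse Fourier transform. -/
noncomputable def dilate (U : 𝓢(ℝ × ℝ, ℂ)) : 𝓢(WithLp 2 (ℝ × ℝ), ℂ) :=
  SchwartzMap.compCLMOfContinuousLinearEquiv ℂ
    ((WithLp.prodContinuousLinearEquiv 2 ℝ ℝ ℝ).trans
      (ContinuousLinearEquiv.smulLeft
        (Units.mk0 (-(2 * Real.pi)) (neg_ne_zero.2 Real.two_pi_pos.ne')))) U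

lemma dilate_toLp (U : 𝓢(ℝ × ℝ, ℂ)) (p : ℝ × ℝ) :
    dilate U (WithLp.toLp 2 p) = U (-(2 * Real.pi) • p) := rfl

lemma abs_inv_neg_two_pi_pow_finrank :
    |((-(2 * Real.pi)) ^ Module.finrank ℝ (ℝ × ℝ))⁻¹| = ((2 * Real.pi) ^ 2)⁻¹ := by
  rw [Module.finrank_prod, Module.finrank_self, neg_sq, abs_of_nonneg (by positivity)]

lemma fourierInv_dilate_toLp (U : 𝓢(ℝ × ℝ, ℂ)) (p : ℝ × ℝ) :
    𝓕⁻ (dilate U) (WithLp.toLp 2 p) = ((2 * Real.pi) ^ 2)⁻¹ • angularFourier U p := by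
  rw [SchwartzMap.fourierInv_coe, Real.fourierInv_eq',
    ← (WithLp.volume_preserving_toLp ℝ ℝ).integral_comp
      (MeasurableEquiv.toLp 2 (ℝ × ℝ)).measurableEmbedding]
  set F : ℝ × ℝ → ℂ := fun q => Complex.exp (-Complex.I * (q.1 * p.1 + q.2 * p.2)) * U q
  calc _ = ∫ q : ℝ × ℝ, F (-(2 * Real.pi) • q) := by
        refine integral_congr_ae (.of_forall fun q => ?_)
        simp only [F, dilate_toLp, smul_eq_mul]
        congr 2
        simp only [WithLp.prod_inner_apply, RCLike.inner_apply, Real.ringHom_apply,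
          Complex.ofReal_mul, Complex.ofReal_ofNat, Complex.ofReal_add, neg_smul, Prod.fst_neg,
          Prod.smul_fst, smul_eq_mul, Complex.ofReal_neg, neg_mul, Prod.snd_neg, Prod.smul_snd]
        ring
    _ = _ := by
        rw [Measure.integral_comp_smul volume F, abs_inv_neg_two_pi_pow_finrank]
        rfl

lemma lintegral_withLp_prod {E F : Type*} [NormedAddCommGroup E] [InnerProductSpace ℝ E]
    [FiniteDimensional ℝ E] [MeasurableSpace E] [BorelSpace E] [NormedAddCommGroup F]
    [InnerProductSpace ℝ F] [FiniteDimensional ℝ F] [MeasurableSpace F] [BorelSpace F]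
    (f : WithLp 2 (E × F) → ℝ≥0∞) : ∫⁻ x, f x = ∫⁻ p : E × F, f (WithLp.toLp 2 p) :=
  ((WithLp.volume_preserving_toLp E F).lintegral_comp_emb
    (MeasurableEquiv.toLp 2 (E × F)).measurableEmbedding f).symm

lemma lintegral_enorm_mul_mul_sq_eq_dilate (U₁ U₂ U₃ : 𝓢(ℝ × ℝ, ℂ)) :
    ∫⁻ p, ‖U₁ p * U₂ p * U₃ p‖ₑ ^ 2 =
      ENNReal.ofReal ((2 * Real.pi) ^ 2) *
        ∫⁻ x, ‖dilate U₁ x * dilate U₂ x * dilate U₃ x‖ₑ ^ 2 := by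
  have hc : -(2 * Real.pi) ≠ 0 := neg_ne_zero.2 Real.two_pi_pos.ne'
  simp only [lintegral_withLp_prod, dilate_toLp]
  rw [lintegral_comp_smul volume (fun p => ‖U₁ p * U₂ p * U₃ p‖ₑ ^ 2) hc,
    abs_inv_neg_two_pi_pow_finrank, ← mul_assoc, ← ENNReal.ofReal_mul (by positivity),
    mul_inv_cancel₀ (by positivity), ENNReal.ofReal_one, one_mul]

/-- The norm `‖U‖_{X^{0,b}}` of the Bourgain space of the Airy equation. -/
noncomputable def bourgainNorm (b : ℝ) (U : 𝓢(ℝ × ℝ, ℂ)) : ℝ :=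
  (∫ p : ℝ × ℝ, (1 + |p.2 - p.1 ^ 3|) ^ (2 * b) * ‖angularFourier U p‖ ^ 2) ^ ((1 : ℝ) / 2)

lemma bourgainNorm_nonneg (b : ℝ) (U : 𝓢(ℝ × ℝ, ℂ)) : 0 ≤ bourgainNorm b U :=
  Real.rpow_nonneg (integral_nonneg fun _ => by positivity) _

lemma integrable_bourgainNorm_integrand {b : ℝ} (hb : 0 ≤ b) (U : 𝓢(ℝ × ℝ, ℂ)) :
    Integrable fun p : ℝ × ℝ => (1 + |p.2 - p.1 ^ 3|) ^ (2 * b) * ‖angularFourier U p‖ ^ 2 := by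
  set Uhat : 𝓢(ℝ × ℝ, ℂ) := (2 * Real.pi) ^ 2 • SchwartzMap.compCLMOfContinuousLinearEquiv ℂ
    (WithLp.prodContinuousLinearEquiv 2 ℝ ℝ ℝ).symm (𝓕⁻ (dilate U))
  have hUhat (p : ℝ × ℝ) : Uhat p = angularFourier U p := by
    change (2 * Real.pi) ^ 2 • 𝓕⁻ (dilate U) (WithLp.toLp 2 p) = _
    rw [fourierInv_dilate_toLp, smul_inv_smul₀ (by positivity)]
  obtain ⟨C, n, hC⟩ := exists_one_add_abs_sub_cube_rpow_le (a := 2 * b) (by positivity)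
  simpa only [hUhat] using integrable_mul_norm_sq_schwartz
    (Measurable.aestronglyMeasurable (by fun_prop))
    (fun p => (Real.norm_of_nonneg (by positivity)).trans_le (hC p)) Uhat

lemma sq_ofReal_bourgainNorm {b : ℝ} (hb : 0 ≤ b) (U : 𝓢(ℝ × ℝ, ℂ)) :
    ENNReal.ofReal (bourgainNorm b U) ^ 2 =
      ∫⁻ p, phaseDecay (-(2 * b)) (· ^ 3) p * ‖angularFourier U p‖ₑ ^ 2 := by
  rw [← ENNReal.ofReal_pow (bourgainNorm_nonneg b U), bourgainNorm, ← Real.sqrt_eq_rpow,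
    Real.sq_sqrt (integral_nonneg fun _ => by positivity),
    ofReal_integral_eq_lintegral_ofReal (integrable_bourgainNorm_integrand hb U)
      (.of_forall fun _ => by positivity)]
  refine lintegral_congr fun p => ?_
  rw [phaseDecay, decay, neg_neg, ENNReal.ofReal_mul (by positivity),
    ENNReal.ofReal_pow (norm_nonneg _), ofReal_norm]

lemma lintegral_phaseDecay_mul_enorm_fourierInv_dilate_sq_le {b : ℝ} (hb : 0 ≤ b)
    (U : 𝓢(ℝ × ℝ, ℂ)) :
    ∫⁻ x : WithLp 2 (ℝ × ℝ), phaseDecay (-(2 * b)) (· ^ 3) x.ofLp * ‖𝓕⁻ (dilate U) x‖ₑ ^ 2 ≤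
      ENNReal.ofReal (bourgainNorm b U) ^ 2 := by
  have hle (p : ℝ × ℝ) : ‖𝓕⁻ (dilate U) (WithLp.toLp 2 p)‖ₑ ≤ ‖angularFourier U p‖ₑ := by
    rw [fourierInv_dilate_toLp, enorm_smul]
    refine mul_le_of_le_one_left' ?_
    rw [Real.enorm_of_nonneg (by positivity), ENNReal.ofReal_le_one]
    exact inv_le_one_of_one_le₀ (one_le_pow₀ (by linarith [Real.pi_gt_three]))
  rw [lintegral_withLp_prod, sq_ofReal_bourgainNorm hb]
  gcongr with p
  exact hle p

lemma exists_lintegral_enorm_mul_mul_sq_le {b : ℝ} (hb : 1 / 2 < b) :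
    ∃ K : ℝ≥0, ∀ U₁ U₂ U₃ : 𝓢(ℝ × ℝ, ℂ),
      ∫⁻ p, ‖U₁ p * U₂ p * U₃ p‖ₑ ^ 2 ≤
        K * ENNReal.ofReal (bourgainNorm b U₁ * bourgainNorm b U₂ * bourgainNorm b U₃) ^ 2 := by
  obtain ⟨C, hC⟩ := exists_lconvolution_phaseDecay_cube_le (γ := 2 * b) (by linarith)
  set w : ℝ × ℝ → ℝ≥0∞ := phaseDecay (-(2 * b)) (· ^ 3)
  set a : ℝ × ℝ → ℝ≥0∞ := phaseDecay (2 * b) (· ^ 3)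
  set T := (WithLp.addEquiv 2 (ℝ × ℝ)).toAddMonoidHom
  have hw : Measurable w := by fun_prop
  have ha : Measurable a := by fun_prop
  have hT : MeasurePreserving T := WithLp.volume_preserving_ofLp ℝ ℝ
  have hconv (x : WithLp 2 (ℝ × ℝ)) : ((a ∘ T) ⋆ₗ ((a ∘ T) ⋆ₗ (a ∘ T))) x ≤ C := by
    rw [lconvolution_comp_measurePreserving hT ha ha,
      lconvolution_comp_measurePreserving hT ha (measurable_lconvolution volume ha ha)]
    exact hC (T x)
  refine ⟨((2 * Real.pi) ^ 2).toNNReal * C, fun U₁ U₂ U₃ => ?_⟩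
  have hnorm := lintegral_phaseDecay_mul_enorm_fourierInv_dilate_sq_le (b := b) (by linarith)
  have hprod : ENNReal.ofReal (bourgainNorm b U₁ * bourgainNorm b U₂ * bourgainNorm b U₃) ^ 2 =
      ENNReal.ofReal (bourgainNorm b U₁) ^ 2 * (ENNReal.ofReal (bourgainNorm b U₂) ^ 2 *
        ENNReal.ofReal (bourgainNorm b U₃) ^ 2) := by
    have := bourgainNorm_nonneg b
    rw [mul_assoc, ENNReal.ofReal_mul (this U₁), ENNReal.ofReal_mul (this U₂), mul_pow, mul_pow]
  rw [lintegral_enorm_mul_mul_sq_eq_dilate, ENNReal.coe_mul, mul_assoc, hprod]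
  refine mul_le_mul' le_rfl <| (lintegral_enorm_mul_mul_sq_le (hw.comp hT.measurable)
    (ha.comp hT.measurable) (fun x => decay_neg_left_mul_decay _ _) hconv _ _ _).trans ?_
  exact mul_le_mul' le_rfl (mul_le_mul' (hnorm U₁) (mul_le_mul' (hnorm U₂) (hnorm U₃)))

end Bourgain

end Airy

/-- Trilinear estimate (Lemma 2.3 of the paper):
`‖U₁U₂U₃‖_{L²(ℝ²)} ≤ C ∏ ‖U_i‖_{X^{0,b}}` for `b > 1/2`. -/
theorem trilinear_L2 (b : ℝ) (hb : 1 / 2 < b) :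
    ∃ C > 0, ∀ U₁ U₂ U₃ : SchwartzMap (ℝ × ℝ) ℂ,
      eLpNorm (fun p : ℝ × ℝ => U₁ p * U₂ p * U₃ p) 2 volume ≤
        ENNReal.ofReal (C *
          ((∫ p : ℝ × ℝ, (1 + |p.2 - p.1 ^ 3|) ^ (2 * b) *
            ‖∫ q : ℝ × ℝ, Complex.exp (-Complex.I * (q.1 * p.1 + q.2 * p.2)) * U₁ q‖ ^ 2) ^
            ((1 : ℝ) / 2) *
          (∫ p : ℝ × ℝ, (1 + |p.2 - p.1 ^ 3|) ^ (2 * b) *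
            ‖∫ q : ℝ × ℝ, Complex.exp (-Complex.I * (q.1 * p.1 + q.2 * p.2)) * U₂ q‖ ^ 2) ^
            ((1 : ℝ) / 2) *
          (∫ p : ℝ × ℝ, (1 + |p.2 - p.1 ^ 3|) ^ (2 * b) *
            ‖∫ q : ℝ × ℝ, Complex.exp (-Complex.I * (q.1 * p.1 + q.2 * p.2)) * U₃ q‖ ^ 2) ^
            ((1 : ℝ) / 2))) := by
  obtain ⟨K, hK⟩ := Airy.exists_lintegral_enorm_mul_mul_sq_le hb
  refine ⟨√K + 1, by positivity, fun U₁ U₂ U₃ => ?_⟩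
  set N := Airy.bourgainNorm b U₁ * Airy.bourgainNorm b U₂ * Airy.bourgainNorm b U₃
  change _ ≤ ENNReal.ofReal ((√K + 1) * N)
  have hsqrt : (K : ENNReal) ≤ ENNReal.ofReal (√K + 1) ^ 2 := by
    rw [← ENNReal.ofReal_pow (by positivity), ← ENNReal.ofReal_coe_nnreal]
    exact ENNReal.ofReal_le_ofReal (by nlinarith [Real.sq_sqrt K.coe_nonneg, Real.sqrt_nonneg K])
  rw [← ENNReal.pow_le_pow_left_iff two_ne_zero, Airy.sq_eLpNorm_two,
    ENNReal.ofReal_mul (by positivity), mul_pow]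
  calc ∫⁻ p, ‖U₁ p * U₂ p * U₃ p‖ₑ ^ 2 ≤ K * ENNReal.ofReal N ^ 2 := hK U₁ U₂ U₃
    _ ≤ ENNReal.ofReal (√K + 1) ^ 2 * ENNReal.ofReal N ^ 2 := by gcongr
end

section
/- For every b > 1/2 there exists a constant C > 0 such that for all Schwartz functions U₁, U₂, U₃, U₄ : ℝ² → ℂ one has ‖U₁U₂U₃U₄‖_{L²(ℝ²)} ≤ C · ∏_{i=1}^{4} ( ∫_{ℝ²} (1+|τ−ξ³|)^{2b} |Û_i(ξ,τ)|² dξ dτ )^{1/2}. -/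
open MeasureTheory

/-!
By Plancherel, `‖U₁U₂U₃U₄‖₂` is controlled by the `L²` norm of `(F₁ ⋆ F₂) ⋆ (F₃ ⋆ F₄)`, where
`Fᵢ = |Ûᵢ|`, and Young's inequality `L^(4/3) ⋆ L^(4/3) ⊆ L²` reduces everything to a bilinear
estimate: `‖F₁ ⋆ F₂‖_(4/3)` is at most a multiple of the product of the Bourgain norms.

Let `w` be the weight `(1 + |τ - ξ³|)^(2b)` and write a frequency as `(ξ₁, τ₁) + (ξ₂, τ₂)`. For a
fixed sum, the map `ξ₁ ↦ ξ₁³ + ξ₂³` has derivative `3(ξ₁² - ξ₂²)`, so that, `1 / w` being integrable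
in the modulation, `|ξ₁² - ξ₂²| / (w₁ w₂)` has a bounded integral. Hölder's inequality against this
weight leaves the form with kernel `|ξ₁² - ξ₂²|^(-1/3)`. By Schur's test with a kernel homogeneous
of degree `-1`, this form is bounded on `L^(3/2) × L^(3/2)`, as in the Hardy-Littlewood-Sobolev
inequality; a last Hölder inequality in the modulation returns the weighted `L²` norms.
-/

namespace AiryQuadrilinear

open scoped ENNReal FourierTransform SchwartzMap

section Holder

lemma rpow_rpow_mul_rpow_rpow_eq_self (t : ℝ≥0∞) {s a b : ℝ} (ha : 0 ≤ a) (hb : 0 ≤ b)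
    (h : s * (a + b) = 1) : (t ^ s) ^ a * (t ^ s) ^ b = t := by
  rw [← ENNReal.rpow_add_of_nonneg _ _ ha hb, ← ENNReal.rpow_mul, h, ENNReal.rpow_one]

variable {α : Type*} [MeasurableSpace α] {μ : Measure α}

lemma lintegral_rpow_mul_rpow_mul_rpow_le {f g h : α → ℝ≥0∞} (hf : AEMeasurable f μ)
    (hg : AEMeasurable g μ) (hh : AEMeasurable h μ) {a b c : ℝ} (ha : 0 ≤ a) (hb : 0 ≤ b)
    (hc : 0 ≤ c) (habc : a + b + c = 1) :
    ∫⁻ x, f x ^ a * g x ^ b * h x ^ c ∂μ ≤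
      (∫⁻ x, f x ∂μ) ^ a * (∫⁻ x, g x ∂μ) ^ b * (∫⁻ x, h x ∂μ) ^ c := by
  simpa [Fin.prod_univ_three] using
    ENNReal.lintegral_prod_norm_pow_le (μ := μ) Finset.univ (f := ![f, g, h]) (p := ![a, b, c])
      (by simp [Fin.forall_fin_succ, hf, hg, hh]) (by simp [Fin.sum_univ_three, habc])
      (by simp [Fin.forall_fin_succ, ha, hb, hc])

lemma rpow_lintegral_le_lintegral_rpow_mul_weight {f k : α → ℝ≥0∞} (hf : AEMeasurable f μ)
    (hk : AEMeasurable k μ) (hk₀ : ∀ᵐ x ∂μ, k x ≠ 0) (hk_top : ∀ᵐ x ∂μ, k x ≠ ∞)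
    {r : ℝ} (hr : 1 ≤ r) :
    (∫⁻ x, f x ∂μ) ^ r ≤ (∫⁻ x, f x ^ r * k x ^ (1 - r) ∂μ) * (∫⁻ x, k x ∂μ) ^ (r - 1) := by
  have hr₀ : 0 < r := by linarith
  have hr_inv : r⁻¹ ≤ 1 := inv_le_one_of_one_le₀ hr
  have hsplit : ∀ᵐ x ∂μ, f x = (f x ^ r * k x ^ (1 - r)) ^ r⁻¹ * k x ^ (1 - r⁻¹) := by
    filter_upwards [hk₀, hk_top] with x h₀ htop
    rw [ENNReal.mul_rpow_of_nonneg _ _ (by positivity), ← ENNReal.rpow_mul, ← ENNReal.rpow_mul,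
      mul_assoc, ← ENNReal.rpow_add _ _ h₀ htop, mul_inv_cancel₀ hr₀.ne', ENNReal.rpow_one,
      show (1 - r) * r⁻¹ + (1 - r⁻¹) = 0 by field_simp; ring, ENNReal.rpow_zero, mul_one]
  calc (∫⁻ x, f x ∂μ) ^ r
      ≤ ((∫⁻ x, f x ^ r * k x ^ (1 - r) ∂μ) ^ r⁻¹ * (∫⁻ x, k x ∂μ) ^ (1 - r⁻¹)) ^ r := by
        rw [lintegral_congr_ae hsplit]
        gcongr
        exact ENNReal.lintegral_mul_norm_pow_le (by fun_prop) hk (by positivity) (by linarith)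
          (by ring)
    _ = (∫⁻ x, f x ^ r * k x ^ (1 - r) ∂μ) * (∫⁻ x, k x ∂μ) ^ (r - 1) := by
        rw [ENNReal.mul_rpow_of_nonneg _ _ hr₀.le, ← ENNReal.rpow_mul, ← ENNReal.rpow_mul,
          inv_mul_cancel₀ hr₀.ne', ENNReal.rpow_one, sub_mul, inv_mul_cancel₀ hr₀.ne', one_mul]

end Holder

section Young

variable {G : Type*} [AddCommGroup G] [MeasurableSpace G] [MeasurableAdd₂ G] [MeasurableNeg G]
  {μ : Measure G} [μ.IsAddLeftInvariant] {f g : G → ℝ≥0∞}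

lemma lconvolution_rpow_le [μ.IsNegInvariant] (hf : Measurable f) (hg : Measurable g)
    {p q r : ℝ} (hp : 1 ≤ p) (hq : 1 ≤ q) (hr : 0 < r) (hpqr : p⁻¹ + q⁻¹ = 1 + r⁻¹) (x : G) :
    (f ⋆ₗ[μ] g) x ^ r ≤
      ((fun y => f y ^ p) ⋆ₗ[μ] fun y => g y ^ q) x *
        ((∫⁻ y, f y ^ p ∂μ) ^ (r / p - 1) * (∫⁻ y, g y ^ q ∂μ) ^ (r / q - 1)) := by
  have hp₀ : 0 < p := by linarith
  have hq₀ : 0 < q := by linarith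
  have hpr : 0 ≤ p⁻¹ - r⁻¹ := by linarith [inv_le_one_of_one_le₀ hq]
  have hqr : 0 ≤ q⁻¹ - r⁻¹ := by linarith [inv_le_one_of_one_le₀ hp]
  have hr₀ : 0 ≤ r⁻¹ := by positivity
  have hsplit (y : G) : f y * g (-y + x) =
      (f y ^ p * g (-y + x) ^ q) ^ r⁻¹ * (f y ^ p) ^ (p⁻¹ - r⁻¹) *
        (g (-y + x) ^ q) ^ (q⁻¹ - r⁻¹) := by
    conv_lhs =>
      rw [← rpow_rpow_mul_rpow_rpow_eq_self (f y) hr₀ hpr (s := p)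
          (by field_simp [hp₀.ne']; ring),
        ← rpow_rpow_mul_rpow_rpow_eq_self (g (-y + x)) hr₀ hqr (s := q)
          (by field_simp [hq₀.ne']; ring)]
    rw [ENNReal.mul_rpow_of_nonneg _ _ hr₀]
    ring
  have hshift : ∫⁻ y, g (-y + x) ^ q ∂μ = ∫⁻ y, g y ^ q ∂μ := by
    simpa only [neg_add_eq_sub] using lintegral_sub_left_eq_self (fun y => g y ^ q) x
  calc (f ⋆ₗ[μ] g) x ^ r
      ≤ (((fun y => f y ^ p) ⋆ₗ[μ] fun y => g y ^ q) x ^ r⁻¹ *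
          (∫⁻ y, f y ^ p ∂μ) ^ (p⁻¹ - r⁻¹) * (∫⁻ y, g y ^ q ∂μ) ^ (q⁻¹ - r⁻¹)) ^ r := by
        rw [lconvolution_def, lintegral_congr hsplit, lconvolution_def, ← hshift]
        gcongr
        exact lintegral_rpow_mul_rpow_mul_rpow_le (by fun_prop) (by fun_prop) (by fun_prop)
          hr₀ hpr hqr (by linarith)
    _ = _ := by
        rw [ENNReal.mul_rpow_of_nonneg _ _ hr.le, ENNReal.mul_rpow_of_nonneg _ _ hr.le,
          ← ENNReal.rpow_mul, ← ENNReal.rpow_mul, ← ENNReal.rpow_mul, inv_mul_cancel₀ hr.ne',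
          ENNReal.rpow_one, mul_assoc, sub_mul, sub_mul, inv_mul_cancel₀ hr.ne']
        simp only [div_eq_inv_mul]

variable [SFinite μ]

lemma lintegral_lconvolution (hf : Measurable f) (hg : Measurable g) :
    ∫⁻ x, (f ⋆ₗ[μ] g) x ∂μ = (∫⁻ x, f x ∂μ) * ∫⁻ x, g x ∂μ := by
  simp only [lconvolution_def]
  rw [lintegral_lintegral_swap (by fun_prop), ← lintegral_mul_const _ hf]
  refine lintegral_congr fun y => ?_
  rw [lintegral_const_mul _ (by fun_prop), lintegral_add_left_eq_self g (-y)]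

lemma lintegral_lconvolution_rpow_le [μ.IsNegInvariant] (hf : Measurable f) (hg : Measurable g)
    {p q r : ℝ} (hp : 1 ≤ p) (hq : 1 ≤ q) (hr : 0 < r) (hpqr : p⁻¹ + q⁻¹ = 1 + r⁻¹) :
    ∫⁻ x, (f ⋆ₗ[μ] g) x ^ r ∂μ ≤
      (∫⁻ x, f x ^ p ∂μ) ^ (r / p) * (∫⁻ x, g x ^ q ∂μ) ^ (r / q) := by
  have hexp {s : ℝ} (hs : r⁻¹ ≤ s⁻¹) : 0 ≤ r / s - 1 := by
    rw [div_eq_mul_inv, ← mul_inv_cancel₀ hr.ne', ← mul_sub]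
    exact mul_nonneg hr.le (sub_nonneg.2 hs)
  have hrp : 0 ≤ r / p - 1 := hexp (by linarith [inv_le_one_of_one_le₀ hq])
  have hrq : 0 ≤ r / q - 1 := hexp (by linarith [inv_le_one_of_one_le₀ hp])
  have hsplit (I : ℝ≥0∞) {s : ℝ} (hs : 0 ≤ s - 1) : I ^ s = I * I ^ (s - 1) := by
    conv_lhs => rw [← add_sub_cancel 1 s, ENNReal.rpow_add_of_nonneg _ _ zero_le_one hs,
      ENNReal.rpow_one]
  refine (lintegral_mono (lconvolution_rpow_le hf hg hp hq hr hpqr)).trans_eq ?_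
  rw [lintegral_mul_const _ (by fun_prop), lintegral_lconvolution (by fun_prop) (by fun_prop),
    hsplit _ hrp, hsplit _ hrq]
  ring

end Young

section Schur

variable {α β : Type*} [MeasurableSpace α] [MeasurableSpace β] {μ : Measure α} {ν : Measure β}
  [SFinite μ] [SFinite ν]

lemma lintegral_prod_mul_rpow_le {M N : α × β → ℝ≥0∞} (hM : Measurable M) (hN : Measurable N)
    {A B : ℝ≥0∞} (hMA : ∀ᵐ x ∂μ, ∫⁻ y, M (x, y) ∂ν ≤ A) (hNB : ∀ᵐ y ∂ν, ∫⁻ x, N (x, y) ∂μ ≤ B)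
    {f : α → ℝ≥0∞} {g : β → ℝ≥0∞} (hf : Measurable f) (hg : Measurable g)
    {θ : ℝ} (hθ₀ : 0 ≤ θ) (hθ : θ ≤ 1 / 2) :
    ∫⁻ z, f z.1 * g z.2 * (M z ^ θ * N z ^ θ) ∂μ.prod ν ≤
      A ^ θ * B ^ θ * ((∫⁻ x, f x ^ (1 - θ)⁻¹ ∂μ) ^ (1 - θ) *
        (∫⁻ y, g y ^ (1 - θ)⁻¹ ∂ν) ^ (1 - θ)) := by
  set r : ℝ := (1 - θ)⁻¹
  have hr : r * (θ + (1 - 2 * θ)) = 1 := by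
    rw [show θ + (1 - 2 * θ) = 1 - θ by ring]
    exact inv_mul_cancel₀ (by linarith)
  have hθ₂ : 0 ≤ 1 - 2 * θ := by linarith
  have hpow (I : ℝ≥0∞) : I ^ θ * I ^ (1 - 2 * θ) = I ^ (1 - θ) := by
    rw [← ENNReal.rpow_add_of_nonneg _ _ hθ₀ hθ₂]; ring_nf
  have hM_int : ∫⁻ z, f z.1 ^ r * M z ∂μ.prod ν ≤ A * ∫⁻ x, f x ^ r ∂μ := by
    rw [lintegral_prod _ (by fun_prop), ← lintegral_const_mul _ (by fun_prop)]
    refine lintegral_mono_ae (hMA.mono fun x hx => ?_)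
    dsimp only
    rw [lintegral_const_mul _ (by fun_prop), mul_comm]
    gcongr
  have hN_int : ∫⁻ z, g z.2 ^ r * N z ∂μ.prod ν ≤ B * ∫⁻ y, g y ^ r ∂ν := by
    rw [lintegral_prod_symm _ (by fun_prop), ← lintegral_const_mul _ (by fun_prop)]
    refine lintegral_mono_ae (hNB.mono fun y hy => ?_)
    dsimp only
    rw [lintegral_const_mul _ (by fun_prop), mul_comm]
    gcongr
  calc ∫⁻ z, f z.1 * g z.2 * (M z ^ θ * N z ^ θ) ∂μ.prod ν
      = ∫⁻ z, (f z.1 ^ r * M z) ^ θ * (g z.2 ^ r * N z) ^ θ *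
          (f z.1 ^ r * g z.2 ^ r) ^ (1 - 2 * θ) ∂μ.prod ν := by
        refine lintegral_congr fun z => ?_
        rw [ENNReal.mul_rpow_of_nonneg _ _ hθ₀, ENNReal.mul_rpow_of_nonneg _ _ hθ₀,
          ENNReal.mul_rpow_of_nonneg _ _ hθ₂]
        conv_lhs =>
          rw [← rpow_rpow_mul_rpow_rpow_eq_self (f z.1) hθ₀ hθ₂ hr,
            ← rpow_rpow_mul_rpow_rpow_eq_self (g z.2) hθ₀ hθ₂ hr]
        ring
    _ ≤ (A * ∫⁻ x, f x ^ r ∂μ) ^ θ * (B * ∫⁻ y, g y ^ r ∂ν) ^ θ *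
          ((∫⁻ x, f x ^ r ∂μ) * ∫⁻ y, g y ^ r ∂ν) ^ (1 - 2 * θ) := by
        rw [← lintegral_prod_mul (by fun_prop) (by fun_prop)]
        refine (lintegral_rpow_mul_rpow_mul_rpow_le (by fun_prop) (by fun_prop) (by fun_prop)
          hθ₀ hθ₀ hθ₂ (by ring)).trans ?_
        gcongr
    _ = _ := by
        rw [ENNReal.mul_rpow_of_nonneg _ _ hθ₀, ENNReal.mul_rpow_of_nonneg _ _ hθ₀,
          ENNReal.mul_rpow_of_nonneg _ _ hθ₂, ← hpow, ← hpow]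
        ring

end Schur

section HomogeneousKernel

/-- A kernel homogeneous of degree `-1` on `ℝ × ℝ` with `M(x, y) M(y, x) = |x² - y²|⁻¹`. It is the
weight for which Schur's test bounds the form with kernel `|x² - y²|^(-θ)`. -/
noncomputable def schurKernel (x y : ℝ) : ℝ := |(x ^ 2 - y ^ 2) * y / x| ^ (-(1 / 2) : ℝ)

lemma schurKernel_nonneg (x y : ℝ) : 0 ≤ schurKernel x y := Real.rpow_nonneg (abs_nonneg _) _

lemma measurable_schurKernel : Measurable fun z : ℝ × ℝ => schurKernel z.1 z.2 := by
  unfold schurKernel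
  fun_prop

lemma schurKernel_mul_schurKernel_swap {x y : ℝ} (hx : x ≠ 0) (hy : y ≠ 0) :
    schurKernel x y * schurKernel y x = |x ^ 2 - y ^ 2|⁻¹ := by
  have hprod : |(x ^ 2 - y ^ 2) * y / x| * |(y ^ 2 - x ^ 2) * x / y| = |x ^ 2 - y ^ 2| ^ 2 := by
    rw [← abs_mul, show (x ^ 2 - y ^ 2) * y / x * ((y ^ 2 - x ^ 2) * x / y) =
      -(x ^ 2 - y ^ 2) ^ 2 by field_simp; ring, abs_neg, abs_pow]
  rw [schurKernel, schurKernel, ← Real.mul_rpow (abs_nonneg _) (abs_nonneg _), hprod,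
    ← Real.rpow_natCast_mul (abs_nonneg _), ← Real.rpow_neg_one]
  norm_num

lemma abs_mul_schurKernel_mul (u : ℝ) {x : ℝ} (hx : x ≠ 0) :
    |x| * schurKernel x (x * u) = schurKernel 1 u := by
  have hscale : (x ^ 2 - (x * u) ^ 2) * (x * u) / x = x ^ 2 * ((1 ^ 2 - u ^ 2) * u / 1) := by
    field_simp
  rw [schurKernel, schurKernel, hscale, abs_mul, Real.mul_rpow (abs_nonneg _) (abs_nonneg _),
    abs_pow, ← Real.rpow_natCast_mul (abs_nonneg _), ← mul_assoc]
  norm_num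
  rw [Real.rpow_neg_one, mul_inv_cancel₀ (abs_ne_zero.2 hx), one_mul]

/-- The `L¹` norm of `schurKernel 1`, the constant in Schur's test. -/
noncomputable def schurConstant : ℝ≥0∞ := ∫⁻ u, ENNReal.ofReal (schurKernel 1 u)

lemma lintegral_schurKernel {x : ℝ} (hx : x ≠ 0) :
    ∫⁻ y, ENNReal.ofReal (schurKernel x y) = schurConstant := by
  have hmeas : Measurable fun y => schurKernel x y := by unfold schurKernel; fun_prop
  conv_lhs => rw [← Real.smul_map_volume_mul_left hx]
  rw [lintegral_smul_measure, lintegral_map hmeas.ennreal_ofReal (by fun_prop), smul_eq_mul,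
    ← lintegral_const_mul _ (by fun_prop), schurConstant]
  refine lintegral_congr fun u => ?_
  rw [← ENNReal.ofReal_mul (abs_nonneg x), abs_mul_schurKernel_mul u hx]

lemma locallyIntegrable_abs_add_rpow_neg (a : ℝ) {s : ℝ} (hs : s < 1) :
    LocallyIntegrable fun u : ℝ => |u + a| ^ (-s) := by
  have h₀ : LocallyIntegrable fun u : ℝ => |u| ^ (-s) :=
    locallyIntegrable_of_norm_le_rpow (C := 1) (by simp) (by simpa)
      (.of_forall fun u => by simp [abs_of_nonneg (Real.rpow_nonneg (abs_nonneg u) _)])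
      (Measurable.aestronglyMeasurable (by fun_prop))
  rw [← map_add_right_eq_self (volume : Measure ℝ) a] at h₀
  exact (locallyIntegrable_map_homeomorph (Homeomorph.addRight a)).1 h₀

-- Partial fractions: `1 / (u - u³) = 1 / u - (1 / 2) / (u - 1) - (1 / 2) / (u + 1)`.
lemma schurKernel_one_le_add (u : ℝ) :
    schurKernel 1 u ≤ |u + 0| ^ (-(1 / 2) : ℝ) + |u + 1| ^ (-(1 / 2) : ℝ) +
      |u + -1| ^ (-(1 / 2) : ℝ) := by
  have hadd (a b : ℝ) : |a + b| ^ (1 / 2 : ℝ) ≤ |a| ^ (1 / 2 : ℝ) + |b| ^ (1 / 2 : ℝ) :=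
    (Real.rpow_le_rpow (abs_nonneg _) (abs_add_le a b) (by norm_num)).trans
      (Real.rpow_add_le_add_rpow (abs_nonneg a) (abs_nonneg b) (by norm_num) (by norm_num))
  have hhalf (a : ℝ) : |-(1 / 2) * a⁻¹| ^ (1 / 2 : ℝ) ≤ |a⁻¹| ^ (1 / 2 : ℝ) := by
    refine Real.rpow_le_rpow (abs_nonneg _) ?_ (by norm_num)
    rw [abs_mul]
    norm_num
    linarith [inv_nonneg.2 (abs_nonneg a)]
  have hinv (a : ℝ) : |a| ^ (-(1 / 2) : ℝ) = |a⁻¹| ^ (1 / 2 : ℝ) := by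
    rw [Real.rpow_neg (abs_nonneg _), abs_inv, Real.inv_rpow (abs_nonneg _)]
  rw [schurKernel, hinv, hinv, hinv, hinv]
  rcases eq_or_ne ((1 ^ 2 - u ^ 2) * u / 1) 0 with h₀ | h₀
  · rw [h₀, inv_zero, abs_zero, Real.zero_rpow (by norm_num)]
    positivity
  have hpartial : ((1 ^ 2 - u ^ 2) * u / 1)⁻¹ =
      (u + 0)⁻¹ + -(1 / 2) * (u + 1)⁻¹ + -(1 / 2) * (u + -1)⁻¹ := by
    have hu₀ : u + 0 ≠ 0 := fun h => h₀ (by linear_combination (1 - u ^ 2) * h)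
    have hu₁ : u + 1 ≠ 0 := fun h => h₀ (by linear_combination (u - u ^ 2) * h)
    have hu₂ : u + -1 ≠ 0 := fun h => h₀ (by linear_combination (-u - u ^ 2) * h)
    rw [show (1 ^ 2 - u ^ 2) * u / 1 = -((u + 0) * (u + 1) * (u + -1)) by ring]
    field_simp
    ring
  rw [hpartial]
  exact (hadd _ _).trans
    (add_le_add ((hadd _ _).trans (add_le_add_right (hhalf _) _)) (hhalf _))

lemma schurKernel_one_le_of_two_le {u : ℝ} (hu : 2 ≤ |u|) :
    schurKernel 1 u ≤ (2 / 9) ^ (-(1 / 2) : ℝ) * (1 + |u|) ^ (-(3 / 2) : ℝ) := by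
  have hcube : 2 / 9 * (1 + |u|) ^ 3 ≤ |(1 ^ 2 - u ^ 2) * u / 1| := by
    obtain ⟨w, hw₀, hw⟩ : ∃ w, 0 ≤ w ∧ |u| = w + 2 := ⟨|u| - 2, by linarith, by ring⟩
    rw [div_one, abs_mul, abs_sub_comm, ← sq_abs u, hw,
      abs_of_nonneg (show (0 : ℝ) ≤ (w + 2) ^ 2 - 1 ^ 2 by nlinarith)]
    nlinarith [pow_nonneg hw₀ 2, pow_nonneg hw₀ 3]
  have hpow : (1 + |u|) ^ (-(3 / 2) : ℝ) = ((1 + |u|) ^ 3) ^ (-(1 / 2) : ℝ) := by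
    rw [← Real.rpow_natCast_mul (by positivity)]; norm_num
  rw [hpow, ← Real.mul_rpow (by positivity) (by positivity)]
  exact Real.rpow_le_rpow_of_nonpos (by positivity) hcube (by norm_num)

lemma integrable_schurKernel_one : Integrable (schurKernel 1) := by
  have hlocal := (((locallyIntegrable_abs_add_rpow_neg 0 one_half_lt_one).add
    (locallyIntegrable_abs_add_rpow_neg 1 one_half_lt_one)).add
    (locallyIntegrable_abs_add_rpow_neg (-1) one_half_lt_one)).integrableOn_isCompact
      (isCompact_Icc (a := (-2 : ℝ)) (b := 2))
  have hdecay : Integrable fun u : ℝ => (2 / 9) ^ (-(1 / 2) : ℝ) * (1 + |u|) ^ (-(3 / 2) : ℝ) :=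
    (integrable_one_add_norm (by norm_num)).const_mul _
  have hmeas : Measurable (schurKernel 1) := by unfold schurKernel; fun_prop
  refine ((hlocal.integrable_indicator measurableSet_Icc).add hdecay).mono'
    hmeas.aestronglyMeasurable (.of_forall fun u => ?_)
  have hdecay₀ : 0 ≤ (2 / 9) ^ (-(1 / 2) : ℝ) * (1 + |u|) ^ (-(3 / 2) : ℝ) := by positivity
  rw [Real.norm_of_nonneg (schurKernel_nonneg 1 u)]
  by_cases hu : u ∈ Set.Icc (-2 : ℝ) 2
  · rw [Pi.add_apply, Set.indicator_of_mem hu]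
    exact (schurKernel_one_le_add u).trans (le_add_of_nonneg_right hdecay₀)
  · rw [Pi.add_apply, Set.indicator_of_notMem hu, zero_add]
    exact schurKernel_one_le_of_two_le (not_lt.1 fun h => hu (Set.mem_Icc.2 (abs_le.1 h.le)))

lemma ae_sq_ne_sq : ∀ᵐ z : ℝ × ℝ, z.1 ^ 2 ≠ z.2 ^ 2 := by
  have hmeas : MeasurableSet {z : ℝ × ℝ | z.1 ^ 2 ≠ z.2 ^ 2} :=
    (measurableSet_eq_fun (by fun_prop) (by fun_prop)).compl
  refine (Measure.ae_prod_iff_ae_ae hmeas).2 (.of_forall fun x => ?_)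
  filter_upwards [volume.ae_ne x, volume.ae_ne (-x)] with y hy hy'
  exact fun h => (sq_eq_sq_iff_eq_or_eq_neg.1 h.symm).elim hy hy'

lemma ae_ne_zero_fst_snd : ∀ᵐ z : ℝ × ℝ, z.1 ≠ 0 ∧ z.2 ≠ 0 :=
  (Measure.quasiMeasurePreserving_fst.ae (volume.ae_ne 0)).and
    (Measure.quasiMeasurePreserving_snd.ae (volume.ae_ne 0))

lemma schurConstant_ne_top : schurConstant ≠ ∞ := integrable_schurKernel_one.lintegral_lt_top.ne

lemma lintegral_mul_mul_abs_sq_sub_sq_rpow_neg_le {f g : ℝ → ℝ≥0∞} (hf : Measurable f)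
    (hg : Measurable g) {θ : ℝ} (hθ₀ : 0 ≤ θ) (hθ : θ ≤ 1 / 2) :
    ∫⁻ z : ℝ × ℝ, f z.1 * g z.2 * ENNReal.ofReal |z.1 ^ 2 - z.2 ^ 2| ^ (-θ) ≤
      schurConstant ^ (2 * θ) * ((∫⁻ x, f x ^ (1 - θ)⁻¹) ^ (1 - θ) *
        (∫⁻ y, g y ^ (1 - θ)⁻¹) ^ (1 - θ)) := by
  have hfactor : ∀ᵐ z : ℝ × ℝ, ENNReal.ofReal |z.1 ^ 2 - z.2 ^ 2| ^ (-θ) =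
      ENNReal.ofReal (schurKernel z.1 z.2) ^ θ * ENNReal.ofReal (schurKernel z.2 z.1) ^ θ := by
    filter_upwards [ae_sq_ne_sq, ae_ne_zero_fst_snd] with z hz hz₀
    rw [← ENNReal.mul_rpow_of_nonneg _ _ hθ₀, ← ENNReal.ofReal_mul (schurKernel_nonneg _ _),
      schurKernel_mul_schurKernel_swap hz₀.1 hz₀.2,
      ENNReal.ofReal_inv_of_pos (abs_pos.2 (sub_ne_zero.2 hz)), ENNReal.inv_rpow,
      ENNReal.rpow_neg]
  have hbound : ∀ᵐ x : ℝ, ∫⁻ y, ENNReal.ofReal (schurKernel x y) ≤ schurConstant :=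
    (volume.ae_ne 0).mono fun x hx => (lintegral_schurKernel hx).le
  rw [lintegral_congr_ae (hfactor.mono fun z hz => congrArg (f z.1 * g z.2 * ·) hz), two_mul,
    ENNReal.rpow_add_of_nonneg _ _ hθ₀ hθ₀]
  exact lintegral_prod_mul_rpow_le measurable_schurKernel.ennreal_ofReal
    (measurable_schurKernel.comp measurable_swap).ennreal_ofReal hbound hbound hf hg hθ₀ hθ

end HomogeneousKernel

section ChangeOfVariables

lemma lintegral_comp_quadratic_mul_abs_deriv_le (g : ℝ → ℝ≥0∞) (a m c : ℝ) :
    ∫⁻ x, g (a * (x - m) ^ 2 + c) * ENNReal.ofReal |2 * a * (x - m)| ≤ 2 * ∫⁻ y, g y := by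
  rcases eq_or_ne a 0 with rfl | ha
  · simp
  have hderiv (x : ℝ) : HasDerivAt (fun x => a * (x - m) ^ 2 + c) (2 * a * (x - m)) x := by
    have := ((((hasDerivAt_id x).sub_const m).pow 2).const_mul a).add_const c
    simpa [mul_comm, mul_left_comm, mul_assoc] using this
  have hbranch {s : Set ℝ} (hs : MeasurableSet s) (hsymm : ∀ x ∈ s, ∀ y ∈ s, x + y ≠ 2 * m) :
      ∫⁻ x in s, g (a * (x - m) ^ 2 + c) * ENNReal.ofReal |2 * a * (x - m)| ≤ ∫⁻ y, g y := by
    have hinj : Set.InjOn (fun x => a * (x - m) ^ 2 + c) s := by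
      intro x hx y hy hxy
      have : a * (x + y - 2 * m) * (x - y) = 0 := by linear_combination hxy
      simpa [ha, sub_ne_zero.2 (hsymm x hx y hy), sub_eq_zero] using this
    simp_rw [mul_comm (g _)]
    rw [← lintegral_image_eq_lintegral_abs_deriv_mul hs
      (fun x _ => (hderiv x).hasDerivWithinAt) hinj g]
    exact setLIntegral_le_lintegral _ _
  have hcover : (Set.Iio m ∪ Set.Ioi m : Set ℝ) =ᵐ[volume] Set.univ := by
    rw [Set.Iio_union_Ioi]
    exact ae_eq_univ.2 (by simp)
  rw [← setLIntegral_univ, ← setLIntegral_congr hcover, two_mul (∫⁻ y, g y)]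
  refine (lintegral_union_le _ _ _).trans (add_le_add ?_ ?_)
  · exact hbranch measurableSet_Iio fun x hx y hy =>
      ne_of_lt (by linarith [Set.mem_Iio.1 hx, Set.mem_Iio.1 hy])
  · exact hbranch measurableSet_Ioi fun x hx y hy =>
      ne_of_gt (by linarith [Set.mem_Ioi.1 hx, Set.mem_Ioi.1 hy])

-- With `T - x³ - (ξ - x)³ = T - ξ³/4 - 3ξ(x - ξ/2)²`, the weight is a third of the Jacobian.
lemma lintegral_comp_resonance_mul_le (g : ℝ → ℝ≥0∞) (ξ T : ℝ) :
    ∫⁻ x, g (T - x ^ 3 - (ξ - x) ^ 3) * ENNReal.ofReal |x ^ 2 - (ξ - x) ^ 2| ≤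
      2 * ∫⁻ y, g y := by
  refine le_trans (lintegral_mono fun x => ?_)
    (lintegral_comp_quadratic_mul_abs_deriv_le g (-3 * ξ) (ξ / 2) (T - ξ ^ 3 / 4))
  rw [show T - x ^ 3 - (ξ - x) ^ 3 = -3 * ξ * (x - ξ / 2) ^ 2 + (T - ξ ^ 3 / 4) by ring,
    show 2 * (-3 * ξ) * (x - ξ / 2) = -3 * (x ^ 2 - (ξ - x) ^ 2) by ring, abs_mul]
  gcongr
  norm_num
  linarith [abs_nonneg (x ^ 2 - (ξ - x) ^ 2)]

/-- The signed vertical distance `τ - ξ³` from a frequency `(ξ, τ)` to the dispersion curve of the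
Airy equation. -/
def airyModulation (p : ℝ × ℝ) : ℝ := p.2 - p.1 ^ 3

@[fun_prop]
lemma measurable_airyModulation : Measurable airyModulation := by
  unfold airyModulation
  fun_prop

lemma lintegral_airyModulation_mul_le {g h : ℝ → ℝ≥0∞} (hg : Measurable g) (hh : Measurable h)
    (p : ℝ × ℝ) :
    ∫⁻ q : ℝ × ℝ, g (airyModulation q) * h (airyModulation (p - q)) *
      ENNReal.ofReal |q.1 ^ 2 - (p - q).1 ^ 2| ≤ 2 * (∫⁻ y, g y) * ∫⁻ y, h y := by
  have hshift (x : ℝ) :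
      ∫⁻ y, g (y - x ^ 3) * h (p.2 - y - (p.1 - x) ^ 3) * ENNReal.ofReal |x ^ 2 - (p.1 - x) ^ 2| =
        ∫⁻ y, g y *
          (h (p.2 - y - x ^ 3 - (p.1 - x) ^ 3) * ENNReal.ofReal |x ^ 2 - (p.1 - x) ^ 2|) := by
    rw [← lintegral_add_right_eq_self _ (x ^ 3)]
    refine lintegral_congr fun y => ?_
    rw [mul_assoc, add_sub_cancel_right, ← sub_sub]
  calc ∫⁻ q : ℝ × ℝ, g (airyModulation q) * h (airyModulation (p - q)) *
        ENNReal.ofReal |q.1 ^ 2 - (p - q).1 ^ 2|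
      = ∫⁻ y, ∫⁻ x, g y *
          (h (p.2 - y - x ^ 3 - (p.1 - x) ^ 3) * ENNReal.ofReal |x ^ 2 - (p.1 - x) ^ 2|) := by
        simp only [airyModulation, Prod.fst_sub, Prod.snd_sub]
        rw [Measure.volume_eq_prod, lintegral_prod _ (by fun_prop), lintegral_congr hshift,
          lintegral_lintegral_swap (by fun_prop)]
    _ ≤ ∫⁻ y, g y * (2 * ∫⁻ s, h s) := by
        refine lintegral_mono fun y => ?_
        dsimp only
        rw [lintegral_const_mul _ (by fun_prop)]
        gcongr
        exact lintegral_comp_resonance_mul_le h p.1 (p.2 - y)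
    _ = 2 * (∫⁻ y, g y) * ∫⁻ y, h y := by rw [lintegral_mul_const _ hg]; ring

end ChangeOfVariables

section Tonelli

lemma lintegral_lintegral_sub_right {G : Type*} [AddCommGroup G] [MeasurableSpace G]
    [MeasurableAdd₂ G] [MeasurableNeg G] {μ : Measure G} [SFinite μ] [μ.IsAddLeftInvariant]
    {Φ : G → G → ℝ≥0∞} (hΦ : Measurable (Function.uncurry Φ)) :
    ∫⁻ p, ∫⁻ q, Φ q (p - q) ∂μ ∂μ = ∫⁻ q, ∫⁻ q', Φ q q' ∂μ ∂μ := by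
  have hmeas : Measurable fun z : G × G => Φ z.2 (z.1 - z.2) :=
    hΦ.comp (f := fun z : G × G => (z.2, z.1 - z.2)) (by fun_prop)
  rw [lintegral_lintegral_swap hmeas.aemeasurable]
  exact lintegral_congr fun q => lintegral_sub_right_eq_self (Φ q) q

variable {α β γ δ : Type*} [MeasurableSpace α] [MeasurableSpace β] [MeasurableSpace γ]
  [MeasurableSpace δ] {μ : Measure α} {ν : Measure β} {μ' : Measure γ} {ν' : Measure δ}
  [SFinite μ] [SFinite ν] [SFinite μ'] [SFinite ν']

lemma lintegral_lintegral_mul_comp_fst {G : α × β → ℝ≥0∞} {H : γ × δ → ℝ≥0∞}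
    {K : α × γ → ℝ≥0∞} (hG : Measurable G) (hH : Measurable H) (hK : Measurable K) :
    ∫⁻ p, ∫⁻ q, G p * H q * K (p.1, q.1) ∂μ'.prod ν' ∂μ.prod ν =
      ∫⁻ z, (∫⁻ s, G (z.1, s) ∂ν) * (∫⁻ t, H (z.2, t) ∂ν') * K z ∂μ.prod μ' := by
  have hinner (p : α × β) : ∫⁻ q, G p * H q * K (p.1, q.1) ∂μ'.prod ν' =
      ∫⁻ y, G p * ((∫⁻ t, H (y, t) ∂ν') * K (p.1, y)) ∂μ' := by
    rw [lintegral_prod _ (by fun_prop)]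
    refine lintegral_congr fun y => ?_
    rw [← lintegral_mul_const _ (by fun_prop), ← lintegral_const_mul _ (by fun_prop)]
    simp only [mul_assoc]
  rw [lintegral_congr hinner, lintegral_prod _ (by fun_prop), lintegral_prod _ (by fun_prop)]
  refine lintegral_congr fun x => ?_
  rw [lintegral_lintegral_swap (by fun_prop)]
  refine lintegral_congr fun y => ?_
  dsimp only
  rw [lintegral_mul_const _ (by fun_prop), mul_assoc]

end Tonelli

section Bilinear

/-- The square of the norm of `L²(w(τ - ξ³) dξ dτ)`. For `w(s) = (1 + |s|)^(2b)` this is the square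
of the Bourgain norm, read on the Fourier side. -/
noncomputable def modulationEnergy (w : ℝ → ℝ≥0∞) (F : ℝ × ℝ → ℝ≥0∞) : ℝ≥0∞ :=
  ∫⁻ p, w (airyModulation p) * F p ^ (2 : ℝ)

/-- The density `w^(1/3) F^(4/3)` left over on each factor once the weight `w⁻¹` has been spent in
Hölder's inequality for the convolution. -/
noncomputable def bilinearDensity (w : ℝ → ℝ≥0∞) (F : ℝ × ℝ → ℝ≥0∞) (p : ℝ × ℝ) : ℝ≥0∞ :=
  w (airyModulation p) ^ (1 / 3 : ℝ) * F p ^ (4 / 3 : ℝ)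

variable {w : ℝ → ℝ≥0∞} {F F₁ F₂ : ℝ × ℝ → ℝ≥0∞}

@[fun_prop]
lemma measurable_bilinearDensity (hw : Measurable w) (hF : Measurable F) :
    Measurable (bilinearDensity w F) := by
  unfold bilinearDensity
  fun_prop

lemma bilinearDensity_rpow_mul_inv_rpow (p : ℝ × ℝ) :
    bilinearDensity w F p ^ (3 / 2 : ℝ) * (w (airyModulation p))⁻¹ ^ (1 - 3 / 2 : ℝ) =
      w (airyModulation p) * F p ^ (2 : ℝ) := by
  have hw_split : w (airyModulation p) ^ (1 / 2 : ℝ) * w (airyModulation p) ^ (1 / 2 : ℝ) =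
      w (airyModulation p) := by
    rw [← ENNReal.rpow_add_of_nonneg _ _ (by norm_num) (by norm_num)]
    norm_num
  rw [bilinearDensity, ENNReal.mul_rpow_of_nonneg _ _ (by norm_num), ← ENNReal.rpow_mul,
    ← ENNReal.rpow_mul, ENNReal.inv_rpow, ← ENNReal.rpow_neg,
    show (1 / 3 * (3 / 2) : ℝ) = 1 / 2 by norm_num, show (4 / 3 * (3 / 2) : ℝ) = 2 by norm_num,
    show -(1 - 3 / 2 : ℝ) = 1 / 2 by norm_num, mul_right_comm, hw_split]

lemma lintegral_rpow_marginal_bilinearDensity_le (hw : Measurable w) (hw₀ : ∀ u, w u ≠ 0)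
    (hw_top : ∀ u, w u ≠ ∞) (hF : Measurable F) :
    ∫⁻ x, (∫⁻ s, bilinearDensity w F (x, s)) ^ (3 / 2 : ℝ) ≤
      modulationEnergy w F * (∫⁻ u, (w u)⁻¹) ^ (1 / 2 : ℝ) := by
  have hfiber (x : ℝ) : (∫⁻ s, bilinearDensity w F (x, s)) ^ (3 / 2 : ℝ) ≤
      (∫⁻ s, w (airyModulation (x, s)) * F (x, s) ^ (2 : ℝ)) *
        (∫⁻ u, (w u)⁻¹) ^ (1 / 2 : ℝ) := by
    have htranslate : ∫⁻ s, (w (airyModulation (x, s)))⁻¹ = ∫⁻ u, (w u)⁻¹ :=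
      lintegral_sub_right_eq_self (fun u => (w u)⁻¹) (x ^ 3)
    have hholder := rpow_lintegral_le_lintegral_rpow_mul_weight (r := 3 / 2) (μ := volume)
      (f := fun s => bilinearDensity w F (x, s)) (k := fun s => (w (airyModulation (x, s)))⁻¹)
      (by fun_prop) (by fun_prop) (.of_forall fun s => ENNReal.inv_ne_zero.2 (hw_top _))
      (.of_forall fun s => ENNReal.inv_ne_top.2 (hw₀ _)) (by norm_num)
    rwa [htranslate, lintegral_congr fun s => bilinearDensity_rpow_mul_inv_rpow (x, s),
      show (3 / 2 - 1 : ℝ) = 1 / 2 by norm_num] at hholder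
  refine (lintegral_mono hfiber).trans_eq ?_
  rw [lintegral_mul_const _ (by fun_prop), modulationEnergy, Measure.volume_eq_prod,
    lintegral_prod _ (by fun_prop)]

/-- The weight in Hölder's inequality for the convolution at `p`: the Jacobian factor
`|ξ² - (p.1 - ξ)²|` makes its integral finite. -/
noncomputable def resonanceWeight (w : ℝ → ℝ≥0∞) (p q : ℝ × ℝ) : ℝ≥0∞ :=
  (w (airyModulation q))⁻¹ * (w (airyModulation (p - q)))⁻¹ *
    ENNReal.ofReal |q.1 ^ 2 - (p - q).1 ^ 2|

lemma ae_resonanceWeight_ne_zero (hw_top : ∀ u, w u ≠ ∞) {p : ℝ × ℝ} (hp : p.1 ≠ 0) :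
    ∀ᵐ q, resonanceWeight w p q ≠ 0 := by
  filter_upwards [Measure.quasiMeasurePreserving_fst.ae (volume.ae_ne (p.1 / 2))] with q hq
  have hfactor : q.1 ^ 2 - (p - q).1 ^ 2 = 2 * p.1 * (q.1 - p.1 / 2) := by
    rw [Prod.fst_sub]
    ring
  have hjacobian : 0 < |q.1 ^ 2 - (p - q).1 ^ 2| := by
    rw [hfactor]
    exact abs_pos.2 (mul_ne_zero (mul_ne_zero two_ne_zero hp) (sub_ne_zero.2 hq))
  exact mul_ne_zero (mul_ne_zero (ENNReal.inv_ne_zero.2 (hw_top _))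
    (ENNReal.inv_ne_zero.2 (hw_top _))) (ENNReal.ofReal_pos.2 hjacobian).ne'

lemma resonanceWeight_ne_top (hw₀ : ∀ u, w u ≠ 0) (p q : ℝ × ℝ) : resonanceWeight w p q ≠ ∞ :=
  ENNReal.mul_ne_top (ENNReal.mul_ne_top (ENNReal.inv_ne_top.2 (hw₀ _))
    (ENNReal.inv_ne_top.2 (hw₀ _))) ENNReal.ofReal_ne_top

lemma mul_rpow_mul_resonanceWeight_rpow (hw₀ : ∀ u, w u ≠ 0) (p q : ℝ × ℝ) :
    (F₁ q * F₂ (p - q)) ^ (4 / 3 : ℝ) * resonanceWeight w p q ^ (1 - 4 / 3 : ℝ) =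
      bilinearDensity w F₁ q * bilinearDensity w F₂ (p - q) *
        ENNReal.ofReal |q.1 ^ 2 - (p - q).1 ^ 2| ^ (-(1 / 3) : ℝ) := by
  have hinv_top (u : ℝ) : (w u)⁻¹ ≠ ∞ := ENNReal.inv_ne_top.2 (hw₀ u)
  rw [resonanceWeight, ENNReal.mul_rpow_of_nonneg _ _ (by norm_num),
    ENNReal.mul_rpow_of_ne_top (ENNReal.mul_ne_top (hinv_top _) (hinv_top _))
      ENNReal.ofReal_ne_top, ENNReal.mul_rpow_of_ne_top (hinv_top _) (hinv_top _),
    ENNReal.inv_rpow, ENNReal.inv_rpow, ← ENNReal.rpow_neg, ← ENNReal.rpow_neg,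
    show (1 - 4 / 3 : ℝ) = -(1 / 3) by norm_num, neg_neg, bilinearDensity, bilinearDensity]
  ring

lemma lconvolution_rpow_four_thirds_le (hw : Measurable w) (hw₀ : ∀ u, w u ≠ 0)
    (hw_top : ∀ u, w u ≠ ∞) (h₁ : Measurable F₁) (h₂ : Measurable F₂)
    {p : ℝ × ℝ} (hp : p.1 ≠ 0) :
    (F₁ ⋆ₗ F₂) p ^ (4 / 3 : ℝ) ≤
      (∫⁻ q, bilinearDensity w F₁ q * bilinearDensity w F₂ (p - q) *
        ENNReal.ofReal |q.1 ^ 2 - (p - q).1 ^ 2| ^ (-(1 / 3) : ℝ)) *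
        (2 * (∫⁻ u, (w u)⁻¹) * ∫⁻ u, (w u)⁻¹) ^ (1 / 3 : ℝ) := by
  have hweight_meas : Measurable (resonanceWeight w p) := by unfold resonanceWeight; fun_prop
  have hweight_int : ∫⁻ q, resonanceWeight w p q ≤ 2 * (∫⁻ u, (w u)⁻¹) * ∫⁻ u, (w u)⁻¹ :=
    lintegral_airyModulation_mul_le hw.inv hw.inv p
  have hholder := rpow_lintegral_le_lintegral_rpow_mul_weight (r := 4 / 3) (μ := volume)
    (f := fun q => F₁ q * F₂ (p - q)) (by fun_prop) hweight_meas.aemeasurable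
    (ae_resonanceWeight_ne_zero hw_top hp) (.of_forall (resonanceWeight_ne_top hw₀ p))
    (by norm_num)
  rw [lintegral_congr (mul_rpow_mul_resonanceWeight_rpow hw₀ p),
    show (4 / 3 - 1 : ℝ) = 1 / 3 by norm_num] at hholder
  have hconv : (F₁ ⋆ₗ F₂) p = ∫⁻ q, F₁ q * F₂ (p - q) := by
    simp only [lconvolution_def, neg_add_eq_sub]
  rw [hconv]
  exact hholder.trans (by gcongr)

/-- The constant of the bilinear estimate, in terms of `J = ∫ w⁻¹`. -/
noncomputable def bilinearConstant (J : ℝ≥0∞) : ℝ≥0∞ :=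
  schurConstant ^ (2 / 3 : ℝ) * J ^ (2 / 3 : ℝ) * (2 * J * J) ^ (1 / 3 : ℝ)

lemma bilinearConstant_ne_top {J : ℝ≥0∞} (hJ : J ≠ ∞) : bilinearConstant J ≠ ∞ := by
  have hpow {x : ℝ≥0∞} {s : ℝ} (hs : 0 ≤ s) (hx : x ≠ ∞) : x ^ s ≠ ∞ :=
    ENNReal.rpow_ne_top_of_nonneg hs hx
  exact ENNReal.mul_ne_top (ENNReal.mul_ne_top (hpow (by norm_num) schurConstant_ne_top)
    (hpow (by norm_num) hJ)) (hpow (by norm_num)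
      (ENNReal.mul_ne_top (ENNReal.mul_ne_top ENNReal.ofNat_ne_top hJ) hJ))

lemma lintegral_bilinearDensity_mul_le (hw : Measurable w) (hw₀ : ∀ u, w u ≠ 0)
    (hw_top : ∀ u, w u ≠ ∞) (h₁ : Measurable F₁) (h₂ : Measurable F₂) :
    ∫⁻ q, ∫⁻ q' : ℝ × ℝ, bilinearDensity w F₁ q * bilinearDensity w F₂ q' *
        ENNReal.ofReal |q.1 ^ 2 - q'.1 ^ 2| ^ (-(1 / 3) : ℝ) ≤
      schurConstant ^ (2 / 3 : ℝ) * (∫⁻ u, (w u)⁻¹) ^ (2 / 3 : ℝ) *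
        (modulationEnergy w F₁ ^ (2 / 3 : ℝ) * modulationEnergy w F₂ ^ (2 / 3 : ℝ)) := by
  set J := ∫⁻ u, (w u)⁻¹
  have hmarginal {F : ℝ × ℝ → ℝ≥0∞} (hF : Measurable F) :
      (∫⁻ x, (∫⁻ s, bilinearDensity w F (x, s)) ^ (3 / 2 : ℝ)) ^ (2 / 3 : ℝ) ≤
        modulationEnergy w F ^ (2 / 3 : ℝ) * J ^ (1 / 3 : ℝ) := by
    refine (ENNReal.rpow_le_rpow (lintegral_rpow_marginal_bilinearDensity_le hw hw₀ hw_top hF)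
      (by norm_num)).trans_eq ?_
    rw [ENNReal.mul_rpow_of_nonneg _ _ (by norm_num), ← ENNReal.rpow_mul,
      show (1 / 2 * (2 / 3) : ℝ) = 1 / 3 by norm_num]
  have hhls := lintegral_mul_mul_abs_sq_sub_sq_rpow_neg_le (θ := 1 / 3)
    (f := fun x => ∫⁻ s, bilinearDensity w F₁ (x, s))
    (g := fun y => ∫⁻ t, bilinearDensity w F₂ (y, t)) (by fun_prop) (by fun_prop)
    (by norm_num) (by norm_num)
  rw [show (1 - 1 / 3 : ℝ)⁻¹ = 3 / 2 by norm_num, show (1 - 1 / 3 : ℝ) = 2 / 3 by norm_num,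
    show (2 * (1 / 3) : ℝ) = 2 / 3 by norm_num] at hhls
  rw [Measure.volume_eq_prod, lintegral_lintegral_mul_comp_fst
    (K := fun z => ENNReal.ofReal |z.1 ^ 2 - z.2 ^ 2| ^ (-(1 / 3) : ℝ))
    (by fun_prop) (by fun_prop) (by fun_prop)]
  have hJ_split : J ^ (2 / 3 : ℝ) = J ^ (1 / 3 : ℝ) * J ^ (1 / 3 : ℝ) := by
    rw [← ENNReal.rpow_add_of_nonneg _ _ (by norm_num) (by norm_num)]
    norm_num
  refine hhls.trans ((mul_le_mul_right (mul_le_mul' (hmarginal h₁) (hmarginal h₂)) _).trans_eq ?_)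
  rw [hJ_split]
  ring

lemma lintegral_lconvolution_rpow_four_thirds_le (hw : Measurable w) (hw₀ : ∀ u, w u ≠ 0)
    (hw_top : ∀ u, w u ≠ ∞) (h₁ : Measurable F₁) (h₂ : Measurable F₂) :
    ∫⁻ p, (F₁ ⋆ₗ F₂) p ^ (4 / 3 : ℝ) ≤ bilinearConstant (∫⁻ u, (w u)⁻¹) *
      (modulationEnergy w F₁ ^ (2 / 3 : ℝ) * modulationEnergy w F₂ ^ (2 / 3 : ℝ)) := by
  set J := ∫⁻ u, (w u)⁻¹
  calc ∫⁻ p, (F₁ ⋆ₗ F₂) p ^ (4 / 3 : ℝ)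
      ≤ ∫⁻ p, (∫⁻ q, bilinearDensity w F₁ q * bilinearDensity w F₂ (p - q) *
          ENNReal.ofReal |q.1 ^ 2 - (p - q).1 ^ 2| ^ (-(1 / 3) : ℝ)) *
            (2 * J * J) ^ (1 / 3 : ℝ) :=
        lintegral_mono_ae ((Measure.quasiMeasurePreserving_fst.ae (volume.ae_ne 0)).mono
          fun p hp => lconvolution_rpow_four_thirds_le hw hw₀ hw_top h₁ h₂ hp)
    _ = (∫⁻ q, ∫⁻ q' : ℝ × ℝ, bilinearDensity w F₁ q * bilinearDensity w F₂ q' *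
          ENNReal.ofReal |q.1 ^ 2 - q'.1 ^ 2| ^ (-(1 / 3) : ℝ)) * (2 * J * J) ^ (1 / 3 : ℝ) := by
        rw [lintegral_mul_const _ (by fun_prop), lintegral_lintegral_sub_right
          (Φ := fun q q' => bilinearDensity w F₁ q * bilinearDensity w F₂ q' *
            ENNReal.ofReal |q.1 ^ 2 - q'.1 ^ 2| ^ (-(1 / 3) : ℝ))
          (by unfold Function.uncurry; fun_prop)]
    _ ≤ _ := by
        refine (mul_le_mul_left
          (lintegral_bilinearDensity_mul_le hw hw₀ hw_top h₁ h₂) _).trans_eq ?_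
        rw [bilinearConstant]
        ring

lemma lintegral_lconvolution_lconvolution_sq_le (hw : Measurable w) (hw₀ : ∀ u, w u ≠ 0)
    (hw_top : ∀ u, w u ≠ ∞) {F₁ F₂ F₃ F₄ : ℝ × ℝ → ℝ≥0∞} (h₁ : Measurable F₁)
    (h₂ : Measurable F₂) (h₃ : Measurable F₃) (h₄ : Measurable F₄) :
    ∫⁻ p, ((F₁ ⋆ₗ F₂) ⋆ₗ (F₃ ⋆ₗ F₄)) p ^ (2 : ℝ) ≤ bilinearConstant (∫⁻ u, (w u)⁻¹) ^ (3 : ℝ) *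
      (modulationEnergy w F₁ * modulationEnergy w F₂ *
        (modulationEnergy w F₃ * modulationEnergy w F₄)) := by
  have hbilinear {F G : ℝ × ℝ → ℝ≥0∞} (hF : Measurable F) (hG : Measurable G) :
      (∫⁻ p, (F ⋆ₗ G) p ^ (4 / 3 : ℝ)) ^ (3 / 2 : ℝ) ≤
        bilinearConstant (∫⁻ u, (w u)⁻¹) ^ (3 / 2 : ℝ) *
          (modulationEnergy w F * modulationEnergy w G) := by
    refine (ENNReal.rpow_le_rpow (lintegral_lconvolution_rpow_four_thirds_le hw hw₀ hw_top hF hG)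
      (by norm_num)).trans_eq ?_
    rw [← ENNReal.mul_rpow_of_nonneg _ _ (by norm_num), ENNReal.mul_rpow_of_nonneg _ _
      (by norm_num), ← ENNReal.rpow_mul, show (2 / 3 * (3 / 2) : ℝ) = 1 by norm_num,
      ENNReal.rpow_one]
  have hyoung := lintegral_lconvolution_rpow_le (μ := volume) (p := 4 / 3) (q := 4 / 3) (r := 2)
    (measurable_lconvolution volume h₁ h₂) (measurable_lconvolution volume h₃ h₄)
    (by norm_num) (by norm_num) (by norm_num) (by norm_num)
  rw [show (2 / (4 / 3) : ℝ) = 3 / 2 by norm_num] at hyoung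
  have hconst (x : ℝ≥0∞) : x ^ (3 : ℝ) = x ^ (3 / 2 : ℝ) * x ^ (3 / 2 : ℝ) := by
    rw [← ENNReal.rpow_add_of_nonneg _ _ (by norm_num) (by norm_num)]
    norm_num
  refine hyoung.trans ((mul_le_mul' (hbilinear h₁ h₂) (hbilinear h₃ h₄)).trans_eq ?_)
  rw [hconst]
  ring

end Bilinear

section FourierTransform

/-- The factor `(2π)⁻²` of Plancherel's identity on the plane for the transform with kernel
`exp (-i (x ξ + t τ))`. -/
noncomputable def plancherelConstant : ℝ≥0∞ :=
  ENNReal.ofReal ((2 * Real.pi) ^ 2)⁻¹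

/-- The rescaling `p ↦ -p / (2π)` from the plane to the Euclidean plane: it turns Mathlib's inverse
transform, with kernel `exp (2πi ⟪v, w⟫)`, into the transform with kernel `exp (-i (x ξ + t τ))`. -/
noncomputable def frequencyEquiv : (ℝ × ℝ) ≃L[ℝ] WithLp 2 (ℝ × ℝ) :=
  (WithLp.prodContinuousLinearEquiv 2 ℝ ℝ ℝ).symm.trans
    (ContinuousLinearEquiv.smulLeft (Units.mk0 (-(2 * Real.pi)⁻¹) (by simp [Real.pi_ne_zero])))

lemma frequencyEquiv_apply (p : ℝ × ℝ) :
    frequencyEquiv p = (-(2 * Real.pi)⁻¹) • WithLp.toLp 2 p := rfl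

lemma lintegral_eq_plancherelConstant_mul {f : WithLp 2 (ℝ × ℝ) → ℝ≥0∞} (hf : Measurable f) :
    ∫⁻ v, f v = plancherelConstant * ∫⁻ p, f (frequencyEquiv p) := by
  have hscale : -(2 * Real.pi)⁻¹ ≠ 0 := by simp [Real.pi_ne_zero]
  have hrank : Module.finrank ℝ (WithLp 2 (ℝ × ℝ)) = 2 :=
    (WithLp.linearEquiv 2 ℝ (ℝ × ℝ)).finrank_eq.trans (by simp)
  have hjacobian : |((-(2 * Real.pi)⁻¹) ^ 2)⁻¹| = (2 * Real.pi) ^ 2 := by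
    rw [neg_sq, inv_pow, inv_inv, abs_of_nonneg (by positivity)]
  have hcancel : plancherelConstant * ENNReal.ofReal ((2 * Real.pi) ^ 2) = 1 := by
    rw [plancherelConstant, ← ENNReal.ofReal_mul (by positivity),
      inv_mul_cancel₀ (by positivity), ENNReal.ofReal_one]
  calc ∫⁻ v, f v = plancherelConstant * (ENNReal.ofReal ((2 * Real.pi) ^ 2) * ∫⁻ v, f v) := by
        rw [← mul_assoc, hcancel, one_mul]
    _ = plancherelConstant * ∫⁻ v, f ((-(2 * Real.pi)⁻¹) • v) := by
        rw [← lintegral_map hf (measurable_const_smul _), Measure.map_addHaar_smul _ hscale,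
          lintegral_smul_measure, hrank, hjacobian, smul_eq_mul]
    _ = plancherelConstant * ∫⁻ p, f (frequencyEquiv p) := by
        rw [← (WithLp.volume_preserving_toLp ℝ ℝ).lintegral_comp
          (f := fun v => f ((-(2 * Real.pi)⁻¹) • v)) (by fun_prop)]
        simp only [frequencyEquiv_apply]

/-- A Schwartz function on the plane, read on the Euclidean plane, where Mathlib's Fourier transform
is available. -/
noncomputable def toEuclidean (U : 𝓢(ℝ × ℝ, ℂ)) : 𝓢(WithLp 2 (ℝ × ℝ), ℂ) :=
  SchwartzMap.compCLMOfContinuousLinearEquiv ℂ (WithLp.prodContinuousLinearEquiv 2 ℝ ℝ ℝ) U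

lemma toEuclidean_apply (U : 𝓢(ℝ × ℝ, ℂ)) (v : WithLp 2 (ℝ × ℝ)) :
    toEuclidean U v = U v.ofLp := rfl

/-- The space-time Fourier transform with kernel `exp (-i (x ξ + t τ))`, as a Schwartz function. -/
noncomputable def spaceTimeFourier (U : 𝓢(ℝ × ℝ, ℂ)) : 𝓢(ℝ × ℝ, ℂ) :=
  SchwartzMap.compCLMOfContinuousLinearEquiv ℂ frequencyEquiv (𝓕⁻ (toEuclidean U))

lemma spaceTimeFourier_apply (U : 𝓢(ℝ × ℝ, ℂ)) (p : ℝ × ℝ) :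
    spaceTimeFourier U p = 𝓕⁻ (toEuclidean U) (frequencyEquiv p) := rfl

lemma spaceTimeFourier_eq_integral (U : 𝓢(ℝ × ℝ, ℂ)) (p : ℝ × ℝ) :
    spaceTimeFourier U p =
      ∫ q : ℝ × ℝ, Complex.exp (-Complex.I * (q.1 * p.1 + q.2 * p.2)) * U q := by
  rw [spaceTimeFourier_apply, SchwartzMap.fourierInv_coe, Real.fourierInv_eq',
    ← (WithLp.volume_preserving_toLp ℝ ℝ).integral_comp
      (MeasurableEquiv.toLp 2 (ℝ × ℝ)).measurableEmbedding]
  refine integral_congr_ae (.of_forall fun q => ?_)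
  have hphase : 2 * Real.pi * inner ℝ (WithLp.toLp 2 q) (frequencyEquiv p) =
      -(q.1 * p.1 + q.2 * p.2) := by
    rw [frequencyEquiv_apply, inner_smul_right, WithLp.prod_inner_apply, ← mul_assoc, mul_neg,
      mul_inv_cancel₀ Real.two_pi_pos.ne', neg_one_mul]
    simp [mul_comm]
  dsimp only
  rw [hphase, smul_eq_mul, toEuclidean_apply]
  congr 2
  push_cast
  ring

lemma measurable_enorm_spaceTimeFourier (U : 𝓢(ℝ × ℝ, ℂ)) :
    Measurable fun p => ‖spaceTimeFourier U p‖ₑ :=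
  (spaceTimeFourier U).continuous.measurable.enorm

lemma lintegral_enorm_rpow_two_eq_ofReal {E F : Type*} [NormedAddCommGroup E] [NormedSpace ℝ E]
    [NormedAddCommGroup F] [NormedSpace ℝ F] [MeasurableSpace E] [BorelSpace E]
    [SecondCountableTopology E] (μ : Measure E) [μ.HasTemperateGrowth] (f : 𝓢(E, F)) :
    ∫⁻ x, ‖f x‖ₑ ^ (2 : ℝ) ∂μ = ENNReal.ofReal (∫ x, ‖f x‖ ^ 2 ∂μ) := by
  rw [ofReal_integral_eq_lintegral_ofReal ((f.memLp 2 μ).integrable_norm_pow (by norm_num))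
    (.of_forall fun x => by positivity)]
  refine lintegral_congr fun x => ?_
  rw [ENNReal.ofReal_pow (norm_nonneg _), ofReal_norm, ENNReal.rpow_two]

lemma lintegral_enorm_sq_eq_spaceTimeFourier (U : 𝓢(ℝ × ℝ, ℂ)) :
    ∫⁻ p, ‖U p‖ₑ ^ (2 : ℝ) = plancherelConstant * ∫⁻ p, ‖spaceTimeFourier U p‖ₑ ^ (2 : ℝ) := by
  calc ∫⁻ p, ‖U p‖ₑ ^ (2 : ℝ) = ∫⁻ v, ‖toEuclidean U v‖ₑ ^ (2 : ℝ) :=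
        (WithLp.volume_preserving_toLp ℝ ℝ).lintegral_comp
          ((toEuclidean U).continuous.measurable.enorm.pow_const _)
    _ = ∫⁻ v, ‖𝓕⁻ (toEuclidean U) v‖ₑ ^ (2 : ℝ) := by
        rw [lintegral_enorm_rpow_two_eq_ofReal, lintegral_enorm_rpow_two_eq_ofReal,
          ← SchwartzMap.integral_norm_sq_fourier (𝓕⁻ (toEuclidean U)),
          FourierTransform.fourier_fourierInv_eq]
    _ = plancherelConstant * ∫⁻ p, ‖spaceTimeFourier U p‖ₑ ^ (2 : ℝ) :=
        lintegral_eq_plancherelConstant_mul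
          ((𝓕⁻ (toEuclidean U)).continuous.measurable.enorm.pow_const _)

/-- The pointwise product of two Schwartz functions. -/
noncomputable def schwartzMul (U V : 𝓢(ℝ × ℝ, ℂ)) : 𝓢(ℝ × ℝ, ℂ) :=
  SchwartzMap.pairing (ContinuousLinearMap.mul ℂ ℂ) U V

lemma schwartzMul_apply (U V : 𝓢(ℝ × ℝ, ℂ)) (p : ℝ × ℝ) : schwartzMul U V p = U p * V p := rfl

lemma fourierInv_toEuclidean_schwartzMul (U V : 𝓢(ℝ × ℝ, ℂ)) :
    𝓕⁻ (toEuclidean (schwartzMul U V)) = SchwartzMap.convolution (ContinuousLinearMap.mul ℂ ℂ)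
      (𝓕⁻ (toEuclidean U)) (𝓕⁻ (toEuclidean V)) := by
  have hfourier : toEuclidean (schwartzMul U V) = 𝓕 (SchwartzMap.convolution
      (ContinuousLinearMap.mul ℂ ℂ) (𝓕⁻ (toEuclidean U)) (𝓕⁻ (toEuclidean V))) := by
    rw [SchwartzMap.fourier_convolution, FourierTransform.fourier_fourierInv_eq,
      FourierTransform.fourier_fourierInv_eq]
    rfl
  rw [hfourier, FourierTransform.fourierInv_fourier_eq]

lemma enorm_spaceTimeFourier_schwartzMul_le (U V : 𝓢(ℝ × ℝ, ℂ)) (p : ℝ × ℝ) :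
    ‖spaceTimeFourier (schwartzMul U V) p‖ₑ ≤ plancherelConstant *
      ((fun q => ‖spaceTimeFourier U q‖ₑ) ⋆ₗ fun q => ‖spaceTimeFourier V q‖ₑ) p := by
  have hU := (𝓕⁻ (toEuclidean U)).continuous.measurable
  have hV := (𝓕⁻ (toEuclidean V)).continuous.measurable
  rw [spaceTimeFourier_apply, fourierInv_toEuclidean_schwartzMul, SchwartzMap.convolution_apply,
    convolution_def]
  refine (enorm_integral_le_lintegral_enorm _).trans_eq ?_
  rw [lintegral_eq_plancherelConstant_mul
    (by simp only [ContinuousLinearMap.mul_apply', enorm_mul]; fun_prop)]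
  simp only [ContinuousLinearMap.mul_apply', enorm_mul, ← map_sub, ← spaceTimeFourier_apply,
    lconvolution_def, neg_add_eq_sub]

lemma enorm_spaceTimeFourier_schwartzMul_schwartzMul_le (U₁ U₂ U₃ U₄ : 𝓢(ℝ × ℝ, ℂ)) (p : ℝ × ℝ) :
    ‖spaceTimeFourier (schwartzMul (schwartzMul U₁ U₂) (schwartzMul U₃ U₄)) p‖ₑ ≤
      plancherelConstant ^ 3 *
        (((fun q => ‖spaceTimeFourier U₁ q‖ₑ) ⋆ₗ fun q => ‖spaceTimeFourier U₂ q‖ₑ) ⋆ₗ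
          ((fun q => ‖spaceTimeFourier U₃ q‖ₑ) ⋆ₗ fun q => ‖spaceTimeFourier U₄ q‖ₑ)) p := by
  set G := (fun q => ‖spaceTimeFourier U₁ q‖ₑ) ⋆ₗ fun q => ‖spaceTimeFourier U₂ q‖ₑ
  set H := (fun q => ‖spaceTimeFourier U₃ q‖ₑ) ⋆ₗ fun q => ‖spaceTimeFourier U₄ q‖ₑ
  have hG_meas : Measurable G := measurable_lconvolution volume
    (measurable_enorm_spaceTimeFourier U₁) (measurable_enorm_spaceTimeFourier U₂)
  have hH_meas : Measurable H := measurable_lconvolution volume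
    (measurable_enorm_spaceTimeFourier U₃) (measurable_enorm_spaceTimeFourier U₄)
  refine (enorm_spaceTimeFourier_schwartzMul_le _ _ p).trans ?_
  rw [pow_succ', mul_assoc, lconvolution_def (f := G), ← lintegral_const_mul _ (by fun_prop)]
  refine mul_le_mul_right (lintegral_mono fun q => ?_) _
  calc ‖spaceTimeFourier (schwartzMul U₁ U₂) q‖ₑ *
        ‖spaceTimeFourier (schwartzMul U₃ U₄) (-q + p)‖ₑ
      ≤ (plancherelConstant * G q) * (plancherelConstant * H (-q + p)) :=
        mul_le_mul' (enorm_spaceTimeFourier_schwartzMul_le _ _ _)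
          (enorm_spaceTimeFourier_schwartzMul_le _ _ _)
    _ = plancherelConstant ^ 2 * (G q * H (-q + p)) := by ring

lemma lintegral_enorm_mul_sq_le {w : ℝ → ℝ≥0∞} (hw : Measurable w) (hw₀ : ∀ u, w u ≠ 0)
    (hw_top : ∀ u, w u ≠ ∞) (U₁ U₂ U₃ U₄ : 𝓢(ℝ × ℝ, ℂ)) :
    ∫⁻ p, ‖U₁ p * U₂ p * U₃ p * U₄ p‖ₑ ^ (2 : ℝ) ≤
      plancherelConstant ^ 7 * bilinearConstant (∫⁻ u, (w u)⁻¹) ^ (3 : ℝ) *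
        (modulationEnergy w (fun p => ‖spaceTimeFourier U₁ p‖ₑ) *
          modulationEnergy w (fun p => ‖spaceTimeFourier U₂ p‖ₑ) *
          (modulationEnergy w (fun p => ‖spaceTimeFourier U₃ p‖ₑ) *
            modulationEnergy w (fun p => ‖spaceTimeFourier U₄ p‖ₑ))) := by
  have hmeas := measurable_enorm_spaceTimeFourier
  set F : 𝓢(ℝ × ℝ, ℂ) → ℝ × ℝ → ℝ≥0∞ := fun U p => ‖spaceTimeFourier U p‖ₑ
  have hproduct (p : ℝ × ℝ) : U₁ p * U₂ p * U₃ p * U₄ p =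
      schwartzMul (schwartzMul U₁ U₂) (schwartzMul U₃ U₄) p := by
    simp only [schwartzMul_apply, mul_assoc]
  calc ∫⁻ p, ‖U₁ p * U₂ p * U₃ p * U₄ p‖ₑ ^ (2 : ℝ)
      = plancherelConstant * ∫⁻ p, ‖spaceTimeFourier
          (schwartzMul (schwartzMul U₁ U₂) (schwartzMul U₃ U₄)) p‖ₑ ^ (2 : ℝ) := by
        simp only [hproduct]
        exact lintegral_enorm_sq_eq_spaceTimeFourier _
    _ ≤ plancherelConstant * ∫⁻ p, (plancherelConstant ^ 3 *
          ((F U₁ ⋆ₗ F U₂) ⋆ₗ (F U₃ ⋆ₗ F U₄)) p) ^ (2 : ℝ) := by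
        gcongr with p
        exact enorm_spaceTimeFourier_schwartzMul_schwartzMul_le U₁ U₂ U₃ U₄ p
    _ = plancherelConstant ^ 7 *
          ∫⁻ p, ((F U₁ ⋆ₗ F U₂) ⋆ₗ (F U₃ ⋆ₗ F U₄)) p ^ (2 : ℝ) := by
        have hconv_meas : Measurable ((F U₁ ⋆ₗ F U₂) ⋆ₗ (F U₃ ⋆ₗ F U₄)) :=
          measurable_lconvolution volume (measurable_lconvolution volume (hmeas U₁) (hmeas U₂))
            (measurable_lconvolution volume (hmeas U₃) (hmeas U₄))
        simp only [ENNReal.mul_rpow_of_nonneg _ _ zero_le_two]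
        rw [lintegral_const_mul _ (hconv_meas.pow_const _), ENNReal.rpow_two]
        ring
    _ ≤ _ := by
        rw [mul_assoc]
        exact mul_le_mul_right (lintegral_lconvolution_lconvolution_sq_le hw hw₀ hw_top
          (hmeas U₁) (hmeas U₂) (hmeas U₃) (hmeas U₄)) _

end FourierTransform

section BourgainNorm

/-- The weight `(1 + |s|)^(2b)` of the Bourgain space `X^{0,b}`. -/
noncomputable def bourgainWeight (b s : ℝ) : ℝ≥0∞ :=
  ENNReal.ofReal ((1 + |s|) ^ (2 * b))

lemma measurable_bourgainWeight (b : ℝ) : Measurable (bourgainWeight b) := by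
  unfold bourgainWeight
  fun_prop

lemma bourgainWeight_ne_zero (b s : ℝ) : bourgainWeight b s ≠ 0 :=
  (ENNReal.ofReal_pos.2 (by positivity)).ne'

lemma lintegral_inv_bourgainWeight_ne_top {b : ℝ} (hb : 1 / 2 < b) :
    ∫⁻ s, (bourgainWeight b s)⁻¹ ≠ ∞ := by
  have hint : Integrable fun s : ℝ => (1 + ‖s‖) ^ (-(2 * b)) :=
    integrable_one_add_norm (by rw [Module.finrank_self]; push_cast; linarith)
  refine (lintegral_congr fun s => ?_).trans_ne hint.lintegral_lt_top.ne
  rw [bourgainWeight, ← ENNReal.ofReal_inv_of_pos (by positivity), Real.rpow_neg (by positivity),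
    Real.norm_eq_abs]

lemma integrable_one_add_abs_rpow_mul_norm_sq {E F : Type*} [NormedAddCommGroup E]
    [NormedSpace ℝ E] [NormedAddCommGroup F] [NormedSpace ℝ F] [MeasurableSpace E] [BorelSpace E]
    [SecondCountableTopology E] {μ : Measure E} [μ.HasTemperateGrowth] {g : E → ℝ}
    (hg : g.HasTemperateGrowth) (s : ℝ) (f : 𝓢(E, F)) :
    Integrable (fun x => (1 + |g x|) ^ s * ‖f x‖ ^ 2) μ := by
  obtain ⟨k, hk⟩ := exists_nat_ge s
  have hpoly : (fun x => (2 + g x ^ 2) ^ k).HasTemperateGrowth := by fun_prop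
  have hg_cont : Continuous fun x => 1 + |g x| := by
    have := hg.1.continuous
    fun_prop
  have hdom : Integrable (fun x => ‖SchwartzMap.smulLeftCLM F (fun x => (2 + g x ^ 2) ^ k) f x‖ *
      ‖f x‖) μ :=
    (SchwartzMap.memLp _ 2 μ).norm.integrable_mul (f.memLp 2 μ).norm
  refine hdom.mono' ((hg_cont.rpow_const fun x => .inl (by positivity)).mul
    (f.continuous.norm.pow 2)).aestronglyMeasurable (.of_forall fun x => ?_)
  have habs : |g x| ≤ 1 + g x ^ 2 := by nlinarith [sq_abs (g x), sq_nonneg (|g x| - 1)]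
  have hweight : (1 + |g x|) ^ s ≤ (2 + g x ^ 2) ^ k := calc
    (1 + |g x|) ^ s ≤ (1 + |g x|) ^ (k : ℝ) :=
      Real.rpow_le_rpow_of_exponent_le (by linarith [abs_nonneg (g x)]) hk
    _ = (1 + |g x|) ^ k := Real.rpow_natCast _ _
    _ ≤ (2 + g x ^ 2) ^ k := pow_le_pow_left₀ (by positivity) (by linarith) k
  rw [SchwartzMap.smulLeftCLM_apply_apply hpoly, norm_smul, Real.norm_of_nonneg (by positivity),
    Real.norm_of_nonneg (by positivity), sq, mul_assoc]
  gcongr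

lemma hasTemperateGrowth_airyModulation : airyModulation.HasTemperateGrowth :=
  (ContinuousLinearMap.snd ℝ ℝ ℝ).hasTemperateGrowth.sub
    ((ContinuousLinearMap.fst ℝ ℝ ℝ).hasTemperateGrowth.pow 3)

/-- The norm of the Bourgain space `X^{0,b}` associated with the Airy equation. -/
noncomputable def bourgainNorm (b : ℝ) (U : 𝓢(ℝ × ℝ, ℂ)) : ℝ :=
  (∫ p : ℝ × ℝ, (1 + |p.2 - p.1 ^ 3|) ^ (2 * b) *
    ‖∫ q : ℝ × ℝ, Complex.exp (-Complex.I * (q.1 * p.1 + q.2 * p.2)) * U q‖ ^ 2) ^ ((1 : ℝ) / 2)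

lemma bourgainNorm_nonneg (b : ℝ) (U : 𝓢(ℝ × ℝ, ℂ)) : 0 ≤ bourgainNorm b U :=
  Real.rpow_nonneg (integral_nonneg fun p => by positivity) _

lemma modulationEnergy_spaceTimeFourier (b : ℝ) (U : 𝓢(ℝ × ℝ, ℂ)) :
    modulationEnergy (bourgainWeight b) (fun p => ‖spaceTimeFourier U p‖ₑ) =
      ENNReal.ofReal (bourgainNorm b U ^ 2) := by
  have hsq : bourgainNorm b U ^ 2 =
      ∫ p, (1 + |airyModulation p|) ^ (2 * b) * ‖spaceTimeFourier U p‖ ^ 2 := by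
    simp only [bourgainNorm, ← spaceTimeFourier_eq_integral, ← Real.sqrt_eq_rpow]
    exact Real.sq_sqrt (integral_nonneg fun p => by positivity)
  rw [hsq, ofReal_integral_eq_lintegral_ofReal
    (integrable_one_add_abs_rpow_mul_norm_sq hasTemperateGrowth_airyModulation _ _)
    (.of_forall fun p => by positivity), modulationEnergy]
  refine lintegral_congr fun p => ?_
  rw [ENNReal.ofReal_mul (by positivity), ENNReal.ofReal_pow (norm_nonneg _), ofReal_norm,
    ENNReal.rpow_two, bourgainWeight]

/-- The constant of the quadrilinear estimate. -/
noncomputable def quadrilinearConstant (b : ℝ) : ℝ≥0∞ :=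
  (plancherelConstant ^ 7 *
    bilinearConstant (∫⁻ s, (bourgainWeight b s)⁻¹) ^ (3 : ℝ)) ^ (1 / 2 : ℝ)

lemma quadrilinearConstant_ne_top {b : ℝ} (hb : 1 / 2 < b) : quadrilinearConstant b ≠ ∞ :=
  ENNReal.rpow_ne_top_of_nonneg (by norm_num) (ENNReal.mul_ne_top
    (ENNReal.pow_ne_top ENNReal.ofReal_ne_top) (ENNReal.rpow_ne_top_of_nonneg (by norm_num)
      (bilinearConstant_ne_top (lintegral_inv_bourgainWeight_ne_top hb))))

lemma eLpNorm_mul_le_quadrilinearConstant_mul (b : ℝ) (U₁ U₂ U₃ U₄ : 𝓢(ℝ × ℝ, ℂ)) :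
    eLpNorm (fun p => U₁ p * U₂ p * U₃ p * U₄ p) 2 volume ≤ quadrilinearConstant b *
      ENNReal.ofReal (bourgainNorm b U₁ * bourgainNorm b U₂ * bourgainNorm b U₃ *
        bourgainNorm b U₄) := by
  have hN₁ := bourgainNorm_nonneg b U₁
  have hN₂ := bourgainNorm_nonneg b U₂
  have hN₃ := bourgainNorm_nonneg b U₃
  have hN₄ := bourgainNorm_nonneg b U₄
  have hprod : ENNReal.ofReal (bourgainNorm b U₁ * bourgainNorm b U₂ * bourgainNorm b U₃ *
      bourgainNorm b U₄) = (ENNReal.ofReal (bourgainNorm b U₁ ^ 2) *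
        ENNReal.ofReal (bourgainNorm b U₂ ^ 2) * (ENNReal.ofReal (bourgainNorm b U₃ ^ 2) *
          ENNReal.ofReal (bourgainNorm b U₄ ^ 2))) ^ (1 / 2 : ℝ) := by
    rw [← ENNReal.ofReal_mul (by positivity), ← ENNReal.ofReal_mul (by positivity),
      ← ENNReal.ofReal_mul (by positivity),
      ENNReal.ofReal_rpow_of_nonneg (by positivity) (by norm_num), ← Real.sqrt_eq_rpow,
      ← mul_pow, ← mul_pow, ← mul_pow, Real.sqrt_sq (by positivity), mul_assoc (_ * _)]
  rw [eLpNorm_eq_lintegral_rpow_enorm_toReal (by norm_num) (by norm_num), hprod,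
    quadrilinearConstant, ← ENNReal.mul_rpow_of_nonneg _ _ (by norm_num)]
  simp only [ENNReal.toReal_ofNat, ← modulationEnergy_spaceTimeFourier]
  exact ENNReal.rpow_le_rpow (lintegral_enorm_mul_sq_le (measurable_bourgainWeight b)
    (bourgainWeight_ne_zero b) (fun _ => ENNReal.ofReal_ne_top) U₁ U₂ U₃ U₄) (by norm_num)

end BourgainNorm

end AiryQuadrilinear

/-- Quadrilinear estimate (Lemma 2.3 of the paper):
`‖U₁U₂U₃U₄‖_{L²(ℝ²)} ≤ C ∏ ‖U_i‖_{X^{0,b}}` for `b > 1/2`. -/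
theorem quadrilinear_L2 (b : ℝ) (hb : 1 / 2 < b) :
    ∃ C > 0, ∀ U₁ U₂ U₃ U₄ : SchwartzMap (ℝ × ℝ) ℂ,
      eLpNorm (fun p : ℝ × ℝ => U₁ p * U₂ p * U₃ p * U₄ p) 2 volume ≤
        ENNReal.ofReal (C *
          ((∫ p : ℝ × ℝ, (1 + |p.2 - p.1 ^ 3|) ^ (2 * b) *
            ‖∫ q : ℝ × ℝ, Complex.exp (-Complex.I * (q.1 * p.1 + q.2 * p.2)) * U₁ q‖ ^ 2) ^
            ((1 : ℝ) / 2) *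
          (∫ p : ℝ × ℝ, (1 + |p.2 - p.1 ^ 3|) ^ (2 * b) *
            ‖∫ q : ℝ × ℝ, Complex.exp (-Complex.I * (q.1 * p.1 + q.2 * p.2)) * U₂ q‖ ^ 2) ^
            ((1 : ℝ) / 2) *
          (∫ p : ℝ × ℝ, (1 + |p.2 - p.1 ^ 3|) ^ (2 * b) *
            ‖∫ q : ℝ × ℝ, Complex.exp (-Complex.I * (q.1 * p.1 + q.2 * p.2)) * U₃ q‖ ^ 2) ^
            ((1 : ℝ) / 2) *
          (∫ p : ℝ × ℝ, (1 + |p.2 - p.1 ^ 3|) ^ (2 * b) *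
            ‖∫ q : ℝ × ℝ, Complex.exp (-Complex.I * (q.1 * p.1 + q.2 * p.2)) * U₄ q‖ ^ 2) ^
            ((1 : ℝ) / 2))) := by
  obtain ⟨C, hC, hKC⟩ : ∃ C > 0, AiryQuadrilinear.quadrilinearConstant b ≤ ENNReal.ofReal C :=
    ⟨(AiryQuadrilinear.quadrilinearConstant b).toReal + 1, by positivity,
      (ENNReal.le_ofReal_iff_toReal_le (AiryQuadrilinear.quadrilinearConstant_ne_top hb)
        (by positivity)).2 (by linarith)⟩
  refine ⟨C, hC, fun U₁ U₂ U₃ U₄ => ?_⟩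
  rw [ENNReal.ofReal_mul hC.le]
  exact (AiryQuadrilinear.eLpNorm_mul_le_quadrilinearConstant_mul b U₁ U₂ U₃ U₄).trans
    (mul_le_mul_left hKC _)
end

section
/- Let σ ≥ 0, s ∈ ℝ and −1/2 < b < 1/2. There exists a constant C > 0, depending only on b, such that for every interval I ⊂ ℝ and every Schwartz function u : ℝ² → ℂ one has ‖χ_I u‖_{X^{σ,s,b}} ≤ C ‖u‖_{X^{σ,s,b}}, where (χ_I u)(x,t) = u(x,t) if t ∈ I and 0 otherwise. -/
open MeasureTheory ENNReal

open scoped FourierTransform Real Topology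

/-!
After a Fourier transform in space and division by the oscillation `e^{itξ³}`, the claim reduces to
a one-dimensional one for each `ξ`: multiplication by `1_I` is bounded, uniformly in `I`, on the
functions of `t` whose Fourier transform times `W(η) = (1 + 2π|η|)^b` lies in `L²`.

On the Fourier side, multiplication by `1_I` is convolution with a kernel bounded by `1 / (π|z|)`.
Its commutator with multiplication by `W` therefore has a kernel of size
`|W x - W y| / (π|x - y|)`, and with `m = 1 + 2π|x|`, `n = 1 + 2π|y|` this is at most `W y` times a
symmetric kernel in `m, n` that is homogeneous of degree `-1`. Schur's test with the weight
`m^{-1/2}` bounds the latter on `L²` as long as `|b| < 1/2`. What remains is multiplication by `1_I`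
on unweighted `L²`, where Plancherel's theorem gives norm at most `1`.

Since `ŵ` need not be integrable, the argument is run on `e^{-|η|²/c} ŵ(η)`, and Fatou's lemma lets
`c → ∞`. The same lemma reduces unbounded intervals to bounded ones.
-/

section SchurTest

variable {α β : Type*} [MeasurableSpace α] [MeasurableSpace β] {μ : Measure α} {ν : Measure β}

theorem sq_lintegral_mul_le_weighted {k q g : α → ℝ≥0∞} (hk : AEMeasurable k μ)
    (hq : AEMeasurable q μ) (hg : AEMeasurable g μ) (hq0 : ∀ y, q y ≠ 0) (hqt : ∀ y, q y ≠ ∞) :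
    (∫⁻ y, k y * g y ∂μ) ^ 2 ≤ (∫⁻ y, k y * q y ∂μ) * ∫⁻ y, k y * (q y)⁻¹ * g y ^ 2 ∂μ := by
  set f₁ : α → ℝ≥0∞ := fun y ↦ (k y * q y) ^ (1 / 2 : ℝ)
  set f₂ : α → ℝ≥0∞ := fun y ↦ (k y * (q y)⁻¹) ^ (1 / 2 : ℝ) * g y
  have half_sq (a : ℝ≥0∞) : (a ^ (1 / 2 : ℝ)) ^ (2 : ℝ) = a := by
    rw [← ENNReal.rpow_mul]; norm_num
  have split (y : α) : k y * g y = f₁ y * f₂ y := by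
    have hk_sq : k y * q y * (k y * (q y)⁻¹) = k y ^ (2 : ℝ) := by
      rw [mul_mul_mul_comm, ENNReal.mul_inv_cancel (hq0 y) (hqt y), mul_one, ENNReal.rpow_two, sq]
    rw [← mul_assoc, ← ENNReal.mul_rpow_of_nonneg _ _ (by norm_num), hk_sq, ← ENNReal.rpow_mul]
    norm_num
  have holder := ENNReal.lintegral_mul_le_Lp_mul_Lq μ Real.HolderConjugate.two_two
    (f := f₁) (g := f₂) (by fun_prop) (by fun_prop)
  calc (∫⁻ y, k y * g y ∂μ) ^ 2 = (∫⁻ y, (f₁ * f₂) y ∂μ) ^ (2 : ℝ) := by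
        simp_rw [split, Pi.mul_apply, ENNReal.rpow_two]
    _ ≤ ((∫⁻ y, f₁ y ^ (2 : ℝ) ∂μ) ^ (1 / 2 : ℝ) * (∫⁻ y, f₂ y ^ (2 : ℝ) ∂μ) ^ (1 / 2 : ℝ)) ^
        (2 : ℝ) := by gcongr
    _ = (∫⁻ y, k y * q y ∂μ) * ∫⁻ y, k y * (q y)⁻¹ * g y ^ 2 ∂μ := by
        simp only [f₁, f₂, ENNReal.mul_rpow_of_nonneg _ _ zero_le_two, half_sq, ENNReal.rpow_two]

theorem schur_test [SFinite μ] [SFinite ν] {K : α → β → ℝ≥0∞} {p : α → ℝ≥0∞} {q g : β → ℝ≥0∞}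
    {A B : ℝ≥0∞} (hK : Measurable K.uncurry) (hp : Measurable p) (hq : Measurable q)
    (hg : AEMeasurable g ν) (hq0 : ∀ y, q y ≠ 0) (hqt : ∀ y, q y ≠ ∞)
    (hrow : ∀ x, ∫⁻ y, K x y * q y ∂ν ≤ A * p x) (hcol : ∀ y, ∫⁻ x, K x y * p x ∂μ ≤ B * q y) :
    ∫⁻ x, (∫⁻ y, K x y * g y ∂ν) ^ 2 ∂μ ≤ A * B * ∫⁻ y, g y ^ 2 ∂ν := by
  have hKx (x : α) : Measurable (K x) := hK.of_uncurry_left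
  have hKy (y : β) : Measurable fun x ↦ K x y := hK.of_uncurry_right
  calc ∫⁻ x, (∫⁻ y, K x y * g y ∂ν) ^ 2 ∂μ
      ≤ ∫⁻ x, (A * p x) * ∫⁻ y, K x y * (q y)⁻¹ * g y ^ 2 ∂ν ∂μ := by
        gcongr with x
        refine (sq_lintegral_mul_le_weighted (hKx x).aemeasurable hq.aemeasurable
          hg hq0 hqt).trans ?_
        gcongr
        exact hrow x
    _ = ∫⁻ x, ∫⁻ y, A * p x * (K x y * (q y)⁻¹ * g y ^ 2) ∂ν ∂μ := by
        congr with x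
        exact (lintegral_const_mul'' _ (by fun_prop)).symm
    _ = ∫⁻ y, ∫⁻ x, A * p x * (K x y * (q y)⁻¹ * g y ^ 2) ∂μ ∂ν := by
        refine lintegral_lintegral_swap ?_
        have hK' : Measurable fun z : α × β ↦ K z.1 z.2 := hK
        have hg' : AEMeasurable (fun z : α × β ↦ g z.2) (μ.prod ν) := hg.comp_snd
        simp only [Function.uncurry_def]
        fun_prop
    _ = ∫⁻ y, A * (q y)⁻¹ * g y ^ 2 * ∫⁻ x, K x y * p x ∂μ ∂ν := by
        congr with y
        rw [← lintegral_const_mul _ (by fun_prop)]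
        congr with x
        ring
    _ ≤ ∫⁻ y, A * (q y)⁻¹ * g y ^ 2 * (B * q y) ∂ν := by
        gcongr with y
        exact hcol y
    _ = ∫⁻ y, A * B * g y ^ 2 ∂ν := by
        congr with y
        calc A * (q y)⁻¹ * g y ^ 2 * (B * q y) = A * B * g y ^ 2 * ((q y)⁻¹ * q y) := by ring
          _ = A * B * g y ^ 2 := by rw [ENNReal.inv_mul_cancel (hq0 y) (hqt y), mul_one]
    _ = A * B * ∫⁻ y, g y ^ 2 ∂ν := lintegral_const_mul'' _ (by fun_prop)

end SchurTest

section PowerKernel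

open Set

theorem abs_rpow_sub_rpow_le {a m n : ℝ} (ha0 : 0 ≤ a) (ha1 : a ≤ 1) (hm : 0 < m) (hn : 0 < n) :
    |m ^ a - n ^ a| ≤ |m - n| * max m n ^ (a - 1) := by
  wlog hnm : n ≤ m generalizing m n
  · rw [abs_sub_comm (m ^ a), abs_sub_comm m, max_comm]
    exact this hn hm (le_of_not_ge hnm)
  have hpow : n ^ a ≤ m ^ a := Real.rpow_le_rpow hn.le hnm ha0
  have hslope : n * m ^ (a - 1) ≤ n ^ a := by
    calc n * m ^ (a - 1) ≤ n * n ^ (a - 1) := by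
          gcongr n * ?_
          exact Real.rpow_le_rpow_of_nonpos hn hnm (by linarith)
      _ = n ^ a := by rw [Real.rpow_sub_one hn.ne', mul_div_cancel₀ _ hn.ne']
  have hm_pow : m * m ^ (a - 1) = m ^ a := by
    rw [Real.rpow_sub_one hm.ne', mul_div_cancel₀ _ hm.ne']
  rw [abs_of_nonneg (sub_nonneg.2 hpow), abs_of_nonneg (sub_nonneg.2 hnm), max_eq_left hnm,
    sub_mul, hm_pow]
  linarith

/-- The kernel `min(m,n)^(-β) max(m,n)^(β-1)` on `(0,∞)`, symmetric and homogeneous of degree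
`-1`; for `β < 1/2` it defines a bounded operator on `L²(0,∞)`. -/
noncomputable def powerKernel (β m n : ℝ) : ℝ :=
  min m n ^ (-β) * max m n ^ (β - 1)

theorem powerKernel_comm (β m n : ℝ) : powerKernel β m n = powerKernel β n m := by
  rw [powerKernel, powerKernel, min_comm, max_comm]

theorem powerKernel_nonneg (β : ℝ) {m n : ℝ} (hm : 0 ≤ m) (hn : 0 ≤ n) :
    0 ≤ powerKernel β m n :=
  mul_nonneg (Real.rpow_nonneg (le_min hm hn) _) (Real.rpow_nonneg (le_max_of_le_left hm) _)

@[fun_prop]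
theorem measurable_powerKernel (β : ℝ) : Measurable fun p : ℝ × ℝ ↦ powerKernel β p.1 p.2 := by
  unfold powerKernel
  fun_prop

theorem abs_rpow_sub_rpow_le_powerKernel {b m n : ℝ} (hb : |b| ≤ 1) (hm : 0 < m) (hn : 0 < n) :
    |m ^ b - n ^ b| ≤ |m - n| * powerKernel |b| m n * n ^ b := by
  have hmin : 0 < min m n := lt_min hm hn
  have hkey := abs_rpow_sub_rpow_le (abs_nonneg b) hb hm hn
  have hdecr {x : ℝ} (hx : min m n ≤ x) : x ^ (-|b|) ≤ min m n ^ (-|b|) :=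
    Real.rpow_le_rpow_of_nonpos hmin hx (neg_nonpos.2 (abs_nonneg b))
  rcases le_total 0 b with hb0 | hb0
  · rw [abs_of_nonneg hb0] at hkey hdecr ⊢
    calc |m ^ b - n ^ b| ≤ |m - n| * max m n ^ (b - 1) * (n ^ (-b) * n ^ b) := by
          rwa [Real.rpow_neg hn.le, inv_mul_cancel₀ (by positivity), mul_one]
      _ ≤ |m - n| * max m n ^ (b - 1) * (min m n ^ (-b) * n ^ b) := by
          gcongr _ * (?_ * _)
          exact hdecr (min_le_right m n)
      _ = |m - n| * powerKernel b m n * n ^ b := by rw [powerKernel]; ring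
  · obtain ⟨a, rfl⟩ : ∃ a, b = -a := ⟨-b, (neg_neg b).symm⟩
    rw [abs_neg, abs_of_nonneg (neg_nonpos.1 hb0)] at hkey hdecr ⊢
    have hdiff : m ^ (-a) - n ^ (-a) = -(m ^ a - n ^ a) * (m ^ (-a) * n ^ (-a)) := by
      rw [Real.rpow_neg hm.le, Real.rpow_neg hn.le]
      field_simp
      ring
    calc |m ^ (-a) - n ^ (-a)| = |m ^ a - n ^ a| * (m ^ (-a) * n ^ (-a)) := by
          rw [hdiff, abs_mul, abs_neg, abs_of_pos (a := m ^ (-a) * n ^ (-a)) (by positivity)]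
      _ ≤ |m - n| * max m n ^ (a - 1) * (min m n ^ (-a) * n ^ (-a)) := by
          gcongr ?_ * (?_ * _)
          exact hdecr (min_le_left m n)
      _ = |m - n| * powerKernel a m n * n ^ (-a) := by rw [powerKernel]; ring

theorem lintegral_Ioc_rpow {r m : ℝ} (hr : -1 < r) (hm : 0 ≤ m) :
    ∫⁻ n in Ioc 0 m, ENNReal.ofReal (n ^ r) = ENNReal.ofReal (m ^ (r + 1) / (r + 1)) := by
  have hint : IntegrableOn (fun n : ℝ ↦ n ^ r) (Ioc 0 m) :=
    (intervalIntegral.intervalIntegrable_rpow' hr).1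
  have hpos : 0 ≤ᵐ[volume.restrict (Ioc 0 m)] fun n : ℝ ↦ n ^ r :=
    ae_restrict_of_forall_mem measurableSet_Ioc fun n hn ↦ Real.rpow_nonneg hn.1.le r
  rw [← ofReal_integral_eq_lintegral_ofReal hint hpos, ← intervalIntegral.integral_of_le hm,
    integral_rpow (Or.inl hr), Real.zero_rpow (by linarith), sub_zero]

theorem lintegral_Ioi_rpow {r m : ℝ} (hr : r < -1) (hm : 0 < m) :
    ∫⁻ n in Ioi m, ENNReal.ofReal (n ^ r) = ENNReal.ofReal (-m ^ (r + 1) / (r + 1)) := by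
  have hpos : 0 ≤ᵐ[volume.restrict (Ioi m)] fun n : ℝ ↦ n ^ r :=
    ae_restrict_of_forall_mem measurableSet_Ioi fun n hn ↦ Real.rpow_nonneg (hm.trans hn).le r
  rw [← ofReal_integral_eq_lintegral_ofReal (integrableOn_Ioi_rpow_of_lt hr hm) hpos,
    integral_Ioi_rpow_of_lt hr hm]

theorem lintegral_Ioi_powerKernel_mul_rpow {β m : ℝ} (hβ : β < 1 / 2) (hm : 0 < m) :
    ∫⁻ n in Ioi 0, ENNReal.ofReal (powerKernel β m n * n ^ (-(1 / 2) : ℝ)) =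
      ENNReal.ofReal (2 / (1 / 2 - β) * m ^ (-(1 / 2) : ℝ)) := by
  have hβ' : 0 < 1 / 2 - β := by linarith
  have hsmall : ∫⁻ n in Ioc 0 m, ENNReal.ofReal (powerKernel β m n * n ^ (-(1 / 2) : ℝ)) =
      ENNReal.ofReal (m ^ (-(1 / 2) : ℝ) / (1 / 2 - β)) := by
    have hkernel : ∀ n ∈ Ioc 0 m, ENNReal.ofReal (powerKernel β m n * n ^ (-(1 / 2) : ℝ)) =
        ENNReal.ofReal (m ^ (β - 1)) * ENNReal.ofReal (n ^ (-β + -(1 / 2))) := fun n hn ↦ by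
      rw [← ENNReal.ofReal_mul (by positivity), powerKernel, min_eq_right hn.2, max_eq_left hn.2,
        Real.rpow_add hn.1]
      ring_nf
    rw [setLIntegral_congr_fun measurableSet_Ioc hkernel, lintegral_const_mul _ (by fun_prop),
      lintegral_Ioc_rpow (by linarith) hm.le, ← ENNReal.ofReal_mul (by positivity),
      mul_div_assoc', ← Real.rpow_add hm]
    ring_nf
  have hlarge : ∫⁻ n in Ioi m, ENNReal.ofReal (powerKernel β m n * n ^ (-(1 / 2) : ℝ)) =
      ENNReal.ofReal (m ^ (-(1 / 2) : ℝ) / (1 / 2 - β)) := by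
    have hkernel : ∀ n ∈ Ioi m, ENNReal.ofReal (powerKernel β m n * n ^ (-(1 / 2) : ℝ)) =
        ENNReal.ofReal (m ^ (-β)) * ENNReal.ofReal (n ^ (β - 1 + -(1 / 2))) := fun n hn ↦ by
      rw [← ENNReal.ofReal_mul (by positivity), powerKernel, min_eq_left (le_of_lt hn),
        max_eq_right (le_of_lt hn), Real.rpow_add (hm.trans hn), mul_assoc]
    rw [setLIntegral_congr_fun measurableSet_Ioi hkernel, lintegral_const_mul _ (by fun_prop),
      lintegral_Ioi_rpow (by linarith) hm, ← ENNReal.ofReal_mul (by positivity), neg_div,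
      ← div_neg, mul_div_assoc', ← Real.rpow_add hm]
    ring_nf
  rw [← Ioc_union_Ioi_eq_Ioi hm.le, lintegral_union measurableSet_Ioi Ioc_disjoint_Ioi_same,
    hsmall, hlarge, ← ENNReal.ofReal_add (by positivity) (by positivity)]
  ring_nf

end PowerKernel

section FreqWeight

open Set

theorem sq_eLpNorm_two {α ε : Type*} [MeasurableSpace α] [ENorm ε] (f : α → ε) (μ : Measure α) :
    eLpNorm f 2 μ ^ 2 = ∫⁻ x, ‖f x‖ₑ ^ 2 ∂μ := by
  simpa using eLpNorm_nnreal_pow_eq_lintegral (f := f) (μ := μ) (p := 2) two_ne_zero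

theorem lintegral_comp_mul_add (F : ℝ → ℝ≥0∞) {c : ℝ} (hc : c ≠ 0) (d : ℝ) :
    ∫⁻ y, F (c * y + d) = ENNReal.ofReal |c⁻¹| * ∫⁻ y, F y := by
  have hscale : ∫⁻ y, F (c * y + d) = ∫⁻ y, F (y + d) ∂(Measure.map (c * ·) volume) :=
    (lintegral_map_equiv (F <| · + d) (Homeomorph.mulLeft₀ c hc).toMeasurableEquiv).symm
  rw [hscale, Real.map_volume_mul_left hc, lintegral_smul_measure, smul_eq_mul,
    lintegral_add_right_eq_self]

theorem lintegral_comp_one_add_mul_abs_le {F : ℝ → ℝ≥0∞} (hF : Measurable F) {c : ℝ} (hc : 0 < c) :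
    ∫⁻ y, F (1 + c * |y|) ≤ ENNReal.ofReal (2 / c) * ∫⁻ m in Ioi 0, F m := by
  set G : ℝ → ℝ≥0∞ := (Ioi 0).indicator F
  have hG : Measurable G := hF.indicator measurableSet_Ioi
  have hG_eq (y : ℝ) : F (1 + c * |y|) = G (c * |y| + 1) := by
    have hmem : c * |y| + 1 ∈ Ioi 0 := mem_Ioi.2 (by positivity)
    rw [add_comm]
    exact (indicator_of_mem hmem F).symm
  have hfold (y : ℝ) : F (1 + c * |y|) ≤ G (c * y + 1) + G (-c * y + 1) := by
    rw [hG_eq]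
    rcases abs_choice y with h | h <;> rw [h]
    · exact le_self_add
    · rw [mul_neg, ← neg_mul]
      exact le_add_self
  calc ∫⁻ y, F (1 + c * |y|) ≤ ∫⁻ y, G (c * y + 1) + G (-c * y + 1) := lintegral_mono hfold
    _ = ENNReal.ofReal (2 / c) * ∫⁻ m in Ioi 0, F m := by
        rw [lintegral_add_left (by fun_prop), lintegral_comp_mul_add G hc.ne',
          lintegral_comp_mul_add G (neg_ne_zero.2 hc.ne'), inv_neg, abs_neg, ← add_mul,
          ← ENNReal.ofReal_add (abs_nonneg _) (abs_nonneg _), abs_of_pos (inv_pos.2 hc),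
          lintegral_indicator measurableSet_Ioi]
        ring_nf

/-- The inhomogeneous weight `(1 + |τ|)^b` at the angular frequency `τ = 2πη`; the factor `2π`
matches the phase `2πtη` in Mathlib's Fourier transform. -/
noncomputable def freqWeight (b η : ℝ) : ℝ :=
  (1 + 2 * π * |η|) ^ b

theorem freqWeight_pos (b η : ℝ) : 0 < freqWeight b η := by
  unfold freqWeight
  positivity

@[fun_prop]
theorem continuous_freqWeight (b : ℝ) : Continuous (freqWeight b) := by
  unfold freqWeight
  exact Continuous.rpow_const (by fun_prop) fun η ↦ Or.inl (by positivity)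

/-- The kernel `powerKernel` pulled back to frequencies under `η ↦ 1 + 2π|η|`. -/
noncomputable def freqKernel (β x y : ℝ) : ℝ :=
  powerKernel β (1 + 2 * π * |x|) (1 + 2 * π * |y|)

theorem freqKernel_comm (β x y : ℝ) : freqKernel β x y = freqKernel β y x :=
  powerKernel_comm ..

theorem freqKernel_nonneg (β x y : ℝ) : 0 ≤ freqKernel β x y :=
  powerKernel_nonneg β (by positivity) (by positivity)

@[fun_prop]
theorem measurable_freqKernel (β : ℝ) : Measurable fun p : ℝ × ℝ ↦ freqKernel β p.1 p.2 := by
  unfold freqKernel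
  fun_prop

theorem abs_freqWeight_sub_le {b : ℝ} (hb : |b| ≤ 1) (x y : ℝ) :
    |freqWeight b x - freqWeight b y| ≤ 2 * π * |x - y| * freqKernel |b| x y * freqWeight b y := by
  have hdiff : |(1 + 2 * π * |x|) - (1 + 2 * π * |y|)| ≤ 2 * π * |x - y| := by
    rw [add_sub_add_left_eq_sub, ← mul_sub, abs_mul, abs_of_pos Real.two_pi_pos]
    exact mul_le_mul_of_nonneg_left (abs_abs_sub_abs_le x y) Real.two_pi_pos.le
  refine (abs_rpow_sub_rpow_le_powerKernel hb (by positivity) (by positivity)).trans ?_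
  exact mul_le_mul_of_nonneg_right (mul_le_mul_of_nonneg_right hdiff (freqKernel_nonneg |b| x y))
    (freqWeight_pos b y).le

theorem lintegral_freqKernel_mul_freqWeight_le {β : ℝ} (hβ : β < 1 / 2) (x : ℝ) :
    ∫⁻ y, ENNReal.ofReal (freqKernel β x y) * ENNReal.ofReal (freqWeight (-(1 / 2)) y) ≤
      ENNReal.ofReal (2 / (π * (1 / 2 - β))) * ENNReal.ofReal (freqWeight (-(1 / 2)) x) := by
  have hβ' : 0 < 1 / 2 - β := by linarith
  simp_rw [← ENNReal.ofReal_mul (freqKernel_nonneg β x _)]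
  refine (lintegral_comp_one_add_mul_abs_le
    (F := fun n ↦ ENNReal.ofReal (powerKernel β (1 + 2 * π * |x|) n * n ^ (-(1 / 2) : ℝ)))
    (by fun_prop) Real.two_pi_pos).trans_eq ?_
  rw [lintegral_Ioi_powerKernel_mul_rpow hβ (by positivity),
    ← ENNReal.ofReal_mul (by positivity), ← ENNReal.ofReal_mul (by positivity), freqWeight]
  congr 1
  field_simp

theorem eLpNorm_lintegral_freqKernel_le {β : ℝ} (hβ : β < 1 / 2) {g : ℝ → ℝ≥0∞}
    (hg : AEMeasurable g) :
    eLpNorm (fun x ↦ ∫⁻ y, ENNReal.ofReal (freqKernel β x y) * g y) 2 ≤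
      ENNReal.ofReal (2 / (π * (1 / 2 - β))) * eLpNorm g 2 := by
  have schur := schur_test (μ := volume) (ν := volume)
    (K := fun x y ↦ ENNReal.ofReal (freqKernel β x y))
    (p := fun x ↦ ENNReal.ofReal (freqWeight (-(1 / 2)) x))
    (q := fun y ↦ ENNReal.ofReal (freqWeight (-(1 / 2)) y))
    (by simp only [Function.uncurry_def]; fun_prop) (by fun_prop) (by fun_prop) hg
    (fun y ↦ (ENNReal.ofReal_pos.2 (freqWeight_pos _ y)).ne') (fun _ ↦ ENNReal.ofReal_ne_top)
    (lintegral_freqKernel_mul_freqWeight_le hβ)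
    fun y ↦ by
      simpa only [freqKernel_comm β _ y] using lintegral_freqKernel_mul_freqWeight_le hβ y
  refine (ENNReal.pow_le_pow_left_iff two_ne_zero).1 ?_
  simpa only [mul_pow, sq_eLpNorm_two, enorm_eq_self, ← sq] using schur

end FreqWeight

section Fourier

variable {V : Type*} [NormedAddCommGroup V] [InnerProductSpace ℝ V]

/-- The modulation `t ↦ e^{-2πi⟪t,x⟫} χ(t)`; it turns `𝓕 (χ * g) x` into a pairing with `g`, to
which the self-adjointness of `𝓕` applies. -/
noncomputable def modulate (x : V) (χ : V → ℂ) (t : V) : ℂ :=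
  𝐞 (-inner ℝ t x) • χ t

theorem norm_modulate (x : V) (χ : V → ℂ) (t : V) : ‖modulate x χ t‖ = ‖χ t‖ :=
  Circle.norm_smul _ _

variable [MeasurableSpace V] [BorelSpace V] [FiniteDimensional ℝ V]

theorem continuous_fourier {h : V → ℂ} (hh : Integrable h) : Continuous (𝓕 h) :=
  VectorFourier.fourierIntegral_continuous Real.continuous_fourierChar continuous_inner hh

theorem continuous_fourierInv {h : V → ℂ} (hh : Integrable h) : Continuous (𝓕⁻ h) := by
  rw [Real.fourierInv_eq_fourier_comp_neg]
  exact continuous_fourier hh.comp_neg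

theorem norm_fourier_le_integral_norm (h : V → ℂ) (x : V) : ‖𝓕 h x‖ ≤ ∫ t, ‖h t‖ :=
  VectorFourier.norm_fourierIntegral_le_integral_norm ..

theorem norm_fourierInv_le_integral_norm (h : V → ℂ) (x : V) : ‖𝓕⁻ h x‖ ≤ ∫ t, ‖h t‖ :=
  VectorFourier.norm_fourierIntegral_le_integral_norm ..

theorem integrable_mul_fourier {f g : V → ℂ} (hf : Integrable f) (hg : Integrable g) :
    Integrable (f * 𝓕 g) :=
  hf.mul_bdd (continuous_fourier hg).aestronglyMeasurable
    (.of_forall (norm_fourier_le_integral_norm g))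

theorem integrable_mul_fourierInv {f g : V → ℂ} (hf : Integrable f) (hg : Integrable g) :
    Integrable (f * 𝓕⁻ g) :=
  hf.mul_bdd (continuous_fourierInv hg).aestronglyMeasurable
    (.of_forall (norm_fourierInv_le_integral_norm g))

theorem integral_fourier_mul_eq {f g : V → ℂ} (hf : Integrable f) (hg : Integrable g) :
    ∫ x, 𝓕 f x * g x = ∫ x, f x * 𝓕 g x := by
  have flip := VectorFourier.integral_fourierIntegral_smul_eq_flip (L := innerₗ V)
    Real.continuous_fourierChar continuous_inner hf hg
  rwa [flip_innerₗ] at flip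

theorem integral_fourierInv_mul_eq {f g : V → ℂ} (hf : Integrable f) (hg : Integrable g) :
    ∫ x, 𝓕⁻ f x * g x = ∫ x, f x * 𝓕⁻ g x := by
  simp_rw [Real.fourierInv_eq_fourier_comp_neg, integral_fourier_mul_eq hf.comp_neg hg,
    ← integral_neg_eq_self fun x ↦ f x * 𝓕 (fun y ↦ g (-y)) x]
  simp_rw [← Real.fourierInv_eq_fourier_comp_neg, Real.fourierInv_eq_fourier_neg, neg_neg]

theorem ae_eq_fourier_toLp {h : V → ℂ} (h1 : Integrable h) (h2 : MemLp h 2) :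
    (𝓕 (h2.toLp h) : Lp ℂ 2 volume) =ᵐ[volume] 𝓕 h := by
  refine ae_eq_of_integral_contDiff_smul_eq
    ((Lp.memLp _).locallyIntegrable one_le_two) (continuous_fourier h1).locallyIntegrable
    fun g hg hgs ↦ ?_
  have hgs' : HasCompactSupport fun x ↦ (g x : ℂ) :=
    hgs.comp_left (g := ((↑) : ℝ → ℂ)) Complex.ofReal_zero
  let ψ : SchwartzMap V ℂ := hgs'.toSchwartzMap (Complex.ofRealCLM.contDiff.comp hg)
  have hψ := congrArg (· ψ) (Lp.fourier_toTemperedDistribution_eq (h2.toLp h))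
  simp only [TemperedDistribution.fourier_apply, Lp.toTemperedDistribution_apply] at hψ
  calc ∫ x, g x • (𝓕 (h2.toLp h) : Lp ℂ 2 volume) x = ∫ x, 𝓕 ψ x • h2.toLp h x := hψ.symm
    _ = ∫ x, 𝓕 ψ x • h x := by
        refine integral_congr_ae ?_
        filter_upwards [h2.coeFn_toLp] with x hx
        rw [hx]
    _ = ∫ x, g x • 𝓕 h x := integral_fourier_mul_eq ψ.integrable h1

theorem eLpNorm_fourier_eq {h : V → ℂ} (h1 : Integrable h) (h2 : MemLp h 2) :
    eLpNorm (𝓕 h) 2 = eLpNorm h 2 := by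
  have plancherel := Lp.norm_fourier_eq (h2.toLp h)
  rw [Lp.norm_def, Lp.norm_def,
    ENNReal.toReal_eq_toReal_iff' (Lp.eLpNorm_ne_top _) (Lp.eLpNorm_ne_top _)] at plancherel
  rwa [← eLpNorm_congr_ae (ae_eq_fourier_toLp h1 h2), ← eLpNorm_congr_ae h2.coeFn_toLp]

theorem eLpNorm_fourierInv_eq {h : V → ℂ} (h1 : Integrable h) (h2 : MemLp h 2) :
    eLpNorm (𝓕⁻ h) 2 = eLpNorm h 2 := by
  have hneg : MeasurePreserving (fun x : V ↦ -x) := Measure.measurePreserving_neg volume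
  rw [Real.fourierInv_eq_fourier_comp_neg, eLpNorm_fourier_eq h1.comp_neg
    (h2.comp_measurePreserving hneg)]
  exact eLpNorm_comp_measurePreserving h2.1 hneg

theorem integrable_modulate {χ : V → ℂ} (hχ : Integrable χ) (x : V) :
    Integrable (modulate x χ) :=
  (Real.fourierIntegral_convergent_iff x).2 hχ

theorem fourier_mul_eq_integral_modulate (χ g : V → ℂ) (x : V) :
    𝓕 (χ * g) x = ∫ t, modulate x χ t * g t := by
  simp_rw [Real.fourier_eq, modulate, Pi.mul_apply, Circle.smul_def, smul_eq_mul, mul_assoc]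

theorem fourierInv_modulate (χ : V → ℂ) (x y : V) : 𝓕⁻ (modulate x χ) y = 𝓕 χ (x - y) := by
  simp_rw [Real.fourierInv_eq, Real.fourier_eq, modulate, smul_smul, ← AddChar.map_add_eq_mul,
    inner_sub_right, neg_sub, sub_eq_add_neg]

theorem fourier_mul_fourierInv {χ f : V → ℂ} (hχ : Integrable χ) (hf : Integrable f) (x : V) :
    𝓕 (χ * 𝓕⁻ f) x = ∫ y, 𝓕 χ (x - y) * f y := by
  simp_rw [fourier_mul_eq_integral_modulate, ← fourierInv_modulate,
    integral_fourierInv_mul_eq (integrable_modulate hχ x) hf]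

theorem tendsto_fourier_of_dominated {F : ℕ → V → ℂ} {f : V → ℂ} {bound : V → ℝ}
    (hF : ∀ n, AEStronglyMeasurable (F n)) (hbound : Integrable bound)
    (hFb : ∀ n, ∀ᵐ t, ‖F n t‖ ≤ bound t) (hlim : ∀ᵐ t, Filter.Tendsto (F · t) .atTop (𝓝 (f t)))
    (x : V) : Filter.Tendsto (fun n ↦ 𝓕 (F n) x) .atTop (𝓝 (𝓕 f x)) := by
  simp_rw [Real.fourier_eq]
  refine tendsto_integral_of_dominated_convergence bound (fun n ↦ ?_) hbound (fun n ↦ ?_) ?_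
  · have hchar : Continuous fun t ↦ 𝐞 (-inner ℝ t x) := by fun_prop
    exact hchar.aestronglyMeasurable.smul (hF n)
  · simpa only [Circle.norm_smul] using hFb n
  · filter_upwards [hlim] with t ht using ht.const_smul _

end Fourier

section GaussianRegularisation

open Filter Module

variable (V : Type*) [NormedAddCommGroup V]

/-- The Gaussian `e^{-‖y‖²/c}`, a multiplier tending to `1` as `c → ∞` which makes Fourier inversion
integrals converge absolutely. -/
noncomputable def gaussianCutoff (c : ℝ) (y : V) : ℂ :=
  Complex.exp (-(c⁻¹ : ℝ) * ‖y‖ ^ 2)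

@[fun_prop]
theorem continuous_gaussianCutoff (c : ℝ) : Continuous (gaussianCutoff V c) := by
  unfold gaussianCutoff
  fun_prop

variable {V}

theorem norm_gaussianCutoff_le_one {c : ℝ} (hc : 0 ≤ c) (y : V) : ‖gaussianCutoff V c y‖ ≤ 1 := by
  rw [gaussianCutoff, ← Complex.ofReal_neg, ← Complex.ofReal_pow, ← Complex.ofReal_mul,
    Complex.norm_exp_ofReal, Real.exp_le_one_iff, neg_mul, neg_nonpos]
  positivity

variable [InnerProductSpace ℝ V] [MeasurableSpace V] [BorelSpace V] [FiniteDimensional ℝ V]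

variable (V) in
theorem integrable_gaussianCutoff {c : ℝ} (hc : 0 < c) : Integrable (gaussianCutoff V c) := by
  have := GaussianFourier.integrable_cexp_neg_mul_sq_norm_add (V := V) (b := (c⁻¹ : ℝ)) (by simpa)
    0 0
  simpa only [zero_mul, add_zero] using! this

theorem memLp_gaussianCutoff_two {c : ℝ} (hc : 0 < c) : MemLp (gaussianCutoff V c) 2 := by
  have hcont := (continuous_gaussianCutoff V c).aestronglyMeasurable (μ := volume)
  refine (memLp_two_iff_integrable_sq_norm hcont).2 ?_
  simpa only [← sq, norm_pow] using ((integrable_gaussianCutoff V hc).mul_bdd hcont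
    (.of_forall (norm_gaussianCutoff_le_one hc.le))).norm

theorem fourier_gaussianCutoff {c : ℝ} (hc : 0 < c) (z : V) :
    𝓕 (gaussianCutoff V c) z =
      (π * c) ^ (finrank ℝ V / 2 : ℂ) * Complex.exp (-π ^ 2 * c * ‖z‖ ^ 2) := by
  refine (fourier_gaussian_innerProductSpace (b := (c⁻¹ : ℝ)) (by simpa) z).trans ?_
  rw [Complex.ofReal_inv, div_inv_eq_mul, div_inv_eq_mul, mul_right_comm]

theorem integral_norm_fourier_gaussianCutoff {c : ℝ} (hc : 0 < c) :
    ∫ z, ‖𝓕 (gaussianCutoff V c) z‖ = 1 := by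
  have hnorm (z : V) : ‖𝓕 (gaussianCutoff V c) z‖ =
      (π * c) ^ (finrank ℝ V / 2 : ℝ) * Real.exp (-(π ^ 2 * c) * ‖z‖ ^ 2) := by
    rw [fourier_gaussianCutoff hc, norm_mul, ← Complex.ofReal_mul,
      Complex.norm_cpow_eq_rpow_re_of_pos (by positivity), Complex.norm_exp]
    norm_cast
    simp
  simp_rw [hnorm]
  rw [integral_const_mul, GaussianFourier.integral_rexp_neg_mul_sq_norm (by positivity),
    ← Real.mul_rpow (by positivity) (by positivity)]
  field_simp
  simp

theorem tendsto_fourier_gaussianCutoff_mul_fourierInv {h : V → ℂ} (hh : Integrable h) {v : V}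
    (hv : ContinuousAt h v) :
    Tendsto (fun c ↦ 𝓕 (gaussianCutoff V c * 𝓕⁻ h) v) atTop (𝓝 (h v)) := by
  refine (Real.tendsto_integral_gaussian_smul' hh hv).congr' ?_
  filter_upwards [eventually_gt_atTop 0] with c hc
  simp_rw [fourier_mul_fourierInv (integrable_gaussianCutoff V hc) hh, fourier_gaussianCutoff hc,
    smul_eq_mul]

theorem norm_fourier_gaussianCutoff_mul_fourierInv_le {h : V → ℂ} (hh : Integrable h) {M : ℝ}
    (hM : ∀ v, ‖h v‖ ≤ M) {c : ℝ} (hc : 0 < c) (v : V) :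
    ‖𝓕 (gaussianCutoff V c * 𝓕⁻ h) v‖ ≤ M := by
  have hint : Integrable fun z ↦ ‖𝓕 (gaussianCutoff V c) z‖ :=
    .of_integral_ne_zero (by simp [integral_norm_fourier_gaussianCutoff hc])
  rw [fourier_mul_fourierInv (integrable_gaussianCutoff V hc) hh]
  calc ‖∫ y, 𝓕 (gaussianCutoff V c) (v - y) * h y‖
      ≤ ∫ y, ‖𝓕 (gaussianCutoff V c) (v - y)‖ * M := by
        refine norm_integral_le_of_norm_le ((hint.comp_sub_left v).mul_const M) (.of_forall ?_)
        intro y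
        rw [norm_mul]
        gcongr
        exact hM y
    _ = M := by
        rw [integral_mul_const, integral_sub_left_eq_self (fun z ↦ ‖𝓕 (gaussianCutoff V c) z‖),
          integral_norm_fourier_gaussianCutoff hc, one_mul]

theorem fourier_mul_fourierInv_gaussianCutoff_mul_fourier {χ w : V → ℂ} (hχ : Integrable χ)
    (hw : Integrable w) {c : ℝ} (hc : 0 < c) (x : V) :
    𝓕 (χ * 𝓕⁻ (gaussianCutoff V c * 𝓕 w)) x =
      ∫ t, 𝓕 (gaussianCutoff V c * 𝓕⁻ (modulate x χ)) t * w t := by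
  have hχx := integrable_modulate hχ x
  have hcut_w := integrable_mul_fourier (integrable_gaussianCutoff V hc) hw
  have hcut_χ := integrable_mul_fourierInv (integrable_gaussianCutoff V hc) hχx
  rw [fourier_mul_eq_integral_modulate, ← integral_fourierInv_mul_eq hχx hcut_w,
    integral_fourier_mul_eq hcut_χ hw]
  congr with y
  simp only [Pi.mul_apply]
  ring

theorem tendsto_fourier_mul_fourierInv_gaussianCutoff_mul_fourier {χ w : V → ℂ}
    (hχ : Integrable χ) {M : ℝ} (hM : ∀ t, ‖χ t‖ ≤ M) (hχc : ∀ᵐ t, ContinuousAt χ t)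
    (hw : Integrable w) (x : V) :
    Tendsto (fun c ↦ 𝓕 (χ * 𝓕⁻ (gaussianCutoff V c * 𝓕 w)) x) atTop (𝓝 (𝓕 (χ * w) x)) := by
  have hχx := integrable_modulate hχ x
  have hMx (t : V) : ‖modulate x χ t‖ ≤ M := (norm_modulate x χ t).trans_le (hM t)
  have hχxc : ∀ᵐ t, ContinuousAt (modulate x χ) t := by
    filter_upwards [hχc] with t ht
    have hchar : Continuous fun t : V ↦ 𝐞 (-inner ℝ t x) := by fun_prop
    exact hchar.continuousAt.smul ht
  rw [fourier_mul_eq_integral_modulate]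
  refine (tendsto_integral_filter_of_dominated_convergence
    (F := fun c t ↦ 𝓕 (gaussianCutoff V c * 𝓕⁻ (modulate x χ)) t * w t)
    (fun t ↦ M * ‖w t‖) ?_ ?_ (hw.norm.const_mul M) ?_).congr' ?_
  · filter_upwards [eventually_gt_atTop 0] with c hc
    exact (continuous_fourier (integrable_mul_fourierInv (integrable_gaussianCutoff V hc)
      hχx)).aestronglyMeasurable.mul hw.1
  · filter_upwards [eventually_gt_atTop 0] with c hc
    filter_upwards with t
    rw [norm_mul]
    gcongr
    exact norm_fourier_gaussianCutoff_mul_fourierInv_le hχx hMx hc t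
  · filter_upwards [hχxc] with t ht
    exact (tendsto_fourier_gaussianCutoff_mul_fourierInv hχx ht).mul_const (w t)
  · filter_upwards [eventually_gt_atTop 0] with c hc
    exact (fourier_mul_fourierInv_gaussianCutoff_mul_fourier hχ hw hc x).symm

end GaussianRegularisation

section Multiplier

section L2

variable {V : Type*} [NormedAddCommGroup V] [InnerProductSpace ℝ V] [MeasurableSpace V]
  [BorelSpace V] [FiniteDimensional ℝ V]

theorem eLpNorm_fourier_mul_fourierInv_le {χ g : V → ℂ} (hχ : Integrable χ) {M : ℝ}
    (hM : ∀ t, ‖χ t‖ ≤ M) (hg1 : Integrable g) (hg2 : MemLp g 2) :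
    eLpNorm (𝓕 (χ * 𝓕⁻ g)) 2 ≤ ENNReal.ofReal M * eLpNorm g 2 := by
  have hginv : MemLp (𝓕⁻ g) 2 :=
    ⟨(continuous_fourierInv hg1).aestronglyMeasurable,
      (eLpNorm_fourierInv_eq hg1 hg2).trans_lt hg2.2⟩
  have hbound : ∀ᵐ t, ‖(χ * 𝓕⁻ g) t‖ ≤ M * ‖𝓕⁻ g t‖ := .of_forall fun t ↦ by
    rw [Pi.mul_apply, norm_mul]
    gcongr
    exact hM t
  have hint := integrable_mul_fourierInv hχ hg1
  rw [eLpNorm_fourier_eq hint (hginv.of_le_mul hint.1 hbound), ← eLpNorm_fourierInv_eq hg1 hg2]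
  exact eLpNorm_le_mul_eLpNorm_of_ae_le_mul hbound 2

theorem smul_fourier_mul_fourierInv_eq_add_commutator {χ f : V → ℂ} {W : V → ℝ}
    (hχ : Integrable χ) (hf : Integrable f) (hWf : Integrable fun y ↦ W y • f y) (x : V) :
    W x • 𝓕 (χ * 𝓕⁻ f) x = 𝓕 (χ * 𝓕⁻ fun y ↦ W y • f y) x +
      ∫ y, (W x - W y) • (𝓕 χ (x - y) * f y) := by
  have hint {g : V → ℂ} (hg : Integrable g) : Integrable fun y ↦ 𝓕 χ (x - y) * g y :=
    hg.bdd_mul (c := ∫ t, ‖χ t‖)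
      ((continuous_fourier hχ).comp (continuous_sub_left x)).aestronglyMeasurable
      (.of_forall fun _ ↦ norm_fourier_le_integral_norm χ _)
  rw [fourier_mul_fourierInv hχ hf, fourier_mul_fourierInv hχ hWf, ← integral_smul,
    ← integral_add (hint hWf)]
  · simp_rw [sub_smul, mul_smul_comm, add_sub_cancel]
  · simp_rw [sub_smul]
    exact ((hint hf).smul (W x)).sub (by simpa only [mul_smul_comm] using hint hWf)

end L2

theorem enorm_commutator_freqWeight_le {b : ℝ} (hb : |b| ≤ 1) {χ : ℝ → ℂ} {A : ℝ}
    (hA : ∀ z, |z| * ‖𝓕 χ z‖ ≤ A) (f : ℝ → ℂ) (x : ℝ) :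
    ‖∫ y, (freqWeight b x - freqWeight b y) • (𝓕 χ (x - y) * f y)‖ₑ ≤
      ENNReal.ofReal (2 * π * A) *
        ∫⁻ y, ENNReal.ofReal (freqKernel |b| x y) * ‖freqWeight b y • f y‖ₑ := by
  refine (enorm_integral_le_lintegral_enorm _).trans ?_
  rw [← lintegral_const_mul' _ _ ENNReal.ofReal_ne_top]
  refine lintegral_mono fun y ↦ ?_
  have hA0 : 0 ≤ A := by simpa using hA 0
  have hk := freqKernel_nonneg |b| x y
  have hW := freqWeight_pos b y
  simp only [← ofReal_norm]
  rw [← ENNReal.ofReal_mul hk, ← ENNReal.ofReal_mul (by positivity)]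
  refine ENNReal.ofReal_le_ofReal ?_
  rw [norm_smul, norm_smul, norm_mul, Real.norm_eq_abs, Real.norm_of_nonneg hW.le]
  calc |freqWeight b x - freqWeight b y| * (‖𝓕 χ (x - y)‖ * ‖f y‖)
      ≤ 2 * π * |x - y| * freqKernel |b| x y * freqWeight b y * (‖𝓕 χ (x - y)‖ * ‖f y‖) := by
        gcongr
        exact abs_freqWeight_sub_le hb x y
    _ = 2 * π * (|x - y| * ‖𝓕 χ (x - y)‖) * (freqKernel |b| x y * (freqWeight b y * ‖f y‖)) := by
        ring
    _ ≤ 2 * π * A * (freqKernel |b| x y * (freqWeight b y * ‖f y‖)) := by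
        gcongr
        exact hA _

theorem eLpNorm_commutator_freqWeight_le {b : ℝ} (hb : |b| < 1 / 2) {χ : ℝ → ℂ} {A : ℝ}
    (hA : ∀ z, |z| * ‖𝓕 χ z‖ ≤ A) {f : ℝ → ℂ} (hf : AEStronglyMeasurable f) :
    eLpNorm (fun x ↦ ∫ y, (freqWeight b x - freqWeight b y) • (𝓕 χ (x - y) * f y)) 2 ≤
      ENNReal.ofReal (4 * A / (1 / 2 - |b|)) * eLpNorm (fun y ↦ freqWeight b y • f y) 2 := by
  have hA0 : 0 ≤ A := by simpa using hA 0
  have hb' : 0 < 1 / 2 - |b| := sub_pos.2 hb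
  have hWf : AEMeasurable fun y ↦ ‖freqWeight b y • f y‖ₑ :=
    ((continuous_freqWeight b).aestronglyMeasurable.smul hf).enorm
  have hpointwise := enorm_commutator_freqWeight_le (hb.le.trans (by norm_num)) hA f
  have schur := eLpNorm_lintegral_freqKernel_le hb hWf
  rw [eLpNorm_enorm] at schur
  refine (eLpNorm_le_mul_eLpNorm_of_ae_le_mul' (c := (2 * π * A).toNNReal)
    (.of_forall hpointwise) 2).trans ((mul_le_mul_right schur _).trans_eq ?_)
  have hconst : 2 * π * A * (2 / (π * (1 / 2 - |b|))) = 4 * A / (1 / 2 - |b|) := by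
    field_simp
    ring
  rw [← mul_assoc, ← hconst, ENNReal.ofReal_mul (by positivity)]
  rfl

theorem eLpNorm_freqWeight_smul_fourier_mul_fourierInv_le {b : ℝ} (hb : |b| < 1 / 2) {χ f : ℝ → ℂ}
    (hχ : Integrable χ) {M A : ℝ} (hM : ∀ t, ‖χ t‖ ≤ M) (hA : ∀ z, |z| * ‖𝓕 χ z‖ ≤ A)
    (hf : Integrable f) (hWf1 : Integrable fun y ↦ freqWeight b y • f y)
    (hWf2 : MemLp (fun y ↦ freqWeight b y • f y) 2) :
    eLpNorm (fun x ↦ freqWeight b x • 𝓕 (χ * 𝓕⁻ f) x) 2 ≤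
      ENNReal.ofReal (M + 4 * A / (1 / 2 - |b|)) * eLpNorm (fun y ↦ freqWeight b y • f y) 2 := by
  have hM0 : 0 ≤ M := (norm_nonneg _).trans (hM 0)
  have hA0 : 0 ≤ A := by simpa using hA 0
  have hb' : 0 < 1 / 2 - |b| := sub_pos.2 hb
  have hcont := continuous_fourier (integrable_mul_fourierInv hχ hf)
  have hcont' := continuous_fourier (integrable_mul_fourierInv hχ hWf1)
  have hcomm : AEStronglyMeasurable
      fun x ↦ ∫ y, (freqWeight b x - freqWeight b y) • (𝓕 χ (x - y) * f y) := by
    simp_rw [← sub_eq_of_eq_add'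
      (smul_fourier_mul_fourierInv_eq_add_commutator hχ hf hWf1 _)]
    exact (((continuous_freqWeight b).smul hcont).sub hcont').aestronglyMeasurable
  simp_rw [smul_fourier_mul_fourierInv_eq_add_commutator hχ hf hWf1]
  refine (eLpNorm_add_le hcont'.aestronglyMeasurable hcomm one_le_two).trans ?_
  rw [ENNReal.ofReal_add hM0 (by positivity), add_mul]
  exact add_le_add (eLpNorm_fourier_mul_fourierInv_le hχ hM hWf1 hWf2)
    (eLpNorm_commutator_freqWeight_le hb hA hf.1)

theorem eLpNorm_freqWeight_smul_fourier_mul_fourierInv_gaussianCutoff_le {b : ℝ}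
    (hb : |b| < 1 / 2) {χ w : ℝ → ℂ} (hχ : Integrable χ) {M A : ℝ} (hM : ∀ t, ‖χ t‖ ≤ M)
    (hA : ∀ z, |z| * ‖𝓕 χ z‖ ≤ A) (hw : Integrable w)
    (hw2 : MemLp (fun y ↦ freqWeight b y • 𝓕 w y) 2) {c : ℝ} (hc : 0 < c) :
    eLpNorm (fun x ↦ freqWeight b x • 𝓕 (χ * 𝓕⁻ (gaussianCutoff ℝ c * 𝓕 w)) x) 2 ≤
      ENNReal.ofReal (M + 4 * A / (1 / 2 - |b|)) * eLpNorm (fun y ↦ freqWeight b y • 𝓕 w y) 2 := by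
  have hγ_smul : (fun y ↦ freqWeight b y • (gaussianCutoff ℝ c * 𝓕 w) y) =
      gaussianCutoff ℝ c * fun y ↦ freqWeight b y • 𝓕 w y := by
    ext y
    simp only [Pi.mul_apply, mul_smul_comm]
  have hγ_le (y : ℝ) : ‖freqWeight b y • (gaussianCutoff ℝ c * 𝓕 w) y‖ ≤
      ‖freqWeight b y • 𝓕 w y‖ := by
    rw [Pi.mul_apply, ← mul_smul_comm, norm_mul]
    exact mul_le_of_le_one_left (norm_nonneg _) (norm_gaussianCutoff_le_one hc.le y)
  have hint : Integrable fun y ↦ freqWeight b y • (gaussianCutoff ℝ c * 𝓕 w) y := by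
    rw [hγ_smul]
    exact (memLp_gaussianCutoff_two hc).integrable_mul hw2
  have hmemLp := hw2.mono hint.1 (.of_forall hγ_le)
  exact (eLpNorm_freqWeight_smul_fourier_mul_fourierInv_le hb hχ hM hA
    (integrable_mul_fourier (integrable_gaussianCutoff ℝ hc) hw) hint hmemLp).trans
      (mul_le_mul_right (eLpNorm_mono hγ_le) _)

theorem eLpNorm_freqWeight_smul_fourier_mul_le {b : ℝ} (hb : |b| < 1 / 2) {χ w : ℝ → ℂ}
    (hχ : Integrable χ) {M A : ℝ} (hM : ∀ t, ‖χ t‖ ≤ M) (hA : ∀ z, |z| * ‖𝓕 χ z‖ ≤ A)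
    (hχc : ∀ᵐ t, ContinuousAt χ t) (hw : Integrable w)
    (hw2 : MemLp (fun y ↦ freqWeight b y • 𝓕 w y) 2) :
    eLpNorm (fun x ↦ freqWeight b x • 𝓕 (χ * w) x) 2 ≤
      ENNReal.ofReal (M + 4 * A / (1 / 2 - |b|)) * eLpNorm (fun y ↦ freqWeight b y • 𝓕 w y) 2 := by
  have hc (n : ℕ) : (0 : ℝ) < n + 1 := n.cast_add_one_pos
  refine Lp.eLpNorm_le_of_ae_tendsto (u := .atTop)
    (f := fun n : ℕ ↦ fun x ↦
      freqWeight b x • 𝓕 (χ * 𝓕⁻ (gaussianCutoff ℝ (n + 1) * 𝓕 w)) x)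
    (.of_forall fun n ↦ eLpNorm_freqWeight_smul_fourier_mul_fourierInv_gaussianCutoff_le hb hχ hM
      hA hw hw2 (hc n)) (fun n ↦ ?_) (.of_forall fun x ↦ ?_)
  · have hcut := integrable_mul_fourier (integrable_gaussianCutoff ℝ (hc n)) hw
    exact ((continuous_freqWeight b).smul
      (continuous_fourier (integrable_mul_fourierInv hχ hcut))).aestronglyMeasurable
  · have hlim := tendsto_fourier_mul_fourierInv_gaussianCutoff_mul_fourier hχ hM hχc hw x
    exact (hlim.comp (Filter.tendsto_atTop_add_const_right _ 1
      tendsto_natCast_atTop_atTop)).const_smul _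

end Multiplier

section Interval

open Set

theorem ordConnected_ae_eq_Ioc {I : Set ℝ} (hI : I.OrdConnected) (hbelow : BddBelow I)
    (habove : BddAbove I) : I =ᵐ[volume] Ioc (sInf I) (sSup I) := by
  rcases I.eq_empty_or_nonempty with rfl | hne
  · simp
  have hconn : IsConnected I := ⟨hne, hI.isPreconnected⟩
  exact ((subset_Icc_csInf_csSup hbelow habove).eventuallyLE.trans Ioc_ae_eq_Icc.symm.le).antisymm
    (Ioo_ae_eq_Ioc.symm.le.trans (hconn.Ioo_csInf_csSup_subset hbelow habove).eventuallyLE)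

theorem abs_mul_norm_fourier_indicator_Ioc_le {a b : ℝ} (hab : a ≤ b) (z : ℝ) :
    |z| * ‖𝓕 ((Ioc a b).indicator (1 : ℝ → ℂ)) z‖ ≤ 1 / π := by
  rcases eq_or_ne z 0 with rfl | hz
  · simp only [abs_zero, zero_mul]
    positivity
  set c : ℂ := (-2 * π * z : ℝ) * Complex.I with hc
  have hc0 : c ≠ 0 := by simp [hc, hz, Real.pi_ne_zero]
  have hexp (t : ℝ) : ‖Complex.exp (c * t)‖ = 1 := by
    rw [hc, mul_right_comm, ← Complex.ofReal_mul, Complex.norm_exp_ofReal_mul_I]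
  have hformula : 𝓕 ((Ioc a b).indicator (1 : ℝ → ℂ)) z =
      (Complex.exp (c * b) - Complex.exp (c * a)) / c := by
    rw [Real.fourier_real_eq_integral_exp_smul, ← integral_exp_mul_complex hc0,
      intervalIntegral.integral_of_le hab, ← integral_indicator measurableSet_Ioc]
    congr with t
    have hphase : ((-2 * π * t * z : ℝ) : ℂ) * Complex.I = c * t := by
      rw [hc]
      push_cast
      ring
    simp only [hphase, indicator, Pi.one_apply, smul_eq_mul, mul_ite, mul_one, mul_zero]
  calc |z| * ‖𝓕 ((Ioc a b).indicator (1 : ℝ → ℂ)) z‖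
      ≤ |z| * (2 / (2 * π * |z|)) := by
        rw [hformula, norm_div]
        gcongr
        · exact (norm_sub_le _ _).trans_eq (by rw [hexp, hexp, one_add_one_eq_two])
        · simp [hc, abs_of_pos Real.pi_pos]
    _ = 1 / π := by field_simp

theorem ae_continuousAt_indicator_one {I : Set ℝ} (hI : I.OrdConnected) :
    ∀ᵐ t, ContinuousAt (I.indicator (1 : ℝ → ℂ)) t := by
  filter_upwards [measure_eq_zero_iff_ae_notMem.1 (hI.convex.addHaar_frontier volume)] with t ht
  exact continuousOn_const.continuousAt_indicator ht

theorem norm_indicator_one_le (I : Set ℝ) (t : ℝ) : ‖I.indicator (1 : ℝ → ℂ) t‖ ≤ 1 :=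
  (norm_indicator_le_norm_self _ t).trans_eq norm_one

theorem eLpNorm_freqWeight_smul_fourier_indicator_le_of_bounded {b : ℝ} (hb : |b| < 1 / 2)
    {I : Set ℝ} (hI : I.OrdConnected) (hIb : Bornology.IsBounded I) {w : ℝ → ℂ}
    (hw : Integrable w) :
    eLpNorm (fun x ↦ freqWeight b x • 𝓕 (I.indicator w) x) 2 ≤
      ENNReal.ofReal (1 + 4 / (π * (1 / 2 - |b|))) *
        eLpNorm (fun x ↦ freqWeight b x • 𝓕 w x) 2 := by
  have hb' : 0 < 1 / 2 - |b| := sub_pos.2 hb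
  by_cases htop : eLpNorm (fun x ↦ freqWeight b x • 𝓕 w x) 2 = ∞
  · rw [htop, ENNReal.mul_top (ENNReal.ofReal_pos.2 (by positivity)).ne']
    exact le_top
  have hw2 : MemLp (fun x ↦ freqWeight b x • 𝓕 w x) 2 :=
    ⟨((continuous_freqWeight b).smul (continuous_fourier hw)).aestronglyMeasurable,
      Ne.lt_top htop⟩
  have hχ : Integrable (I.indicator (1 : ℝ → ℂ)) :=
    (integrable_indicator_iff hI.measurableSet).2
      (integrableOn_const hIb.measure_lt_top.ne)
  have hdecay (z : ℝ) : |z| * ‖𝓕 (I.indicator (1 : ℝ → ℂ)) z‖ ≤ 1 / π := by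
    have hIoc := indicator_ae_eq_of_ae_eq_set (f := (1 : ℝ → ℂ))
      (ordConnected_ae_eq_Ioc hI hIb.bddBelow hIb.bddAbove)
    rw [Real.fourier_congr_ae hIoc]
    exact abs_mul_norm_fourier_indicator_Ioc_le
      (Real.sInf_le_sSup I hIb.bddBelow hIb.bddAbove) z
  have hmul : I.indicator w = I.indicator (1 : ℝ → ℂ) * w := by
    ext t
    simp [indicator]
  have := eLpNorm_freqWeight_smul_fourier_mul_le hb hχ (norm_indicator_one_le I) hdecay
    (ae_continuousAt_indicator_one hI) hw hw2
  rwa [← hmul, mul_one_div, div_div] at this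

theorem eLpNorm_freqWeight_smul_fourier_indicator_le {b : ℝ} (hb : |b| < 1 / 2) {I : Set ℝ}
    (hI : I.OrdConnected) {w : ℝ → ℂ} (hw : Integrable w) :
    eLpNorm (fun x ↦ freqWeight b x • 𝓕 (I.indicator w) x) 2 ≤
      ENNReal.ofReal (1 + 4 / (π * (1 / 2 - |b|))) *
        eLpNorm (fun x ↦ freqWeight b x • 𝓕 w x) 2 := by
  set J : ℕ → Set ℝ := fun n ↦ Icc (-n) n ∩ I
  have hJ (n : ℕ) : (J n).OrdConnected := ordConnected_Icc.inter hI
  have hJw (n : ℕ) : Integrable ((J n).indicator w) := hw.indicator (hJ n).measurableSet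
  have hlim (t : ℝ) : Filter.Tendsto (fun n ↦ (J n).indicator w t) .atTop
      (𝓝 (I.indicator w t)) := by
    refine tendsto_const_nhds.congr' ?_
    filter_upwards [Filter.eventually_ge_atTop ⌈|t|⌉₊] with n hn
    have ht : t ∈ Icc (-n : ℝ) n := abs_le.1 (Nat.ceil_le.1 hn)
    rw [← indicator_indicator, indicator_of_mem ht]
  refine Lp.eLpNorm_le_of_ae_tendsto (u := .atTop)
    (f := fun n : ℕ ↦ fun x ↦ freqWeight b x • 𝓕 ((J n).indicator w) x)
    (.of_forall fun n ↦ eLpNorm_freqWeight_smul_fourier_indicator_le_of_bounded hb (hJ n)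
      ((Metric.isBounded_Icc _ _).subset inter_subset_left) hw) (fun n ↦ ?_) (.of_forall fun x ↦ ?_)
  · exact ((continuous_freqWeight b).smul (continuous_fourier (hJw n))).aestronglyMeasurable
  · exact (tendsto_fourier_of_dominated (fun n ↦ (hJw n).1) hw.norm
      (fun n ↦ .of_forall (norm_indicator_le_norm_self w)) (.of_forall hlim) x).const_smul _

end Interval

section Bourgain

theorem norm_exp_neg_I_mul_ofReal (x : ℝ) : ‖Complex.exp (-Complex.I * x)‖ = 1 := by
  rw [neg_mul, ← mul_neg, ← Complex.ofReal_neg, Complex.norm_exp_I_mul_ofReal]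

variable {E : Type*} [NormedAddCommGroup E] [InnerProductSpace ℝ E] [FiniteDimensional ℝ E]
  [MeasurableSpace E] [BorelSpace E]

/-- The space-time Fourier transform `û(ξ, τ) = ∫ e^{-i(⟪x,ξ⟫ + tτ)} u(x, t) dx dt`, in the angular
normalisation used for dispersive equations rather than Mathlib's `e^{-2πi⟪x,ξ⟫}`. -/
noncomputable def spaceTimeFourier (u : E × ℝ → ℂ) (p : E × ℝ) : ℂ :=
  ∫ q, Complex.exp (-Complex.I * (inner ℝ q.1 p.1 + q.2 * p.2 : ℝ)) * u q

/-- The function of time obtained from `u` by Fourier transform in space at frequency `ξ`, with the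
oscillation `e^{ita}` divided out. For `a = φ ξ` this turns the weight `(1 + |τ - φ ξ|)^b` into
`(1 + |τ|)^b`. -/
noncomputable def timeProfile (u : E × ℝ → ℂ) (ξ : E) (a t : ℝ) : ℂ :=
  ∫ x, Complex.exp (-Complex.I * (inner ℝ x ξ + t * a : ℝ)) * u (x, t)

/-- The Bourgain norm attached to the dispersion relation `τ = φ ξ`, with an arbitrary weight `ρ` in
the space frequency. For `φ ξ = ξ³` and `ρ ξ = cosh²(σ|ξ|) (1 + |ξ|)^{2s}` this is the norm of
`X^{σ,s,b}`. -/
noncomputable def bourgainNorm (ρ : E → ℝ≥0∞) (φ : E → ℝ) (b : ℝ) (u : E × ℝ → ℂ) : ℝ≥0∞ :=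
  (∫⁻ p, ρ p.1 * ENNReal.ofReal ((1 + |p.2 - φ p.1|) ^ (2 * b)) * ‖spaceTimeFourier u p‖ₑ ^ 2) ^
    (1 / 2 : ℝ)

theorem integrable_exp_mul {u : E × ℝ → ℂ} (hu : Integrable u) (p : E × ℝ) :
    Integrable fun q : E × ℝ ↦
      Complex.exp (-Complex.I * (inner ℝ q.1 p.1 + q.2 * p.2 : ℝ)) * u q := by
  refine hu.bdd_mul (c := 1) ?_ (.of_forall fun q ↦ (norm_exp_neg_I_mul_ofReal _).le)
  exact Continuous.aestronglyMeasurable (by fun_prop)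

theorem continuous_spaceTimeFourier {u : E × ℝ → ℂ} (hu : Integrable u) :
    Continuous (spaceTimeFourier u) := by
  refine continuous_of_dominated (fun p ↦ (integrable_exp_mul hu p).1) (fun p ↦ ?_) hu.norm ?_
  · refine .of_forall fun q ↦ ?_
    rw [norm_mul, norm_exp_neg_I_mul_ofReal, one_mul]
  · exact .of_forall fun q ↦ by fun_prop

theorem integrable_timeProfile {u : E × ℝ → ℂ} (hu : Integrable u) (ξ : E) (a : ℝ) :
    Integrable (timeProfile u ξ a) :=
  (integrable_exp_mul hu (ξ, a)).integral_prod_right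

theorem timeProfile_indicator (u : E × ℝ → ℂ) (I : Set ℝ) (ξ : E) (a : ℝ) :
    timeProfile ({r | r.2 ∈ I}.indicator u) ξ a = I.indicator (timeProfile u ξ a) := by
  ext t
  by_cases ht : t ∈ I <;> simp [timeProfile, Set.indicator, ht]

theorem spaceTimeFourier_eq_fourier_timeProfile {u : E × ℝ → ℂ} (hu : Integrable u) (ξ : E)
    (a η : ℝ) : spaceTimeFourier u (ξ, 2 * π * η + a) = 𝓕 (timeProfile u ξ a) η := by
  have hphase (x : E) (t : ℝ) :
      Complex.exp (-Complex.I * (inner ℝ x ξ + t * (2 * π * η + a) : ℝ)) =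
        Complex.exp ((-2 * π * t * η : ℝ) * Complex.I) *
          Complex.exp (-Complex.I * (inner ℝ x ξ + t * a : ℝ)) := by
    rw [← Complex.exp_add]
    push_cast
    ring_nf
  rw [spaceTimeFourier, Real.fourier_real_eq_integral_exp_smul]
  refine (integral_prod_symm _ (integrable_exp_mul hu (ξ, 2 * π * η + a))).trans ?_
  simp_rw [hphase, timeProfile, smul_eq_mul, ← integral_const_mul, mul_assoc]

theorem lintegral_spaceTimeFourier_slice {u : E × ℝ → ℂ} (hu : Integrable u) (b : ℝ) (ξ : E)
    (a : ℝ) :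
    ∫⁻ τ, ENNReal.ofReal ((1 + |τ - a|) ^ (2 * b)) * ‖spaceTimeFourier u (ξ, τ)‖ₑ ^ 2 =
      ENNReal.ofReal (2 * π) *
        eLpNorm (fun η ↦ freqWeight b η • 𝓕 (timeProfile u ξ a) η) 2 ^ 2 := by
  have hscale := lintegral_comp_mul_add
    (fun τ ↦ ENNReal.ofReal ((1 + |τ - a|) ^ (2 * b)) * ‖spaceTimeFourier u (ξ, τ)‖ₑ ^ 2)
    Real.two_pi_pos.ne' a
  have hweight (η : ℝ) : ENNReal.ofReal ((1 + |2 * π * η + a - a|) ^ (2 * b)) =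
      ‖freqWeight b η‖ₑ ^ 2 := by
    rw [← ofReal_norm, Real.norm_of_nonneg (freqWeight_pos b η).le,
      ← ENNReal.ofReal_pow (freqWeight_pos b η).le, freqWeight, ← Real.rpow_mul_natCast
      (by positivity), add_sub_cancel_right, abs_mul, abs_of_pos Real.two_pi_pos, mul_comm 2 b,
      Nat.cast_ofNat]
  simp_rw [sq_eLpNorm_two, enorm_smul, mul_pow, ← hweight,
    ← spaceTimeFourier_eq_fourier_timeProfile hu, hscale]
  rw [← mul_assoc, abs_of_pos (by positivity), ← ENNReal.ofReal_mul (by positivity),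
    mul_inv_cancel₀ Real.two_pi_pos.ne', ENNReal.ofReal_one, one_mul]

theorem bourgainNorm_eq_lintegral_slice {ρ : E → ℝ≥0∞} (hρ : Measurable ρ) {φ : E → ℝ}
    (hφ : Measurable φ) (b : ℝ) {u : E × ℝ → ℂ} (hu : Integrable u) :
    bourgainNorm ρ φ b u = (∫⁻ ξ, ρ ξ * (ENNReal.ofReal (2 * π) *
      eLpNorm (fun η ↦ freqWeight b η • 𝓕 (timeProfile u ξ (φ ξ)) η) 2 ^ 2)) ^ (1 / 2 : ℝ) := by
  have hF := (continuous_spaceTimeFourier hu).measurable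
  rw [bourgainNorm, Measure.volume_eq_prod, lintegral_prod _ (by fun_prop)]
  simp_rw [← lintegral_spaceTimeFourier_slice hu]
  congr with ξ
  rw [← lintegral_const_mul _ (by fun_prop)]
  simp_rw [mul_assoc]

theorem bourgainNorm_cubic_cosh_eq (σ s b : ℝ) (v : ℝ × ℝ → ℂ) :
    bourgainNorm (fun ξ ↦ ENNReal.ofReal (Real.cosh (σ * |ξ|) ^ 2 * (1 + |ξ|) ^ (2 * s)))
      (· ^ 3) b v =
      (∫⁻ p : ℝ × ℝ, ENNReal.ofReal (Real.cosh (σ * |p.1|) ^ 2 * (1 + |p.1|) ^ (2 * s) *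
          (1 + |p.2 - p.1 ^ 3|) ^ (2 * b)) *
        (‖∫ q : ℝ × ℝ, Complex.exp (-Complex.I * (q.1 * p.1 + q.2 * p.2)) * v q‖₊ : ℝ≥0∞) ^ 2) ^
        (1 / 2 : ℝ) := by
  have hfourier (p : ℝ × ℝ) : spaceTimeFourier v p =
      ∫ q : ℝ × ℝ, Complex.exp (-Complex.I * (q.1 * p.1 + q.2 * p.2)) * v q := by
    simp only [spaceTimeFourier, RCLike.inner_apply, conj_trivial, Complex.ofReal_add,
      Complex.ofReal_mul, mul_comm (p.1 : ℂ)]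
  simp_rw [bourgainNorm, hfourier]
  congr with p
  rw [← ENNReal.ofReal_mul (by positivity), enorm_eq_nnnorm]

theorem chi_interval_bounded_general {b : ℝ} (hb : |b| < 1 / 2) {ρ : E → ℝ≥0∞}
    (hρ : Measurable ρ) {φ : E → ℝ} (hφ : Measurable φ) {I : Set ℝ} (hI : I.OrdConnected)
    {u : E × ℝ → ℂ} (hu : Integrable u) :
    bourgainNorm ρ φ b ({r | r.2 ∈ I}.indicator u) ≤
      ENNReal.ofReal (1 + 4 / (π * (1 / 2 - |b|))) * bourgainNorm ρ φ b u := by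
  set C := ENNReal.ofReal (1 + 4 / (π * (1 / 2 - |b|)))
  have hu' : Integrable ({r : E × ℝ | r.2 ∈ I}.indicator u) :=
    hu.indicator (measurable_snd hI.measurableSet)
  have hslice (ξ : E) := eLpNorm_freqWeight_smul_fourier_indicator_le hb hI
    (integrable_timeProfile hu ξ (φ ξ))
  have hroot : C = (C ^ 2) ^ (1 / 2 : ℝ) := by
    rw [← ENNReal.rpow_natCast_mul]
    norm_num
  rw [bourgainNorm_eq_lintegral_slice hρ hφ b hu', bourgainNorm_eq_lintegral_slice hρ hφ b hu,
    hroot, ← ENNReal.mul_rpow_of_nonneg _ _ (by simp),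
    ← lintegral_const_mul' _ _ (by finiteness)]
  refine ENNReal.rpow_le_rpow (lintegral_mono fun ξ ↦ ?_) (by simp)
  rw [timeProfile_indicator, mul_left_comm (C ^ 2), mul_left_comm (C ^ 2), ← mul_pow]
  gcongr
  exact hslice ξ

end Bourgain

/-- Lemma 2.1 of the paper: for `σ ≥ 0`, `s ∈ ℝ`, `−1/2 < b < 1/2`, multiplication by
the characteristic function of a time interval is bounded on `X^{σ,s,b}` (Bourgain norm
with hyperbolic-cosine weight), with constant depending only on `b`. -/
theorem chi_interval_bounded (b : ℝ) (hb : b ∈ Set.Ioo (-(1 / 2) : ℝ) (1 / 2)) :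
    ∃ C > 0, ∀ (σ s : ℝ), 0 ≤ σ → ∀ I : Set ℝ, I.OrdConnected →
      ∀ u : SchwartzMap (ℝ × ℝ) ℂ,
      (∫⁻ p : ℝ × ℝ,
          ENNReal.ofReal ((Real.cosh (σ * |p.1|)) ^ 2 * (1 + |p.1|) ^ (2 * s) *
            (1 + |p.2 - p.1 ^ 3|) ^ (2 * b)) *
          (‖∫ q : ℝ × ℝ, Complex.exp (-Complex.I * (q.1 * p.1 + q.2 * p.2)) *
              Set.indicator {r : ℝ × ℝ | r.2 ∈ I} (fun r => u r) q‖₊ : ℝ≥0∞) ^ 2) ^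
        ((1 : ℝ) / 2) ≤
      ENNReal.ofReal C *
      (∫⁻ p : ℝ × ℝ,
          ENNReal.ofReal ((Real.cosh (σ * |p.1|)) ^ 2 * (1 + |p.1|) ^ (2 * s) *
            (1 + |p.2 - p.1 ^ 3|) ^ (2 * b)) *
          (‖∫ q : ℝ × ℝ, Complex.exp (-Complex.I * (q.1 * p.1 + q.2 * p.2)) * u q‖₊ :
            ℝ≥0∞) ^ 2) ^ ((1 : ℝ) / 2) := by
  have hb' : |b| < 1 / 2 := abs_lt.2 hb
  have hb'' : 0 < 1 / 2 - |b| := sub_pos.2 hb'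
  refine ⟨1 + 4 / (π * (1 / 2 - |b|)), by positivity, fun σ s _ I hI u ↦ ?_⟩
  rw [← bourgainNorm_cubic_cosh_eq, ← bourgainNorm_cubic_cosh_eq]
  exact chi_interval_bounded_general hb' (by fun_prop) (by fun_prop) hI u.integrable
end
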